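/- arXiv:1908.05882 — 3 statements merged into one kernel-verified Lean document; each statement's English description precedes it below -/
import Mathlib

section
/- Carleman inequality with linear weight (Lemma 2.1). Let n ≥ 2 and let Ω = {x = (x',x_n) ∈ ℝⁿ : a < x_n < b} for some real numbers a < b. Let A : Ω → ℂⁿ be bounded and Lipschitz and q : Ω → ℂ be bounded measurable. Then there exist a constant C > 0 and h₀ ∈ (0,1) such that for all h ∈ (0,h₀) and all w ∈ C_c^∞(Ω): h·‖w‖_{L²(Ω)} ≤ C·‖e^{x_n/h} h⁴ L_{A,q}(e^{−x_n/h} w)‖_{L²(Ω)}. -/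
open MeasureTheory Real Set

noncomputable section

def pd {n : ℕ} (j : Fin n) (u : EuclideanSpace ℝ (Fin n) → ℂ) :
    EuclideanSpace ℝ (Fin n) → ℂ :=
  fun x => fderiv ℝ u x (EuclideanSpace.single j 1)

def pdR {n : ℕ} (j : Fin n) (φ : EuclideanSpace ℝ (Fin n) → ℝ) :
    EuclideanSpace ℝ (Fin n) → ℝ :=
  fun x => fderiv ℝ φ x (EuclideanSpace.single j 1)

def opL {n : ℕ} (A : EuclideanSpace ℝ (Fin n) → Fin n → ℂ)
    (q : EuclideanSpace ℝ (Fin n) → ℂ) (u : EuclideanSpace ℝ (Fin n) → ℂ) :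
    EuclideanSpace ℝ (Fin n) → ℂ :=
  fun x => (∑ j : Fin n, (pd j)^[4] u x)
    - Complex.I * (∑ j : Fin n, A x j * pd j u x) + q x * u x

def IsCcInfty {n : ℕ} (Ω : Set (EuclideanSpace ℝ (Fin n)))
    (w : EuclideanSpace ℝ (Fin n) → ℂ) : Prop :=
  ContDiff ℝ (⊤ : ℕ∞) w ∧ HasCompactSupport w ∧ tsupport w ⊆ Ω

def l2sq {n : ℕ} (Ω : Set (EuclideanSpace ℝ (Fin n)))
    (f : EuclideanSpace ℝ (Fin n) → ℂ) : ℝ :=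
  ∫ x in Ω, ‖f x‖ ^ 2

def l2norm {n : ℕ} (Ω : Set (EuclideanSpace ℝ (Fin n)))
    (f : EuclideanSpace ℝ (Fin n) → ℂ) : ℝ :=
  Real.sqrt (l2sq Ω f)

def gradsq {n : ℕ} (Ω : Set (EuclideanSpace ℝ (Fin n)))
    (w : EuclideanSpace ℝ (Fin n) → ℂ) : ℝ :=
  ∫ x in Ω, ∑ j : Fin n, ‖pd j w x‖ ^ 2

def BddLipOn {n : ℕ} (Ω : Set (EuclideanSpace ℝ (Fin n)))
    (A : EuclideanSpace ℝ (Fin n) → Fin n → ℂ) : Prop :=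
  (∃ M, ∀ x ∈ Ω, ‖A x‖ ≤ M) ∧ ∃ K, LipschitzOnWith K A Ω

def BddMeasOn {n : ℕ} (Ω : Set (EuclideanSpace ℝ (Fin n)))
    (q : EuclideanSpace ℝ (Fin n) → ℂ) : Prop :=
  Measurable q ∧ ∃ M, ∀ x ∈ Ω, ‖q x‖ ≤ M

def derivsL2 {n : ℕ} (Ω : Set (EuclideanSpace ℝ (Fin n)))
    (u : EuclideanSpace ℝ (Fin n) → ℂ) : Prop :=
  ∀ js : List (Fin n), js.length ≤ 4 →
    IntegrableOn (fun x => ‖(js.foldr pd u) x‖ ^ 2) Ω volume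

def symA {n : ℕ} (φ : EuclideanSpace ℝ (Fin n) → ℝ)
    (x ξ : EuclideanSpace ℝ (Fin n)) : ℝ :=
  ∑ j : Fin n, ((ξ j) ^ 4 - 6 * (pdR j φ x) ^ 2 * (ξ j) ^ 2 + (pdR j φ x) ^ 4)

def symB {n : ℕ} (φ : EuclideanSpace ℝ (Fin n) → ℝ)
    (x ξ : EuclideanSpace ℝ (Fin n)) : ℝ :=
  ∑ j : Fin n, (4 * pdR j φ x * (ξ j) ^ 3 - 4 * (pdR j φ x) ^ 3 * ξ j)

def poisson {n : ℕ} (φ : EuclideanSpace ℝ (Fin n) → ℝ)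
    (x ξ : EuclideanSpace ℝ (Fin n)) : ℝ :=
  ∑ k : Fin n,
    (fderiv ℝ (fun ξ' => symA φ x ξ') ξ (EuclideanSpace.single k 1) *
       fderiv ℝ (fun y => symB φ y ξ) x (EuclideanSpace.single k 1) -
     fderiv ℝ (fun y => symA φ y ξ) x (EuclideanSpace.single k 1) *
       fderiv ℝ (fun ξ' => symB φ x ξ') ξ (EuclideanSpace.single k 1))


open SchwartzMap FourierTransform LineDeriv

abbrev EE (n : ℕ) := EuclideanSpace ℝ (Fin n)

def Tj {n : ℕ} (j : Fin n) (c : ℂ) (W : 𝓢(EE n, ℂ)) : 𝓢(EE n, ℂ) :=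
  ∂_{(EuclideanSpace.single j (1:ℝ) : EE n)} W - c • W

lemma Tj_apply {n : ℕ} (j : Fin n) (c : ℂ) (W : 𝓢(EE n, ℂ)) (x : EE n) :
    Tj j c W x = pd j W x - c * W x := by
  simp [Tj, pd, SchwartzMap.lineDerivOp_apply_eq_fderiv]

lemma fourier_Tj {n : ℕ} (j : Fin n) (c : ℂ) (W : 𝓢(EE n, ℂ)) (ξ : EE n) :
    𝓕 (Tj j c W) ξ = (2 * π * Complex.I * ξ j - c) * 𝓕 W ξ := by
  have h1 : 𝓕 (Tj j c W) = 𝓕 (∂_{(EuclideanSpace.single j (1:ℝ) : EE n)} W) - c • 𝓕 W := by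
    unfold Tj
    have := (FourierTransform.fourierCLM ℂ 𝓢(EE n, ℂ)).map_sub (∂_{(EuclideanSpace.single j (1:ℝ) : EE n)} W) (c • W)
    simpa using this
  rw [h1, SchwartzMap.fourier_lineDerivOp_eq]
  have ht : (fun x : EE n => (inner ℝ x (EuclideanSpace.single j (1:ℝ)))).HasTemperateGrowth := by
    fun_prop
  simp only [_root_.sub_apply, _root_.smul_apply]
  rw [SchwartzMap.smulLeftCLM_apply_apply ht]
  simp [EuclideanSpace.inner_single_right]
  ring

def P0 {n : ℕ} (N : Fin n) (h : ℝ) (W : 𝓢(EE n, ℂ)) : 𝓢(EE n, ℂ) :=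
  ∑ j, ((h:ℂ)^4) • (Tj j (if j = N then (1/h : ℂ) else 0))^[4] W

lemma fourier_smul' {n : ℕ} (c : ℂ) (W : 𝓢(EE n, ℂ)) (ξ : EE n) : 𝓕 (c • W) ξ = c * 𝓕 W ξ := by
  rw [FourierTransform.fourier_smul]; simp

lemma fourier_P0 {n : ℕ} (N : Fin n) (h : ℝ) (hh : 0 < h) (W : 𝓢(EE n, ℂ)) (ξ : EE n) :
    𝓕 (P0 N h W) ξ = (∑ j, (((2*π*h*ξ j : ℝ):ℂ) * Complex.I - if j = N then 1 else 0)^4) * 𝓕 W ξ := by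
  unfold P0
  rw [FourierTransform.fourier_sum, _root_.sum_apply, Finset.sum_mul]
  refine Finset.sum_congr rfl fun j _ => ?_
  rw [fourier_smul']
  simp only [Function.iterate_succ, Function.iterate_zero, Function.comp, id, fourier_Tj]
  have hc : (h:ℂ) ≠ 0 := by exact_mod_cast hh.ne'
  split_ifs
  · push_cast; field_simp
  · push_cast; ring

def F0 {n : ℕ} (N : Fin n) (h : ℝ) (W : 𝓢(EE n, ℂ)) : 𝓢(EE n, ℂ) :=
  ((h:ℂ)^2) • (Tj N 0)^[2] W + W

lemma fourier_F0 {n : ℕ} (N : Fin n) (h : ℝ) (W : 𝓢(EE n, ℂ)) (ξ : EE n) :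
    𝓕 (F0 N h W) ξ = (((1 - (2*π*h*ξ N)^2 : ℝ)):ℂ) * 𝓕 W ξ := by
  unfold F0
  rw [FourierTransform.fourier_add, _root_.add_apply, fourier_smul']
  simp only [Function.iterate_succ, Function.iterate_zero, Function.comp, id, fourier_Tj]
  push_cast
  ring_nf
  simp

/-- symbol as explicit real/imag. -/
lemma symbol_normSq {n : ℕ} (N : Fin n) (η : Fin n → ℝ) :
    ∃ S : ℝ, (∀ j, j ≠ N → η j ^ 4 ≤ S) ∧ 0 ≤ S ∧
    ‖∑ j, ((η j:ℂ) * Complex.I - if j = N then 1 else 0)^4‖^2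
      = (S + η N^4 - 6 * η N^2 + 1)^2 + (4 * η N * (η N^2-1))^2 := by
  refine ⟨∑ j ∈ Finset.univ.erase N, η j^4, ?_, Finset.sum_nonneg fun j _ => by positivity, ?_⟩
  · intro j hj
    exact Finset.single_le_sum (f := fun j => η j^4) (fun j _ => by positivity) (by simp [hj])
  · rw [← Finset.sum_erase_add _ _ (Finset.mem_univ N)]
    have : ∑ j ∈ Finset.univ.erase N, ((η j:ℂ) * Complex.I - if j = N then 1 else 0)^4
        = ((∑ j ∈ Finset.univ.erase N, η j^4 : ℝ) : ℂ) := by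
      push_cast
      refine Finset.sum_congr rfl fun j hj => ?_
      rw [if_neg (Finset.ne_of_mem_erase hj), sub_zero, mul_pow, Complex.I_pow_four, mul_one]
    rw [this]
    set S := ∑ j ∈ Finset.univ.erase N, η j^4
    have h2 : (S:ℂ) + ((η N:ℂ) * Complex.I - if N = N then 1 else 0)^4
       = ((S + η N^4 - 6 * η N^2 + 1 : ℝ) : ℂ) + ((4 * η N * (η N^2-1) : ℝ):ℂ) * Complex.I := by
      simp only [if_true]
      push_cast
      have h4 : Complex.I^4 = 1 := Complex.I_pow_four
      have h3 : Complex.I^3 = -Complex.I := Complex.I_pow_three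
      have h2 : Complex.I^2 = -1 := Complex.I_sq
      linear_combination (η N:ℂ)^4 * h4 - 4 * (η N:ℂ)^3 * h3 + 6 * (η N:ℂ)^2 * h2
    rw [h2, ← Complex.normSq_eq_norm_sq, Complex.normSq_add_mul_I]

lemma symbol_lower (S t : ℝ) (hS : 0 ≤ S) :
    (1 - t^2)^2 ≤ 4 * ((S + t^4 - 6*t^2+1)^2 + (4*t*(t^2-1))^2) := by
  by_cases h : t^2 ≥ 1/16
  · nlinarith [mul_nonneg (sub_nonneg.2 h) (sq_nonneg (t^2-1)), sq_nonneg (S + t^4 - 6*t^2+1), sq_nonneg (t^2-1)]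
  · push Not at h
    have h1 : 10/16 ≤ S + t^4 - 6*t^2+1 := by nlinarith [sq_nonneg (t^2)]
    have h2 : (1-t^2)^2 ≤ 1 := by nlinarith [sq_nonneg t]
    nlinarith [sq_nonneg (4*t*(t^2-1))]

lemma symbol_grad {n : ℕ} (N : Fin n) (η : Fin n → ℝ) (j : Fin n) :
    η j^2 ≤ 19 + ‖∑ j, ((η j:ℂ) * Complex.I - if j = N then 1 else 0)^4‖^2 := by
  obtain ⟨S, h1, h2, h3⟩ := symbol_normSq N η
  rw [h3]
  set t := η N
  have hb := sq_nonneg (4 * t * (t^2-1))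
  have ha := sq_nonneg ((S + t^4 - 6*t^2+1) - 1)
  have ht := sq_nonneg (t^2-6)
  have h4 : η j^4 ≤ 2 * (S + t^4/2) := by
    by_cases hj : j = N
    · subst hj; change t^4 ≤ _; linarith
    · have := h1 j hj
      nlinarith [sq_nonneg (t^2)]
  nlinarith [sq_nonneg (η j^2 - 1)]

lemma int_sq {n : ℕ} (W : 𝓢(EE n, ℂ)) : Integrable (fun x => ‖W x‖^2) := 
  (W.memLp 2 volume).integrable_norm_pow (by norm_num)

lemma F0_le {n : ℕ} (N : Fin n) (h : ℝ) (hh : 0 < h) (W : 𝓢(EE n, ℂ)) :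
    ∫ x, ‖F0 N h W x‖^2 ≤ 4 * ∫ x, ‖P0 N h W x‖^2 := by
  rw [← SchwartzMap.integral_norm_sq_fourier (F0 N h W), ← SchwartzMap.integral_norm_sq_fourier (P0 N h W), ← integral_const_mul]
  refine integral_mono (int_sq _) ((int_sq _).const_mul _) fun ξ => ?_
  simp only
  rw [fourier_F0, fourier_P0 N h hh, norm_mul, norm_mul, mul_pow _ ‖𝓕 W ξ‖, mul_pow _ ‖𝓕 W ξ‖, ← mul_assoc]
  gcongr
  obtain ⟨S, h1, h2, h3⟩ := symbol_normSq N (fun j => 2*π*h*ξ j)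
  rw [h3, Complex.norm_real, Real.norm_eq_abs, sq_abs]
  exact symbol_lower _ _ h2

lemma grad_le {n : ℕ} (N : Fin n) (h : ℝ) (hh : 0 < h) (W : 𝓢(EE n, ℂ)) (j : Fin n) :
    h^2 * ∫ x, ‖pd j W x‖^2 ≤ 19 * (∫ x, ‖W x‖^2) + ∫ x, ‖P0 N h W x‖^2 := by
  have e : ∀ x, pd j W x = Tj j 0 W x := fun x => by simp [Tj_apply]
  simp_rw [e]
  rw [← SchwartzMap.integral_norm_sq_fourier (Tj j 0 W), ← SchwartzMap.integral_norm_sq_fourier W,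
    ← SchwartzMap.integral_norm_sq_fourier (P0 N h W), ← integral_const_mul, ← integral_const_mul,
    ← integral_add ((int_sq _).const_mul _) (int_sq _)]
  refine integral_mono ((int_sq _).const_mul _) (((int_sq _).const_mul _).add (int_sq _)) fun ξ => ?_
  simp only
  rw [fourier_Tj, fourier_P0 N h hh, norm_mul, norm_mul, mul_pow, mul_pow, ← mul_assoc, ← add_mul]
  gcongr
  refine le_trans (le_of_eq ?_) (symbol_grad N (fun j => 2*π*h*ξ j) j)
  simp [abs_of_pos Real.pi_pos, mul_pow]
  ring

lemma tsupport_Tj {n : ℕ} (j : Fin n) (c : ℂ) (W : 𝓢(EE n, ℂ)) :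
    tsupport (Tj j c W) ⊆ tsupport W := by
  apply closure_minimal _ (isClosed_tsupport _)
  intro x hx
  by_contra hx'
  apply hx
  have h1 : W x = 0 := image_eq_zero_of_notMem_tsupport hx'
  have h2 : (∂_{(EuclideanSpace.single j (1:ℝ) : EE n)} W) x = 0 :=
    image_eq_zero_of_notMem_tsupport fun h => hx' (SchwartzMap.tsupport_lineDerivOp_subset _ _ h)
  simp [Tj, h1, h2]

lemma Tj_zero {n : ℕ} (j : Fin n) (c : ℂ) (W : 𝓢(EE n, ℂ)) (x : EE n) (hx : x ∉ tsupport W) :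
    Tj j c W x = 0 := image_eq_zero_of_notMem_tsupport fun h => hx (tsupport_Tj _ _ _ h)

lemma hasFDerivAt_W {n : ℕ} (W : 𝓢(EE n, ℂ)) (x : EE n) : HasFDerivAt W (fderiv ℝ W x) x :=
  W.differentiableAt.hasFDerivAt

lemma poincare_aux (D L h : ℝ) (hh : 0 < h) (h0 : 0 ≤ D) (hL : D ≤ L) (V T w : ℂ) :
    ‖w‖^2 - L^2/h^2 * ‖(h:ℂ)^2 * T + w‖^2 ≤
      (h^2*‖V‖^2 + ‖w‖^2) + D * (h^2 * (2 * inner ℝ V T) + 2 * inner ℝ w V) := by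
  have e : h^2 * (2 * inner ℝ V T) + 2 * inner ℝ w V = 2 * inner ℝ V ((h:ℂ)^2 * T + w) := by
    rw [inner_add_right, real_inner_comm V w]
    have : (h:ℂ)^2 * T = (h^2 : ℝ) • T := by simp
    rw [this, inner_smul_right]; ring
  rw [e]
  set f := (h:ℂ)^2 * T + w
  have hi := (abs_le.1 (abs_real_inner_le_norm V f)).1
  have h1 : D * (2 * (-(‖V‖*‖f‖))) ≤ D * (2 * inner ℝ V f) := by gcongr
  have h2 : 0 ≤ (h * ‖V‖ - D/h * ‖f‖)^2 := sq_nonneg _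
  have h3 : (h * ‖V‖ - D/h * ‖f‖)^2 = h^2*‖V‖^2 - 2 * D * (‖V‖*‖f‖) + D^2/h^2*‖f‖^2 := by
    field_simp
    ring
  have h4 : D^2/h^2*‖f‖^2 ≤ L^2/h^2*‖f‖^2 := by gcongr
  linarith

lemma poincare {n : ℕ} (N : Fin n) (h : ℝ) (hh : 0 < h) (a b : ℝ) (W : 𝓢(EE n, ℂ))
    (hc : HasCompactSupport W) (hs : ∀ x ∈ tsupport W, a < x N ∧ x N < b) :
    ∫ x, ‖W x‖^2 ≤ (b-a)^2/h^2 * ∫ x, ‖F0 N h W x‖^2 := by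
  set e : EE n := EuclideanSpace.single N (1:ℝ) with he
  set V := Tj N 0 W with hV
  set g : EE n → ℝ := fun x => (x N - a) * (h^2 * ‖V x‖^2 + ‖W x‖^2) with hg
  have hgd : ContDiff ℝ 1 g := by
    have h1 : ContDiff ℝ 1 W := W.smooth 1
    have h2 : ContDiff ℝ 1 V := V.smooth 1
    have h3 := h1.norm_sq ℝ
    have h4 := h2.norm_sq ℝ
    have h5 : ContDiff ℝ 1 (fun x : EE n => x N) := by fun_prop
    exact (h5.sub contDiff_const).mul ((contDiff_const.mul h4).add h3)
  have hgc : HasCompactSupport g := by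
    refine HasCompactSupport.intro hc fun x hx => ?_
    simp [hg, hV, Tj_zero N 0 W x hx, image_eq_zero_of_notMem_tsupport hx]
  have hg' : ∀ x, fderiv ℝ g x e = (h^2*‖V x‖^2 + ‖W x‖^2)
      + (x N - a) * (h^2 * (2 * inner ℝ (V x) (Tj N 0 V x)) + 2 * inner ℝ (W x) (V x)) := by
    intro x
    have d1 := ((hasFDerivAt_W V x).norm_sq).const_mul (h^2)
    have d2 := (hasFDerivAt_W W x).norm_sq
    have d3 : HasFDerivAt (fun x : EE n => x N - a) (EuclideanSpace.proj N : EE n →L[ℝ] ℝ) x :=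
      (EuclideanSpace.proj N : EE n →L[ℝ] ℝ).hasFDerivAt.sub_const a
    have d := d3.mul (d1.add d2)
    have e1 : V x = fderiv ℝ W x e := by rw [hV, Tj_apply]; simp [pd, he]
    have e2 : Tj N 0 V x = fderiv ℝ V x e := by rw [Tj_apply]; simp [pd, he]
    have : fderiv ℝ g x = _ := d.fderiv
    rw [this, e2]
    simp [he] 
    rw [e1]
    ring
  have hi1 : Integrable (fun x => fderiv ℝ g x e) :=
    ((hgd.continuous_fderiv one_ne_zero).clm_apply continuous_const).integrable_of_hasCompactSupport
      (hgc.fderiv_apply ℝ e)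
  have hz : ∫ x, fderiv ℝ g x e = 0 := by
    have := integral_mul_fderiv_eq_neg_fderiv_mul_of_integrable (μ := (volume : Measure (EE n)))
      (f := fun _ => (1:ℝ)) (g := g) (v := e)
      (by simp) (by simpa using hi1)
      (by simpa using hgd.continuous.integrable_of_hasCompactSupport hgc)
      (by simp) (fun x _ => hgd.differentiable one_ne_zero x)
    simpa using this
  have hm : ∫ x, (‖W x‖^2 - (b-a)^2/h^2 * ‖F0 N h W x‖^2) ≤ ∫ x, fderiv ℝ g x e := by
    refine integral_mono ((int_sq _).sub ((int_sq _).const_mul _)) hi1 fun x => ?_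
    simp only
    rw [hg']
    have hF : F0 N h W x = (h:ℂ)^2 * Tj N 0 V x + W x := by
      simp [F0, hV]
    by_cases hx : x ∈ tsupport W
    · rw [hF]
      obtain ⟨h1, h2⟩ := hs x hx
      exact poincare_aux (x N - a) (b-a) h hh (by linarith) (by linarith) _ _ _
    · have h1 : W x = 0 := image_eq_zero_of_notMem_tsupport hx
      have h2 : V x = 0 := Tj_zero N 0 W x hx
      have h3 : Tj N 0 V x = 0 := Tj_zero N 0 V x fun h => hx (tsupport_Tj _ _ _ h)
      simp [hF, h1, h2, h3]
  rw [hz, integral_sub (int_sq _) ((int_sq _).const_mul _), integral_const_mul] at hm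
  linarith

lemma conj_pd {n : ℕ} (N : Fin n) (h : ℝ) (j : Fin n) (W : 𝓢(EE n, ℂ)) :
    pd j (fun y : EE n => (Real.exp (-(y N)/h) : ℂ) * W y) =
      fun y : EE n => (Real.exp (-(y N)/h) : ℂ) * Tj j (if j = N then (1/h:ℂ) else 0) W y := by
  funext x
  have d0 : HasFDerivAt (fun x : EE n => -(x N)/h)
      ((-(1/h)) • (EuclideanSpace.proj N : EE n →L[ℝ] ℝ)) x := by
    have := (EuclideanSpace.proj N : EE n →L[ℝ] ℝ).hasFDerivAt (x := x) |>.const_smul (-(1/h))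
    refine this.congr_of_eventuallyEq (Filter.Eventually.of_forall fun y => ?_)
    simp; ring
  have d1 := d0.exp
  have d2 : HasFDerivAt (fun x : EE n => (Real.exp (-(x N)/h) : ℂ)) _ x :=
    Complex.ofRealCLM.hasFDerivAt.comp x d1
  have d := d2.mul (hasFDerivAt_W W x)
  have := d.fderiv
  rw [Tj_apply]
  unfold pd
  erw [this]
  by_cases hj : j = N
  · subst hj; simp; ring
  · have : N ≠ j := fun h => hj h.symm
    simp [hj, this]

lemma conj_opL {n : ℕ} (N : Fin n) (h : ℝ) (A : EE n → Fin n → ℂ) (q : EE n → ℂ)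
    (W : 𝓢(EE n, ℂ)) (x : EE n) :
    (Real.exp (x N / h) : ℂ) * (h : ℂ) ^ 4 *
      opL A q (fun y => (Real.exp (-(y N) / h) : ℂ) * W y) x =
    P0 N h W x + (h:ℂ)^4 * (- Complex.I * (∑ j, A x j * Tj j (if j = N then (1/h:ℂ) else 0) W x)
      + q x * W x) := by
  have he : (Real.exp (x N / h) : ℂ) * (Real.exp (-(x N) / h) : ℂ) = 1 := by
    rw [← Complex.ofReal_mul, ← Real.exp_add]; simp [neg_div]
  unfold opL P0
  simp only [Function.iterate_succ, Function.iterate_zero, Function.comp, id, conj_pd]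
  rw [_root_.sum_apply]
  simp only [_root_.smul_apply, smul_eq_mul]
  have e2 : ∀ (f g : Fin n → ℂ) (E : ℂ), ∑ j, f j * (E * g j) = E * ∑ j, f j * g j := by
    intro f g E; rw [Finset.mul_sum]; exact Finset.sum_congr rfl fun j _ => by ring
  rw [e2, ← Finset.mul_sum, ← Finset.mul_sum]
  generalize (∑ j, A x j * Tj j (if j = N then (1/h:ℂ) else 0) W x) = S1
  generalize (∑ i : Fin n, Tj i (if i = N then (1/h:ℂ) else 0) (Tj i (if i = N then (1/h:ℂ) else 0)
    (Tj i (if i = N then (1/h:ℂ) else 0) (Tj i (if i = N then (1/h:ℂ) else 0) W))) x) = S2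
  linear_combination (h:ℂ)^4 * (S2 - Complex.I * S1 + q x * W x) * he

lemma P0_zero {n : ℕ} (N : Fin n) (h : ℝ) (W : 𝓢(EE n, ℂ)) (x : EE n) (hx : x ∉ tsupport W) :
    P0 N h W x = 0 := by
  unfold P0
  rw [_root_.sum_apply]
  refine Finset.sum_eq_zero fun j _ => ?_
  simp only [_root_.smul_apply, Function.iterate_succ, Function.iterate_zero, Function.comp, id]
  rw [Tj_zero, smul_zero]
  exact fun hh => hx (tsupport_Tj _ _ _ (tsupport_Tj _ _ _ (tsupport_Tj _ _ _ hh)))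

lemma Tj_int {n : ℕ} (N : Fin n) (h : ℝ) (hh : 0 < h) (W : 𝓢(EE n, ℂ)) (j : Fin n) :
    h^2 * ∫ x, ‖Tj j (if j = N then (1/h:ℂ) else 0) W x‖^2 ≤
      40 * (∫ x, ‖W x‖^2) + 2 * ∫ x, ‖P0 N h W x‖^2 := by
  have h1 := grad_le N h hh W j
  have hpd : Integrable (fun x => ‖pd j W x‖^2) := by
    have e : ∀ x, pd j W x = Tj j 0 W x := fun x => by simp [Tj_apply]
    simp_rw [e]; exact int_sq _
  have h2 : ∫ x, ‖Tj j (if j = N then (1/h:ℂ) else 0) W x‖^2 ≤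
      ∫ x, (2 * ‖pd j W x‖^2 + 2 * (1/h^2) * ‖W x‖^2) := by
    refine integral_mono (int_sq _) ((hpd.const_mul _).add ((int_sq _).const_mul _)) fun x => ?_
    simp only
    rw [Tj_apply]
    set c : ℂ := (if j = N then (1/h:ℂ) else 0)
    have hc : ‖c‖ ≤ 1/h := by
      simp only [c]; split_ifs
      · simp [abs_of_pos hh]
      · simp [hh.le]
    have := norm_sub_le (pd j W x) (c * W x)
    rw [norm_mul] at this
    have h4 : ‖c‖ * ‖W x‖ ≤ 1/h * ‖W x‖ := by gcongr
    have h5 : ‖pd j W x - c * W x‖ ≤ ‖pd j W x‖ + 1/h * ‖W x‖ := by linarith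
    calc _ ≤ (‖pd j W x‖ + 1/h * ‖W x‖)^2 := by gcongr
      _ ≤ 2 * ‖pd j W x‖^2 + 2 * (1/h * ‖W x‖)^2 := by
        nlinarith [sq_nonneg (‖pd j W x‖ - 1/h * ‖W x‖)]
      _ = _ := by rw [mul_pow, div_pow, one_pow]; ring
  rw [integral_add (hpd.const_mul _) ((int_sq _).const_mul _), integral_const_mul, integral_const_mul] at h2
  have h3 := mul_le_mul_of_nonneg_left h2 (sq_nonneg h)
  have h4 : h^2 * (2 * (∫ x, ‖pd j W x‖^2) + 2 * (1/h^2) * ∫ x, ‖W x‖^2) =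
     2 * (h^2 * ∫ x, ‖pd j W x‖^2) + 2 * ∫ x, ‖W x‖^2 := by field_simp
  linarith

lemma pt_est {n : ℕ} (h M Q : ℝ) (p v q : ℂ) (A T : Fin n → ℂ)
    (hA : ‖A‖ ≤ M) (hq : ‖q‖ ≤ Q) :
    ‖p‖^2 ≤ 2 * ‖p + (h:ℂ)^4 * (- Complex.I * (∑ j, A j * T j) + q * v)‖^2
      + (4 * h^8 * M^2 * n * (∑ j, ‖T j‖^2) + 4 * h^8 * Q^2 * ‖v‖^2) := by
  set R := - Complex.I * (∑ j, A j * T j) + q * v with hR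
  have hM0 : 0 ≤ M := (norm_nonneg _).trans hA
  have h1 : ‖R‖ ≤ M * (∑ j, ‖T j‖) + Q * ‖v‖ := by
    calc ‖R‖ ≤ ‖- Complex.I * (∑ j, A j * T j)‖ + ‖q * v‖ := norm_add_le _ _
      _ ≤ _ := by
        rw [norm_mul, norm_mul, norm_neg, Complex.norm_I, one_mul]
        gcongr
        refine (norm_sum_le _ _).trans ?_
        rw [Finset.mul_sum]
        refine Finset.sum_le_sum fun j _ => ?_
        rw [norm_mul]
        gcongr
        exact (norm_le_pi_norm A j).trans hA
  have h2 : (∑ j, ‖T j‖)^2 ≤ n * ∑ j, ‖T j‖^2 := by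
    simpa using sq_sum_le_card_mul_sum_sq (s := Finset.univ) (f := fun j => ‖T j‖)
  have h3 : ‖R‖^2 ≤ 2 * (M^2 * (n * ∑ j, ‖T j‖^2)) + 2 * (Q^2 * ‖v‖^2) := by
    calc ‖R‖^2 ≤ (M * (∑ j, ‖T j‖) + Q * ‖v‖)^2 := by gcongr
      _ ≤ 2 * (M^2 * (∑ j, ‖T j‖)^2) + 2 * (Q^2*‖v‖^2) := by
        nlinarith [sq_nonneg (M * (∑ j, ‖T j‖) - Q * ‖v‖)]
      _ ≤ _ := by gcongr
  have h4 : ‖p‖ ≤ ‖p + (h:ℂ)^4 * R‖ + ‖(h:ℂ)^4 * R‖ := by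
    have := norm_sub_le (p + (h:ℂ)^4 * R) ((h:ℂ)^4 * R)
    simpa using this
  have h5 : ‖(h:ℂ)^4 * R‖^2 = h^8 * ‖R‖^2 := by
    rw [norm_mul, norm_pow, Complex.norm_real, Real.norm_eq_abs, mul_pow, ← pow_mul,
      Even.pow_abs (by decide)]
  have h6 : ‖p‖^2 ≤ (‖p + (h:ℂ)^4 * R‖ + ‖(h:ℂ)^4 * R‖)^2 := by gcongr
  have h7 : h^8 * ‖R‖^2 ≤ h^8 * (2 * (M^2 * (n * ∑ j, ‖T j‖^2)) + 2 * (Q^2 * ‖v‖^2)) := by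
    gcongr
  have h8 := sq_nonneg (‖p + (h:ℂ)^4 * R‖ - ‖(h:ℂ)^4 * R‖)
  linarith

lemma main_est {n : ℕ} (N : Fin n) (h : ℝ) (hh : 0 < h) (hh1 : h < 1)
    (A : EE n → Fin n → ℂ) (q : EE n → ℂ) (M Q K1 L a b : ℝ) (hL : L = b - a) (hLpos : 0 < L)
    (hK1 : K1 = 4 * M^2 * n^2 * (160 * L^2 + 2) + 16 * Q^2 * L^2)
    (hhK : h * K1 ≤ 1/2) (Ω : Set (EE n)) (hΩo : IsOpen Ω) (hAc : ContinuousOn A Ω)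
    (hM : ∀ x ∈ Ω, ‖A x‖ ≤ M) (hqm : Measurable q) (hQ : ∀ x ∈ Ω, ‖q x‖ ≤ Q)
    (W : 𝓢(EE n, ℂ)) (hc : HasCompactSupport W) (hsΩ : tsupport W ⊆ Ω)
    (hs : ∀ x ∈ tsupport W, a < x N ∧ x N < b) :
    h * l2norm Ω W ≤ 4 * L * l2norm Ω (fun x =>
      (Real.exp (x N / h) : ℂ) * (h : ℂ) ^ 4 *
      opL A q (fun y => (Real.exp (-(y N) / h) : ℂ) * W y) x) := by
  simp_rw [conj_opL]
  set T : Fin n → 𝓢(EE n, ℂ) := fun j => Tj j (if j = N then (1/h:ℂ) else 0) W with hT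
  set G : EE n → ℂ := fun x => P0 N h W x + (h:ℂ)^4 *
    (- Complex.I * (∑ j, A x j * Tj j (if j = N then (1/h:ℂ) else 0) W x) + q x * W x) with hG
  have hG0 : ∀ x, x ∉ tsupport W → G x = 0 := by
    intro x hx
    simp [hG, P0_zero N h W x hx, Tj_zero _ _ W x hx, image_eq_zero_of_notMem_tsupport hx]
  -- bound: everything as a set integral over Ω
  have hWΩ : ∀ f : EE n → ℂ, (∀ x, x ∉ tsupport W → f x = 0) →
      ∫ x in Ω, ‖f x‖^2 = ∫ x, ‖f x‖^2 := by
    intro f hf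
    apply setIntegral_eq_integral_of_forall_compl_eq_zero
    intro x hx
    simp [hf x fun h => hx (hsΩ h)]
  have hGm : AEStronglyMeasurable G (volume.restrict Ω) := by
    have hA' : ∀ j, AEStronglyMeasurable (fun x => A x j) (volume.restrict Ω) := fun j =>
      ((continuous_apply j).comp_continuousOn hAc).aestronglyMeasurable hΩo.measurableSet
    have hS : ∀ V : 𝓢(EE n, ℂ), AEStronglyMeasurable V (volume.restrict Ω) := fun V =>
      V.continuous.aestronglyMeasurable
    refine (hS _).add (AEStronglyMeasurable.const_mul ((AEStronglyMeasurable.const_mul ?_ _).add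
      (hqm.aestronglyMeasurable.mul (hS _))) _)
    refine Finset.aestronglyMeasurable_fun_sum _ fun j _ => ?_
    exact (hA' j).mul (hS _)
  set B : EE n → ℝ := fun x => 4 * h^8 * M^2 * n * (∑ j, ‖T j x‖^2) + 4 * h^8 * Q^2 * ‖W x‖^2 with hB
  have hTi : Integrable (fun x => ∑ j, ‖T j x‖^2) := integrable_finsetSum _ fun j _ => int_sq _
  have hBi : Integrable B := (hTi.const_mul _).add ((int_sq _).const_mul _)
  have hGi : IntegrableOn (fun x => ‖G x‖^2) Ω := by
    have hdom : Integrable (fun x => 2 * ‖P0 N h W x‖^2 + B x) :=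
      ((int_sq _).const_mul _).add hBi
    refine Integrable.mono' hdom.integrableOn (hGm.norm.pow 2) ?_
    refine (ae_restrict_iff' hΩo.measurableSet).2 (Filter.Eventually.of_forall fun x hx => ?_)
    rw [Real.norm_of_nonneg (by positivity)]
    have := pt_est h M Q (G x) (-W x) (q x) (A x) (fun j => - T j x) (hM x hx) (hQ x hx)
    have e : G x + (h:ℂ)^4 * (- Complex.I * (∑ j, A x j * (- T j x)) + q x * (- W x))
        = P0 N h W x := by
      simp only [hG, hT, mul_neg, Finset.sum_neg_distrib]; ring
    rw [e] at this
    simpa [hB] using this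
  have key : ∫ x, ‖P0 N h W x‖^2 ≤ 2 * (∫ x in Ω, ‖G x‖^2) + ∫ x in Ω, B x := by
    rw [← hWΩ _ (P0_zero N h W), ← integral_const_mul, ← integral_add (hGi.const_mul _) hBi.integrableOn]
    refine setIntegral_mono_on (int_sq _).integrableOn ((hGi.const_mul _).add hBi.integrableOn)
      hΩo.measurableSet fun x hx => ?_
    exact pt_est h M Q (P0 N h W x) (W x) (q x) (A x) (fun j => T j x) (hM x hx) (hQ x hx)
  have hB2 : ∫ x in Ω, B x ≤ ∫ x, B x :=
    setIntegral_le_integral hBi (Filter.Eventually.of_forall fun x => by simp only [hB]; positivity)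
  have hB3 : ∫ x, B x = 4 * h^8 * M^2 * n * (∑ j, ∫ x, ‖T j x‖^2) + 4 * h^8 * Q^2 * ∫ x, ‖W x‖^2 := by
    simp only [hB]
    rw [integral_add (hTi.const_mul _) ((int_sq _).const_mul _), integral_const_mul, integral_const_mul,
      integral_finsetSum _ fun j _ => int_sq _]
  set p := ∫ x, ‖P0 N h W x‖^2 with hp
  set v := ∫ x, ‖W x‖^2 with hv
  set g := ∫ x in Ω, ‖G x‖^2 with hg
  have hp0 : 0 ≤ p := integral_nonneg fun x => by positivity
  have hv0 : 0 ≤ v := integral_nonneg fun x => by positivity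
  have hsum : h^2 * ∑ j, ∫ x, ‖T j x‖^2 ≤ n * (40 * v + 2 * p) := by
    rw [Finset.mul_sum]
    refine (Finset.sum_le_sum fun j _ => Tj_int N h hh W j).trans ?_
    rw [← hv, ← hp]
    simp [mul_add]
  have hvp : h^2 * v ≤ 4 * L^2 * p := by
    have h1 := poincare N h hh a b W hc hs
    have h2 := F0_le N h hh W
    rw [← hL] at h1
    have h3 : v ≤ L^2/h^2 * (4 * p) := h1.trans (by gcongr)
    calc h^2 * v ≤ h^2 * (L^2/h^2*(4*p)) := by gcongr
      _ = _ := by field_simp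
  have hBle : ∫ x, B x ≤ h * K1 * p := by
    rw [hB3, hK1]
    set s := ∑ j, ∫ x, ‖T j x‖^2
    have e1 : 4 * h^8 * M^2 * n * s = 4 * M^2 * n * h^6 * (h^2 * s) := by ring
    have e2 : 4 * M^2 * n * h^6 * (h^2 * s) ≤ 4 * M^2 * n * h^6 * (n * (40 * v + 2 * p)) := by gcongr
    have e3 : h^6 * v ≤ h * (4 * L^2 * p) := by
      calc h^6 * v = h^4 * (h^2 * v) := by ring
        _ ≤ h * (4 * L^2 * p) := by
          gcongr
          exact pow_le_of_le_one hh.le hh1.le (by norm_num)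
    have e4 : h^8 * v ≤ h * (4 * L^2 * p) := by
      calc h^8 * v = h^6 * (h^2 * v) := by ring
        _ ≤ h * (4 * L^2 * p) := by
          gcongr
          exact pow_le_of_le_one hh.le hh1.le (by norm_num)
    have e5 : h^6 * p ≤ h * p := by
      gcongr
      exact pow_le_of_le_one hh.le hh1.le (by norm_num)
    have e6 : 4 * M^2 * n^2 * (40 * (h^6 * v) + 2 * (h^6 * p)) ≤
      4 * M^2 * n^2 * (40 * (h * (4 * L^2 * p)) + 2 * (h * p)) := by gcongr
    have e7 : 4 * Q^2 * (h^8 * v) ≤ 4 * Q^2 * (h * (4 * L^2 * p)) := by gcongr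
    linarith
  have hpg : p ≤ 4 * g := by
    have : h * K1 * p ≤ 1/2 * p := by gcongr
    linarith
  have hfin : h^2 * v ≤ (4 * L)^2 * g := by
    have : 4 * L^2 * p ≤ 4 * L^2 * (4 * g) := by gcongr
    linarith
  unfold l2norm l2sq
  rw [hWΩ _ fun x hx => image_eq_zero_of_notMem_tsupport hx]
  change h * √v ≤ 4 * L * √g
  have := Real.sqrt_le_sqrt hfin
  rwa [Real.sqrt_mul (by positivity), Real.sqrt_mul (by positivity), Real.sqrt_sq hh.le,
    Real.sqrt_sq (by positivity)] at this

/-- Lemma 2.1: Carleman inequality with linear weight. -/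
theorem carleman_linear_weight
    (n : ℕ) (hn : 2 ≤ n) (a b : ℝ) (hab : a < b)
    (Ω : Set (EuclideanSpace ℝ (Fin n)))
    (hΩ : Ω = {x : EuclideanSpace ℝ (Fin n) | a < x ⟨n - 1, by omega⟩ ∧ x ⟨n - 1, by omega⟩ < b})
    (A : EuclideanSpace ℝ (Fin n) → Fin n → ℂ) (q : EuclideanSpace ℝ (Fin n) → ℂ)
    (hA : BddLipOn Ω A) (hq : BddMeasOn Ω q) :
    ∃ C > (0 : ℝ), ∃ h₀ : ℝ, 0 < h₀ ∧ h₀ < 1 ∧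
      ∀ h : ℝ, 0 < h → h < h₀ →
        ∀ w : EuclideanSpace ℝ (Fin n) → ℂ, IsCcInfty Ω w →
          h * l2norm Ω w ≤
            C * l2norm Ω (fun x =>
              (Real.exp (x ⟨n - 1, by omega⟩ / h) : ℂ) * (h : ℂ) ^ 4 *
                opL A q (fun y => (Real.exp (-(y ⟨n - 1, by omega⟩) / h) : ℂ) * w y) x) := by
  have hnN : n - 1 < n := by omega
  set N : Fin n := ⟨n - 1, hnN⟩ with hN
  have hΩo : IsOpen Ω := by
    rw [hΩ]
    have hcN : Continuous (fun x : EE n => x N) := by fun_prop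
    exact (isOpen_lt continuous_const hcN).inter (isOpen_lt hcN continuous_const)
  obtain ⟨⟨M, hM⟩, K, hK⟩ := hA
  obtain ⟨hqm, Q, hQ⟩ := hq
  set L := b - a with hL
  have hLpos : 0 < L := sub_pos.2 hab
  set K1 : ℝ := 4 * M^2 * n^2 * (160 * L^2 + 2) + 16 * Q^2 * L^2 with hK1
  have hK1n : 0 ≤ K1 := by positivity
  refine ⟨4 * L, by positivity, 1/(2*K1+2), by positivity, ?_, ?_⟩
  · rw [div_lt_one (by positivity)]; linarith
  intro h hh hh0 w hw
  rw [lt_div_iff₀ (by positivity)] at hh0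
  have hh1 : h < 1 := by nlinarith [mul_nonneg hh.le hK1n]
  obtain ⟨hw1, hw2, hw3⟩ := hw
  set W : 𝓢(EE n, ℂ) := hw2.toSchwartzMap hw1 with hW
  have hWw : (W : EE n → ℂ) = w := rfl
  rw [← hWw] at hw2 hw3 ⊢
  have hsupp : ∀ x ∈ tsupport W, a < x N ∧ x N < b := by
    intro x hx
    have := hw3 hx
    rw [hΩ] at this
    exact this
  clear_value W
  exact main_est N h hh hh1 A q M Q K1 L a b hL hLpos hK1 (by linarith) Ω hΩo hK.continuousOn hM hqm hQ W hw2 hw3 hsupp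
end
end

section
/- UCP across a hyperplane (Proposition 2.2). Let n ≥ 2 and Ω = {x = (x',x_n) ∈ ℝⁿ : a < x_n < b} for some real numbers a < b. Let A : Ω → ℂⁿ be bounded and Lipschitz and q : Ω → ℂ be bounded measurable. Suppose u : Ω → ℂ is C⁴ on Ω, u together with all its partial derivatives up to order 4 is square-integrable on Ω, and L_{A,q}u = 0 almost everywhere in Ω. If u vanishes identically on the layer {x ∈ Ω : b − ε < x_n < b} for some ε > 0, then u ≡ 0 in Ω. -/
open MeasureTheory Real Set

noncomputable section

section helpers
theorem weyl_S2D2 {R : Type*} [Ring R] [Algebra ℝ R] (D S : R) (c : ℝ)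
    (h : S * D = D * S + algebraMap ℝ R c) :
    S ^ 2 * D ^ 2 = (D * S) * (D * S) + (3 * c) • (D * S) + (2 * c ^ 2) • (1 : R) := by
  rw [Algebra.algebraMap_eq_smul_one] at h
  have e : S ^ 2 * D ^ 2 = S * (S * D) * D := by noncomm_ring
  have e1 : S * (D * S) * D = (S * D) * (S * D) := by noncomm_ring
  rw [e, h, mul_add, add_mul, e1, h]
  simp only [mul_add, add_mul, smul_mul_assoc, mul_smul_comm, mul_one, one_mul, smul_add, smul_smul]
  rw [h]
  module

theorem weyl_S4D4 {R : Type*} [Ring R] [Algebra ℝ R] (D S : R) (c : ℝ)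
    (h : S * D = D * S + algebraMap ℝ R c) :
    S ^ 4 * D ^ 4 - D ^ 4 * S ^ 4 = (16 * c) • ((D * S) * (D * S) * (D * S))
      + (24 * c ^ 2) • ((D * S) * (D * S)) + (56 * c ^ 3) • (D * S) + (24 * c ^ 4) • (1 : R) := by
  rw [Algebra.algebraMap_eq_smul_one] at h
  obtain ⟨N, hN⟩ : ∃ N, N = D * S := ⟨_, rfl⟩
  have hSN : S * N = N * S + c • S := by
    rw [hN, ← mul_assoc, h]; simp [add_mul]
  have hND : N * D = D * N + c • D := by
    rw [hN, mul_assoc, h]; simp [mul_add]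
  rw [← hN] at h ⊢
  have hDS : D * S = N := hN.symm
  have e1 : S ^ 4 * D ^ 4 = S * (S * (S * (S * D) * D) * D) * D := by noncomm_ring
  have e2 : D ^ 4 * S ^ 4 = D * (D * (D * (D * S) * S) * S) * S := by noncomm_ring
  have hSN' : ∀ x, S * (N * x) = N * (S * x) + c • (S * x) := fun x => by
    rw [← mul_assoc, hSN, add_mul, smul_mul_assoc, mul_assoc]
  have hDN : D * N = N * D - c • D := by rw [hND]; abel
  have hDN' : ∀ x, D * (N * x) = N * (D * x) - c • (D * x) := fun x => by
    rw [← mul_assoc, hDN, sub_mul, smul_mul_assoc, mul_assoc]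
  have hSD' : ∀ x, S * (D * x) = N * x + c • x := fun x => by
    rw [← mul_assoc, h, add_mul, smul_mul_assoc, one_mul]
  have hDS' : ∀ x, D * (S * x) = N * x := fun x => by
    rw [← mul_assoc, hDS]
  rw [e1, e2]
  simp only [h, hDS, mul_add, add_mul, mul_sub, sub_mul, smul_mul_assoc, mul_smul_comm, mul_one,
    one_mul, smul_add, smul_sub, smul_smul, mul_assoc, hSN', hDN', hSN, hDN]
  module

theorem abstract_carleman {V ι : Type*} [AddCommGroup V] [Module ℝ V]
    (B : V →ₗ[ℝ] V →ₗ[ℝ] ℝ) (hsymm : ∀ f g, B f g = B g f) (hpos : ∀ f, 0 ≤ B f f)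
    (D S : Module.End ℝ V) (c : ℝ) (hc : 1 ≤ c)
    (hadj : ∀ f g, B (D f) g = B f (S g))
    (hcomm : S * D = D * S + algebraMap ℝ (Module.End ℝ V) c)
    (J : Finset ι) (X : ι → Module.End ℝ V)
    (hX : ∀ j ∈ J, ∀ f g, B (X j f) g = - B f (X j g))
    (hXD : ∀ j ∈ J, X j * D = D * X j) (f : V) :
    let P := D ^ 4 + ∑ j ∈ J, X j ^ 4
    c ^ 3 * B f f ≤ 2 * B (P f) (P f) ∧ c ^ 3 * B (D f) (D f) ≤ 2 * B (P f) (P f) ∧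
      ∀ j ∈ J, c ^ 3 * B (X j f) (X j f) ≤ 2 * B (P f) (P f) := by
  intro P
  set Y : Module.End ℝ V := ∑ j ∈ J, X j ^ 4 with hY
  have hadj' : ∀ f g, B (S f) g = B f (D g) := fun f g => by
    rw [hsymm, ← hadj, hsymm]
  have hD4 : ∀ f g, B ((D ^ 4) f) g = B f ((S ^ 4) g) := fun f g => by
    simp only [pow_succ, pow_zero, one_mul, Module.End.mul_apply, hadj]
  have hS4 : ∀ f g, B ((S ^ 4) f) g = B f ((D ^ 4) g) := fun f g => by
    rw [hsymm, ← hD4, hsymm]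
  have hX2 : ∀ j ∈ J, ∀ f g, B ((X j ^ 2) f) g = B f ((X j ^ 2) g) := fun j hj f g => by
    simp only [pow_succ, pow_zero, one_mul, Module.End.mul_apply, hX j hj, neg_neg]
  have hX4 : ∀ j ∈ J, ∀ f g, B ((X j ^ 4) f) g = B ((X j ^ 2) f) ((X j ^ 2) g) :=
    fun j hj f g => by
      rw [← hX2 j hj]; simp only [pow_succ, pow_zero, one_mul, Module.End.mul_apply]
  have hYs : ∀ f g, B (Y f) g = B f (Y g) := fun f g => by
    simp only [hY, LinearMap.sum_apply, map_sum]
    refine Finset.sum_congr rfl fun j hj => ?_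
    rw [hX4 j hj, hsymm f, hX4 j hj, hsymm]
  have hYD : Commute Y (D ^ 4) := by
    refine Commute.sum_left _ _ _ fun j hj => ?_
    exact Commute.pow_pow (hXD j hj) 4 4
  -- the key commutator identity
  have key : B (P f) (P f) - B ((S ^ 4 + Y) f) ((S ^ 4 + Y) f)
      = B ((S^4 * D^4 - D^4 * S^4) f) f := by
    have h1 : B ((D^4) f) (Y f) = B ((S^4) f) (Y f) := by
      calc B ((D^4) f) (Y f) = B (Y ((D^4) f)) f := by rw [hYs]
        _ = B ((D^4) (Y f)) f := by
          have := congrArg (fun T : Module.End ℝ V => T f) hYD.eq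
          simp only [Module.End.mul_apply] at this
          rw [this]
        _ = B (Y f) ((S^4) f) := hD4 _ _
        _ = _ := hsymm _ _
    have h2 : P = D ^ 4 + Y := rfl
    rw [h2]
    simp only [LinearMap.add_apply, map_add, LinearMap.sub_apply, map_sub, Module.End.mul_apply,
      hsymm (Y f), h1]
    rw [hS4 ((D^4) f) f, hD4 ((S^4) f) f]; ring
  set N := D * S with hN
  have hNs : ∀ f g, B (N f) g = B f (N g) := fun f g => by
    simp only [hN, Module.End.mul_apply, hadj, hadj']
  have hNS : ∀ f, B (N f) f = B (S f) (S f) := fun f => by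
    simp only [hN, Module.End.mul_apply, hadj]
  rw [weyl_S4D4 D S c hcomm] at key
  simp only [← hN, LinearMap.add_apply, LinearMap.smul_apply, map_add, map_smul,
    Module.End.mul_apply, smul_eq_mul, Module.End.one_apply] at key
  rw [hNs (N (N f)), hNS (N f), hNs (N f), hNS f] at key
  have p1 := hpos (S (N f))
  have p2 := hpos (N f)
  have p3 := hpos (S f)
  have p4 := hpos f
  have p5 := hpos ((S ^ 4 + Y) f)
  simp only [LinearMap.add_apply, map_add] at p5
  have hDD : B (D f) (D f) = B (S f) (S f) + c * B f f := by
    have : B (D f) (D f) = B ((S * D) f) f := by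
      rw [Module.End.mul_apply, hadj']
    rw [this, hcomm]
    simp [← hNS, hN, Algebra.algebraMap_eq_smul_one]
  have hD2 : B ((D^2) f) ((D^2) f) = B (N f) (N f) + 3 * c * B (S f) (S f) + 2 * c^2 * B f f := by
    have : B ((D^2) f) ((D^2) f) = B ((S^2 * D^2) f) f := by
      simp only [pow_succ, pow_zero, one_mul, Module.End.mul_apply, hadj']
    rw [this, weyl_S2D2 D S c hcomm]
    simp only [← hN, LinearMap.add_apply, LinearMap.smul_apply, map_add, map_smul,
      Module.End.mul_apply, smul_eq_mul, Module.End.one_apply, hNs (N f), hNS]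
  have hS2 : B ((S^2) f) ((S^2) f) = B (N f) (N f) - c * B (S f) (S f) := by
    have : B ((S^2) f) ((S^2) f) = B (D ((D * S) (S f))) f := by
      simp only [pow_succ, pow_zero, one_mul, Module.End.mul_apply, hadj, hadj']
    have e : D * S = S * D - algebraMap ℝ (Module.End ℝ V) c := by rw [hcomm, add_sub_cancel_right]
    have e2 : D ((D * S) (S f)) = N (N f) - c • N f := by
      rw [e]; simp [hN, Algebra.algebraMap_eq_smul_one]
    rw [this, e2]
    simp only [map_sub, LinearMap.sub_apply, map_smul, LinearMap.smul_apply, hNs (N f), hNS,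
      smul_eq_mul]
  set K := B (P f) (P f) with hK
  have hc0 : 0 < c := by linarith
  have amgm : ∀ (t : ℝ) (f g : V), 0 < t → 2 * B f g ≤ t * B f f + t⁻¹ * B g g := by
    intro t f g ht
    have := hpos (t • f - g)
    simp only [map_sub, LinearMap.sub_apply, map_smul, LinearMap.smul_apply, smul_eq_mul,
      hsymm g f] at this
    have h2 := mul_nonneg (inv_pos.2 ht).le this
    have : t⁻¹ * (t * (t * B f f) - B f g * t - (t * B f g - B g g))
      = t * B f f - 2 * B f g + t⁻¹ * B g g := by field_simp; ring
    have h3 : t⁻¹ * (t * (t * B f f) - (t * B f g) - (t * B f g - B g g))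
      = t * B f f - 2 * B f g + t⁻¹ * B g g := by field_simp; ring
    nlinarith
  have hmain : 24 * c^2 * B (N f) (N f) + 56 * c^3 * B (S f) (S f) + 24 * c^4 * B f f ≤ K := by
    have := mul_nonneg hc0.le p1
    linarith
  have q2 : 0 ≤ c^2 * B (N f) (N f) := by positivity
  have q3 : 0 ≤ c^3 * B (S f) (S f) := by positivity
  have q4 : 0 ≤ c^4 * B f f := by positivity
  have q5 : c^3 * B f f ≤ c^4 * B f f :=
    mul_le_mul_of_nonneg_right (pow_le_pow_right₀ hc (by norm_num)) p4
  have hB : ∑ j ∈ J, B ((X j^2) f) ((X j^2) f) = B (P f) f - B ((D^2) f) ((S^2) f) := by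
    have e : B ((D^2) f) ((S^2) f) = B ((D^4) f) f := by
      simp only [pow_succ, pow_zero, one_mul, Module.End.mul_apply, hadj]
    rw [e]
    have h2 : P = D ^ 4 + Y := rfl
    rw [h2]
    simp only [hY, LinearMap.add_apply, map_add, LinearMap.sum_apply, map_sum,
      add_sub_cancel_left]
    exact Finset.sum_congr rfl fun j hj => (hX4 j hj f f).symm
  have hBle : c^2 * ∑ j ∈ J, B ((X j^2) f) ((X j^2) f) ≤ 2 * K := by
    have a1 := amgm (c^2)⁻¹ (P f) f (by positivity)
    have a2 := amgm 1 (-(D^2) f) ((S^2) f) one_pos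
    simp only [map_neg, LinearMap.neg_apply, neg_neg] at a2
    rw [inv_inv] at a1
    have a3 : 2 * c^2 * B (P f) f ≤ K + c^4 * B f f := by
      have := mul_le_mul_of_nonneg_left a1 (by positivity : 0 ≤ c^2)
      have e : c^2 * ((c^2)⁻¹ * (B (P f)) (P f) + c^2 * B f f) = K + c^4 * B f f := by
        rw [← hK]; field_simp
      linarith
    have a4 : -(2 * c^2 * B ((D^2) f) ((S^2) f)) ≤
        c^2 * B ((D^2) f) ((D^2) f) + c^2 * B ((S^2) f) ((S^2) f) := by
      have := mul_le_mul_of_nonneg_left a2 (by positivity : 0 ≤ c^2)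
      simp only [inv_one] at this
      linarith
    rw [hB]
    rw [hD2, hS2] at a4
    nlinarith
  refine ⟨by linarith, ?_, ?_⟩
  · rw [hDD]; nlinarith
  · intro j hj
    have h1 : B (X j f) (X j f) = B (-(X j ^ 2) f) f := by
      have := hX j hj (X j f) f
      simp only [pow_succ, pow_zero, one_mul, Module.End.mul_apply, map_neg, LinearMap.neg_apply]
      rw [this, neg_neg]
    have h2 := amgm c⁻¹ (-(X j ^ 2) f) f (by positivity)
    have h3 : B ((X j^2) f) ((X j^2) f) ≤ ∑ j ∈ J, B ((X j^2) f) ((X j^2) f) :=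
      Finset.single_le_sum (f := fun j => B ((X j^2) f) ((X j^2) f)) (fun i _ => hpos _) hj
    have h4 := mul_le_mul_of_nonneg_left h3 (by positivity : 0 ≤ c^2)
    rw [← h1] at h2
    simp only [map_neg, LinearMap.neg_apply, neg_neg, inv_inv] at h2
    have h5 := mul_le_mul_of_nonneg_left h2 (by positivity : 0 ≤ c^3)
    have e : c^3 * (c⁻¹ * B ((X j^2) f) ((X j^2) f) + c * B f f) =
      c^2 * B ((X j^2) f) ((X j^2) f) + c^4 * B f f := by field_simp
    linarith

open scoped ContDiff

theorem contDiff_pd {n : ℕ} {k : WithTop ℕ∞} {f : EuclideanSpace ℝ (Fin n) → ℂ} (j : Fin n)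
    (hf : ContDiff ℝ (k + 1) f) : ContDiff ℝ k (pd j f) :=
  (hf.fderiv_right le_rfl).clm_apply contDiff_const

theorem hasCompactSupport_pd {n : ℕ} {f : EuclideanSpace ℝ (Fin n) → ℂ} (j : Fin n)
    (hf : HasCompactSupport f) : HasCompactSupport (pd j f) :=
  hf.fderiv_apply ℝ _

theorem pd_add {n : ℕ} {f g : EuclideanSpace ℝ (Fin n) → ℂ} (j : Fin n)
    {x : EuclideanSpace ℝ (Fin n)} (hf : DifferentiableAt ℝ f x) (hg : DifferentiableAt ℝ g x) :
    pd j (f + g) x = pd j f x + pd j g x := by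
  simp [pd, fderiv_add hf hg]

theorem pd_comm {n : ℕ} {f : EuclideanSpace ℝ (Fin n) → ℂ} (hf : ContDiff ℝ 2 f) (i j : Fin n) :
    pd i (pd j f) = pd j (pd i f) := by
  ext x
  have hd : DifferentiableAt ℝ (fderiv ℝ f) x :=
    (hf.fderiv_right (m := 1) (by norm_num)).differentiable (by norm_num) x
  have e : ∀ i j : Fin n, pd i (pd j f) x =
      fderiv ℝ (fderiv ℝ f) x (EuclideanSpace.single i 1) (EuclideanSpace.single j 1) := by
    intro i j
    unfold pd
    rw [fderiv_clm_apply hd (differentiableAt_const _)]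
    simp
  rw [e, e]
  exact (hf.contDiffAt.isSymmSndFDerivAt (by simp)) _ _

theorem hcs_smul {n : ℕ} {g : EuclideanSpace ℝ (Fin n) → ℂ} (a : EuclideanSpace ℝ (Fin n) → ℝ)
    (hg : HasCompactSupport g) : HasCompactSupport (fun x => a x • g x) := by
  refine hg.mono fun x hx h => hx ?_
  have h' : g x = 0 := h
  simp [h']

def TF (n : ℕ) : Submodule ℝ (EuclideanSpace ℝ (Fin n) → ℂ) where
  carrier := {f | ContDiff ℝ ∞ f ∧ HasCompactSupport f}
  add_mem' := fun hf hg => ⟨hf.1.add hg.1, hf.2.add hg.2⟩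
  zero_mem' := ⟨contDiff_const, HasCompactSupport.zero⟩
  smul_mem' := fun c _ hf => ⟨contDiff_const.smul hf.1, hcs_smul (fun _ => c) hf.2⟩

theorem TF.diff {n : ℕ} (f : TF n) : Differentiable ℝ (f : EuclideanSpace ℝ (Fin n) → ℂ) :=
  f.2.1.differentiable (by simp)

def pdL {n : ℕ} (j : Fin n) : Module.End ℝ (TF n) where
  toFun f := ⟨pd j f, contDiff_pd j (k := ∞) f.2.1, hasCompactSupport_pd j f.2.2⟩
  map_add' f g := by
    ext x; exact pd_add j (TF.diff f x) (TF.diff g x)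
  map_smul' c f := by
    ext x
    simp [pd, fderiv_const_smul (TF.diff f x) c]

theorem pdL_coe {n : ℕ} (j : Fin n) (f : TF n) :
    ((pdL j f : TF n) : EuclideanSpace ℝ (Fin n) → ℂ) = pd j f := rfl

/-- the weight -/
def wt {n : ℕ} (m : Fin n) (c γ : ℝ) (x : EuclideanSpace ℝ (Fin n)) : ℝ :=
  Real.exp (γ * (x m - c) ^ 2 / 2)

theorem contDiff_coord {n : ℕ} (m : Fin n) {k : WithTop ℕ∞} :
    ContDiff ℝ k (fun x : EuclideanSpace ℝ (Fin n) => x m) :=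
  (EuclideanSpace.proj (𝕜 := ℝ) m).contDiff

theorem contDiff_wt {n : ℕ} (m : Fin n) (c γ : ℝ) {k : WithTop ℕ∞} : ContDiff ℝ k (wt m c γ) := by
  unfold wt
  exact Real.contDiff_exp.comp
    ((contDiff_const.mul (((contDiff_coord m).sub contDiff_const).pow 2)).div_const 2)

theorem hasFDerivAt_coord {n : ℕ} (m : Fin n) (x : EuclideanSpace ℝ (Fin n)) :
    HasFDerivAt (fun x : EuclideanSpace ℝ (Fin n) => x m) (EuclideanSpace.proj (𝕜 := ℝ) m) x :=
  (EuclideanSpace.proj (𝕜 := ℝ) m).hasFDerivAt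

theorem fderiv_wt {n : ℕ} (m : Fin n) (c γ : ℝ) (j : Fin n) (x : EuclideanSpace ℝ (Fin n)) :
    fderiv ℝ (wt m c γ) x (EuclideanSpace.single j 1) =
      if j = m then γ * (x m - c) * wt m c γ x else 0 := by
  have h := ((((hasFDerivAt_coord m x).sub_const c).pow 2).const_mul (γ / 2)).exp
  have h2 : (fun x : EuclideanSpace ℝ (Fin n) => Real.exp (γ / 2 * (x m - c) ^ 2)) = wt m c γ := by
    ext x; unfold wt; congr 1; ring
  rw [h2] at h
  rw [h.fderiv]
  have h3 : Real.exp (γ / 2 * (x m - c) ^ 2) = wt m c γ x := congrFun h2 x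
  rw [h3]
  by_cases hj : j = m
  · subst hj; simp; ring
  · have : m ≠ j := fun h => hj h.symm
    simp [hj, this]

def SL {n : ℕ} (m : Fin n) (c γ : ℝ) : Module.End ℝ (TF n) where
  toFun f := ⟨fun x => - pd m f x - (γ * (x m - c)) • f.1 x,
    ((contDiff_pd m (k := ∞) f.2.1).neg).sub
      ((contDiff_const.mul ((contDiff_coord m).sub contDiff_const)).smul f.2.1),
    ((hasCompactSupport_pd m f.2.2).neg).sub (hcs_smul _ f.2.2)⟩
  map_add' f g := by
    ext x
    have := pd_add m (TF.diff f x) (TF.diff g x)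
    simp only [Submodule.coe_add, Pi.add_apply, this, smul_add]
    ring
  map_smul' r f := by
    ext x
    simp only [Submodule.coe_smul, Pi.smul_apply, pd, fderiv_const_smul (TF.diff f x) r,
      RingHom.id_apply, smul_sub, FunLike.coe_smul, smul_neg]
    rw [smul_comm]

theorem int_of_cc {n : ℕ} {f : EuclideanSpace ℝ (Fin n) → ℝ} (hf : Continuous f)
    (h : HasCompactSupport f) : Integrable f := hf.integrable_of_hasCompactSupport h

theorem TF.int_inner {n : ℕ} (f : TF n) {g : EuclideanSpace ℝ (Fin n) → ℂ} (hg : Continuous g) :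
    Integrable (fun x => inner ℝ (f.1 x) (g x)) := by
  refine int_of_cc (f.2.1.continuous.inner hg) ?_
  refine f.2.2.mono ?_
  intro x hx h
  apply hx
  simp at h ⊢
  simp [h]

theorem TF.wcont {n : ℕ} (m : Fin n) (c γ : ℝ) (g : TF n) :
    Continuous (fun x => wt m c γ x • g.1 x) :=
  (contDiff_wt m c γ (k := 0)).continuous.smul g.2.1.continuous

def ipB {n : ℕ} (m : Fin n) (c γ : ℝ) : TF n →ₗ[ℝ] TF n →ₗ[ℝ] ℝ :=
  LinearMap.mk₂ ℝ (fun f g => ∫ x, inner ℝ (f.1 x) (wt m c γ x • g.1 x))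
    (fun f f' g => by
      rw [← integral_add (TF.int_inner f (TF.wcont m c γ g)) (TF.int_inner f' (TF.wcont m c γ g))]
      refine integral_congr_ae (.of_forall fun x => ?_)
      simp only [Submodule.coe_add, Pi.add_apply, inner_add_left])
    (fun r f g => by
      rw [smul_eq_mul, ← integral_const_mul]
      refine integral_congr_ae (.of_forall fun x => ?_)
      simp only [Submodule.coe_smul, Pi.smul_apply, real_inner_smul_left])
    (fun f g g' => by
      rw [← integral_add (TF.int_inner f (TF.wcont m c γ g)) (TF.int_inner f (TF.wcont m c γ g'))]
      refine integral_congr_ae (.of_forall fun x => ?_)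
      simp only [Submodule.coe_add, Pi.add_apply, inner_add_right, smul_add])
    (fun r f g => by
      rw [smul_eq_mul, ← integral_const_mul]
      refine integral_congr_ae (.of_forall fun x => ?_)
      simp only [Submodule.coe_smul, Pi.smul_apply, real_inner_smul_right]
      ring)

theorem ipB_apply {n : ℕ} (m : Fin n) (c γ : ℝ) (f g : TF n) :
    ipB m c γ f g = ∫ x, inner ℝ (f.1 x) (wt m c γ x • g.1 x) := rfl

theorem ipB_self {n : ℕ} (m : Fin n) (c γ : ℝ) (f : TF n) :
    ipB m c γ f f = ∫ x, ‖f.1 x‖ ^ 2 * wt m c γ x := by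
  rw [ipB_apply]
  refine integral_congr_ae (.of_forall fun x => ?_)
  simp only [real_inner_smul_right, real_inner_self_eq_norm_sq]
  ring

theorem wt_pos {n : ℕ} (m : Fin n) (c γ : ℝ) (x : EuclideanSpace ℝ (Fin n)) : 0 < wt m c γ x :=
  Real.exp_pos _

/-- multiply a test function by the weight -/
def wTF {n : ℕ} (m : Fin n) (c γ : ℝ) (g : TF n) : TF n :=
  ⟨fun x => wt m c γ x • g.1 x, (contDiff_wt m c γ).smul g.2.1, hcs_smul _ g.2.2⟩

theorem pd_wTF {n : ℕ} (m : Fin n) (c γ : ℝ) (g : TF n) (j : Fin n)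
    (x : EuclideanSpace ℝ (Fin n)) :
    pd j (wTF m c γ g).1 x = wt m c γ x • pd j g.1 x +
      (if j = m then γ * (x m - c) * wt m c γ x else 0) • g.1 x := by
  unfold pd wTF
  have h1 : DifferentiableAt ℝ (wt m c γ) x := (contDiff_wt m c γ (k := 1)).differentiable (by simp) x
  simp only
  rw [fderiv_fun_smul h1 (TF.diff g x)]
  simp [fderiv_wt]

theorem ipB_parts {n : ℕ} (m : Fin n) (c γ : ℝ) (f g : TF n) (j : Fin n) :
    ipB m c γ (pdL j f) g = - ∫ x, inner ℝ (f.1 x) (pd j (wTF m c γ g).1 x) := by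
  have h := integral_bilinear_fderiv_right_eq_neg_left_of_integrable
    (μ := (volume : Measure (EuclideanSpace ℝ (Fin n))))
    (f := f.1) (g := (wTF m c γ g).1) (v := EuclideanSpace.single j (1:ℝ)) (B := innerSL ℝ)
    (TF.int_inner (pdL j f) (wTF m c γ g).2.1.continuous)
    (TF.int_inner f (pdL j (wTF m c γ g)).2.1.continuous)
    (TF.int_inner f (wTF m c γ g).2.1.continuous)
    (fun x _ => TF.diff f x) (fun x _ => TF.diff (wTF m c γ g) x)
  have h' := congrArg Neg.neg h
  rw [neg_neg] at h'
  exact h'.symm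

theorem carleman0 {n : ℕ} (m : Fin n) (c γ : ℝ) (hγ : 1 ≤ γ) (f : TF n) :
    γ ^ 3 * (∫ x, ‖f.1 x‖ ^ 2 * wt m c γ x)
      ≤ 2 * (∫ x, ‖∑ j, (pd j)^[4] f.1 x‖ ^ 2 * wt m c γ x) ∧
    ∀ j, γ ^ 3 * (∫ x, ‖pd j f.1 x‖ ^ 2 * wt m c γ x)
      ≤ 2 * (∫ x, ‖∑ j, (pd j)^[4] f.1 x‖ ^ 2 * wt m c γ x) := by
  have hsymm : ∀ f g, ipB m c γ f g = ipB m c γ g f := fun f g => by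
    rw [ipB_apply, ipB_apply]
    refine integral_congr_ae (.of_forall fun x => ?_)
    simp only [real_inner_smul_right]
    rw [real_inner_comm]
  have H := abstract_carleman (ipB m c γ) hsymm
    (fun f => by
      rw [ipB_self]
      exact integral_nonneg fun x => mul_nonneg (by positivity) (wt_pos m c γ x).le)
    (pdL m) (SL m c γ) γ hγ
    (fun f g => by
      rw [ipB_parts, ipB_apply, ← integral_neg]
      refine integral_congr_ae (.of_forall fun x => ?_)
      simp only [pd_wTF, if_true, SL, LinearMap.coe_mk, AddHom.coe_mk]
      rw [← inner_neg_right]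
      congr 1
      simp only [smul_sub, smul_neg, smul_smul]
      rw [mul_comm (wt m c γ x)]
      abel)
    (by
      refine LinearMap.ext fun f => ?_
      refine Subtype.ext (funext fun x => ?_)
      rw [Algebra.algebraMap_eq_smul_one]
      simp only [Module.End.mul_apply, LinearMap.add_apply, LinearMap.smul_apply,
        Module.End.one_apply, Submodule.coe_add, Submodule.coe_smul, Pi.add_apply, Pi.smul_apply]
      simp only [pdL_coe, SL, LinearMap.coe_mk, AddHom.coe_mk]
      have h1 : HasFDerivAt (pd m f.1) (fderiv ℝ (pd m f.1) x) x := (TF.diff (pdL m f) x).hasFDerivAt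
      have h2 := (((hasFDerivAt_coord m x).sub_const c).const_mul γ).smul (TF.diff f x).hasFDerivAt
      have h3 := h1.neg.sub h2
      have h4 : pd m (fun x => - pd m f.1 x - (γ * (x m - c)) • f.1 x) x = _ :=
        congrArg (fun T => T (EuclideanSpace.single m 1)) h3.fderiv
      rw [h4]
      simp [pd]
      ring)
    (Finset.univ.erase m) pdL
    (fun j hj f g => by
      rw [ipB_parts, ipB_apply]
      congr 1
      refine integral_congr_ae (.of_forall fun x => ?_)
      simp only [pd_wTF, if_neg (Finset.ne_of_mem_erase hj), zero_smul, add_zero, pdL_coe])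
    (fun j hj => by
      refine LinearMap.ext fun f => ?_
      refine Subtype.ext ?_
      exact pd_comm (f.2.1.of_le (by exact ENat.LEInfty.out)) j m)
    f
  have hP : ((pdL m ^ 4 + ∑ j ∈ Finset.univ.erase m, pdL j ^ 4) f).1
      = fun x => ∑ j, (pd j)^[4] f.1 x := by
    rw [Finset.add_sum_erase Finset.univ (fun j => pdL j ^ 4) (Finset.mem_univ m)]
    ext x
    rw [LinearMap.sum_apply, AddSubmonoidClass.coe_finsetSum, Finset.sum_apply]
    rfl
  have hPx : ∀ x, ((pdL m ^ 4 + ∑ j ∈ Finset.univ.erase m, pdL j ^ 4) f).1 x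
      = ∑ j, (pd j)^[4] f.1 x := fun x => congrFun hP x
  simp only [ipB_self, hPx] at H
  refine ⟨H.1, fun j => ?_⟩
  by_cases hj : j = m
  · subst hj; exact H.2.1
  · exact H.2.2 j (Finset.mem_erase.2 ⟨hj, Finset.mem_univ _⟩)

open scoped ContDiff
open Filter Topology

theorem contDiff_pd_iter {n : ℕ} (j : Fin n) (k : ℕ) : ∀ (l : ℕ) 
    {f : EuclideanSpace ℝ (Fin n) → ℂ}, ContDiff ℝ ((l + k : ℕ) : WithTop ℕ∞) f →
    ContDiff ℝ (l : WithTop ℕ∞) ((pd j)^[k] f) := by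
  induction k with
  | zero => intro l f hf; simpa using hf
  | succ k ih =>
    intro l f hf
    rw [Function.iterate_succ_apply]
    exact ih l (contDiff_pd j (by exact_mod_cast hf))

theorem cont_pd_iter {n : ℕ} (j : Fin n) {k : ℕ} (hk : k ≤ 4)
    {f : EuclideanSpace ℝ (Fin n) → ℂ} (hf : ContDiff ℝ 4 f) : Continuous ((pd j)^[k] f) := by
  have := contDiff_pd_iter j k 0 (f := f) (hf.of_le (by simpa using (by exact_mod_cast hk)))
  exact this.continuous

theorem pd_congr {n : ℕ} (j : Fin n) {f g : EuclideanSpace ℝ (Fin n) → ℂ}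
    {x : EuclideanSpace ℝ (Fin n)} (h : f =ᶠ[𝓝 x] g) (k : ℕ) :
    (pd j)^[k] f =ᶠ[𝓝 x] (pd j)^[k] g := by
  induction k generalizing f g with
  | zero => exact h
  | succ k ih =>
    rw [Function.iterate_succ_apply, Function.iterate_succ_apply]
    refine ih ?_
    filter_upwards [h.fderiv (𝕜 := ℝ)] with y hy
    simp [pd, hy]

theorem pd_iter_add {n : ℕ} (j : Fin n) (k : ℕ) {U : Set (EuclideanSpace ℝ (Fin n))}
    (hU : IsOpen U) : ∀ {f g : EuclideanSpace ℝ (Fin n) → ℂ},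
    ContDiffOn ℝ k f U → ContDiffOn ℝ k g U → 
    ∀ x ∈ U, (pd j)^[k] (f + g) x = (pd j)^[k] f x + (pd j)^[k] g x := by
  induction k with
  | zero => intro f g _ _ x _; rfl
  | succ k ih =>
    intro f g hf hg x hx
    simp only [Function.iterate_succ_apply]
    have hpd : ∀ {h : EuclideanSpace ℝ (Fin n) → ℂ}, ContDiffOn ℝ ((k + 1 : ℕ) : WithTop ℕ∞) h U →
        ContDiffOn ℝ k (pd j h) U := fun hh =>
      (hh.fderiv_of_isOpen hU (by norm_cast)).clm_apply contDiffOn_const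
    rw [← ih (hpd hf) (hpd hg) x hx]
    refine (pd_congr j ?_ k).eq_of_nhds
    filter_upwards [hU.mem_nhds hx] with y hy
    exact pd_add j (((hf.contDiffAt (hU.mem_nhds hy))).differentiableAt (by simp))
      (((hg.contDiffAt (hU.mem_nhds hy))).differentiableAt (by simp))

theorem leib_bound {n : ℕ} (j : Fin n) (k : ℕ) {U : Set (EuclideanSpace ℝ (Fin n))}
    (hU : IsOpen U) {C : ℝ} (hC : 0 ≤ C) : ∀ {f g : EuclideanSpace ℝ (Fin n) → ℂ},
    ContDiffOn ℝ k f U → ContDiffOn ℝ k g U →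
    (∀ i ≤ k, ∀ x ∈ U, ‖(pd j)^[i] f x‖ ≤ C) →
    ∀ x ∈ U, ‖(pd j)^[k] (fun x => f x * g x) x‖ ≤
      2 ^ k * C * ∑ i ∈ Finset.range (k + 1), ‖(pd j)^[i] g x‖ := by
  induction k with
  | zero =>
    intro f g _ _ hb x hx
    have := hb 0 le_rfl x hx
    simp only [Function.iterate_zero, id] at this
    simp
    gcongr
  | succ k ih =>
    intro f g hf hg hb x hx
    have hpd : ∀ {h : EuclideanSpace ℝ (Fin n) → ℂ}, ContDiffOn ℝ ((k + 1 : ℕ) : WithTop ℕ∞) h U →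
        ContDiffOn ℝ k (pd j h) U := fun hh =>
      (hh.fderiv_of_isOpen hU (by norm_cast)).clm_apply contDiffOn_const
    have hf' : ContDiffOn ℝ k f U := hf.of_le (by exact_mod_cast k.le_succ)
    have hg' : ContDiffOn ℝ k g U := hg.of_le (by exact_mod_cast k.le_succ)
    have e : (pd j)^[k + 1] (fun x => f x * g x) x =
        (pd j)^[k] (fun x => pd j f x * g x) x + (pd j)^[k] (fun x => f x * pd j g x) x := by
      rw [Function.iterate_succ_apply]
      rw [← pd_iter_add j k hU ((hpd hf).mul hg') (hf'.mul (hpd hg)) x hx]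
      refine (pd_congr j ?_ k).eq_of_nhds
      filter_upwards [hU.mem_nhds hx] with y hy
      have h1 := ((hf.contDiffAt (hU.mem_nhds hy))).differentiableAt (by simp)
      have h2 := ((hg.contDiffAt (hU.mem_nhds hy))).differentiableAt (by simp)
      unfold pd
      rw [fderiv_fun_mul h1 h2]
      simp
      ring
    have i1 := ih (hpd hf) hg' (fun i hi x hx => by
      have := hb (i + 1) (by omega) x hx
      rwa [Function.iterate_succ_apply] at this) x hx
    have i2 := ih hf' (hpd hg) (fun i hi x hx => hb i (by omega) x hx) x hx
    have s1 : ∑ i ∈ Finset.range (k + 1), ‖(pd j)^[i] g x‖ ≤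
        ∑ i ∈ Finset.range (k + 1 + 1), ‖(pd j)^[i] g x‖ := by
      rw [Finset.sum_range_succ _ (k + 1)]
      linarith [norm_nonneg ((pd j)^[k + 1] g x)]
    have s2 : ∑ i ∈ Finset.range (k + 1), ‖(pd j)^[i] (pd j g) x‖ ≤
        ∑ i ∈ Finset.range (k + 1 + 1), ‖(pd j)^[i] g x‖ := by
      rw [Finset.sum_range_succ' _ (k + 1)]
      simp only [Function.iterate_succ_apply]
      linarith [norm_nonneg ((pd j)^[0] g x)]
    rw [e]
    have hp : 0 ≤ 2 ^ k * C := by positivity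
    calc _ ≤ _ := norm_add_le _ _
      _ ≤ _ := add_le_add i1 i2
      _ ≤ _ := add_le_add (mul_le_mul_of_nonneg_left s1 hp) (mul_le_mul_of_nonneg_left s2 hp)
      _ = _ := by ring

def QW {n : ℕ} (m : Fin n) (c γ : ℝ) (f : EuclideanSpace ℝ (Fin n) → ℂ) : ℝ :=
  ∫ x, ‖f x‖ ^ 2 * wt m c γ x

def PP {n : ℕ} (f : EuclideanSpace ℝ (Fin n) → ℂ) : EuclideanSpace ℝ (Fin n) → ℂ :=
  fun x => ∑ j, (pd j)^[4] f x

def CE {n : ℕ} (m : Fin n) (c γ : ℝ) (f : EuclideanSpace ℝ (Fin n) → ℂ) : Prop :=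
  γ ^ 3 * QW m c γ f ≤ 2 * QW m c γ (PP f) ∧ ∀ j, γ ^ 3 * QW m c γ (pd j f) ≤ 2 * QW m c γ (PP f)

theorem tendsto_QW {n : ℕ} (m : Fin n) (c γ : ℝ) {F : ℕ → EuclideanSpace ℝ (Fin n) → ℂ}
    {f : EuclideanSpace ℝ (Fin n) → ℂ} {G : EuclideanSpace ℝ (Fin n) → ℝ}
    (hF : ∀ N, Continuous (F N)) (hlim : ∀ x, Tendsto (fun N => F N x) atTop (𝓝 (f x)))
    (hb : ∀ N x, ‖F N x‖ ≤ G x) (hG : Integrable (fun x => G x ^ 2 * wt m c γ x)) :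
    Tendsto (fun N => QW m c γ (F N)) atTop (𝓝 (QW m c γ f)) := by
  refine tendsto_integral_of_dominated_convergence _ (fun N => ?_) hG (fun N => ?_) ?_
  · exact (((hF N).norm.pow 2).mul
      (contDiff_wt m c γ (k := 0)).continuous).aestronglyMeasurable
  · refine .of_forall fun x => ?_
    rw [norm_mul, norm_pow, norm_norm, Real.norm_of_nonneg (wt_pos m c γ x).le]
    have := hb N x
    have := (wt_pos m c γ x).le
    gcongr
  · exact .of_forall fun x => (((hlim x).norm.pow 2).mul_const _)

theorem CE_limit {n : ℕ} (m : Fin n) (c γ : ℝ) {F : ℕ → EuclideanSpace ℝ (Fin n) → ℂ}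
    {f : EuclideanSpace ℝ (Fin n) → ℂ} {G : EuclideanSpace ℝ (Fin n) → ℝ}
    (hF : ∀ N, ContDiff ℝ 4 (F N)) (hCE : ∀ N, CE m c γ (F N))
    (hlim : ∀ j, ∀ k ≤ 4, ∀ x, Tendsto (fun N => (pd j)^[k] (F N) x) atTop (𝓝 ((pd j)^[k] f x)))
    (hb : ∀ j, ∀ k ≤ 4, ∀ N x, ‖(pd j)^[k] (F N) x‖ ≤ G x)
    (hG : Integrable (fun x => G x ^ 2 * wt m c γ x)) : CE m c γ f := by
  have h0 : Tendsto (fun N => QW m c γ (F N)) atTop (𝓝 (QW m c γ f)) :=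
    tendsto_QW m c γ (fun N => (hF N).continuous) (hlim m 0 (by norm_num))
      (hb m 0 (by norm_num)) hG
  have h1 : ∀ j, Tendsto (fun N => QW m c γ (pd j (F N))) atTop (𝓝 (QW m c γ (pd j f))) := fun j =>
    tendsto_QW m c γ (fun N => cont_pd_iter j (k := 1) (by norm_num) (hF N))
      (hlim j 1 (by norm_num)) (hb j 1 (by norm_num)) hG
  have h4 : Tendsto (fun N => QW m c γ (PP (F N))) atTop (𝓝 (QW m c γ (PP f))) := by
    refine tendsto_QW m c γ (G := fun x => n * G x)
      (fun N => continuous_finsetSum _ fun j _ => cont_pd_iter j le_rfl (hF N))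
      (fun x => tendsto_finsetSum _ fun j _ => hlim j 4 le_rfl x) (fun N x => ?_) ?_
    · refine (norm_sum_le _ _).trans ?_
      refine (Finset.sum_le_sum fun j _ => hb j 4 le_rfl N x).trans ?_
      simp
    · refine (hG.const_mul ((n : ℝ) ^ 2)).congr (.of_forall fun x => ?_)
      simp only
      ring
  exact ⟨le_of_tendsto_of_tendsto' (h0.const_mul _) (h4.const_mul _) fun N => (hCE N).1,
    fun j => le_of_tendsto_of_tendsto' ((h1 j).const_mul _) (h4.const_mul _) fun N => (hCE N).2 j⟩

open scoped Convolution in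
theorem pd_conv {n : ℕ} (φ : ContDiffBump (0 : EuclideanSpace ℝ (Fin n))) (j : Fin n) (k : ℕ) :
    ∀ {f : EuclideanSpace ℝ (Fin n) → ℂ}, ContDiff ℝ k f → HasCompactSupport f →
    (pd j)^[k] (φ.normed volume ⋆[ContinuousLinearMap.lsmul ℝ ℝ, volume] f) =
      φ.normed volume ⋆[ContinuousLinearMap.lsmul ℝ ℝ, volume] ((pd j)^[k] f) := by
  induction k with
  | zero => intro f _ _; rfl
  | succ k ih =>
    intro f hf hs
    have hl : LocallyIntegrable (φ.normed (volume : Measure (EuclideanSpace ℝ (Fin n)))) :=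
      φ.continuous_normed.locallyIntegrable
    have hf1 : ContDiff ℝ 1 f := hf.of_le (by exact_mod_cast (by omega))
    rw [Function.iterate_succ_apply, Function.iterate_succ_apply,
      ← ih (contDiff_pd j (by exact_mod_cast hf)) (hasCompactSupport_pd j hs)]
    congr 1
    ext x
    have := hs.hasFDerivAt_convolution_right (ContinuousLinearMap.lsmul ℝ ℝ) hl hf1 x
    unfold pd
    rw [this.fderiv]
    rw [convolution_precompR_apply _ hl (hs.fderiv ℝ) (hf1.continuous_fderiv (by simp))]

open scoped Convolution in
theorem carleman1 {n : ℕ} (m : Fin n) (c γ : ℝ) (hγ : 1 ≤ γ) {f : EuclideanSpace ℝ (Fin n) → ℂ}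
    (hf : ContDiff ℝ 4 f) (hs : HasCompactSupport f) : CE m c γ f := by
  let φ : ℕ → ContDiffBump (0 : EuclideanSpace ℝ (Fin n)) := fun N =>
    { rIn := 1 / ((N : ℝ) + 1) / 2
      rOut := 1 / ((N : ℝ) + 1)
      rIn_pos := by positivity
      rIn_lt_rOut := half_lt_self (by positivity) }
  have hφ0 : Tendsto (fun N => (φ N).rOut) atTop (𝓝 0) := tendsto_one_div_add_atTop_nhds_zero_nat
  have hφ1 : ∀ N, (φ N).rOut ≤ 1 := fun N => by
    show 1 / ((N : ℝ) + 1) ≤ 1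
    rw [div_le_one (by positivity)]
    linarith [(Nat.cast_nonneg N : (0 : ℝ) ≤ N)]
  have hl : LocallyIntegrable f := hf.continuous.locallyIntegrable
  have hsm : ∀ N, ContDiff ℝ ∞ ((φ N).normed volume ⋆[ContinuousLinearMap.lsmul ℝ ℝ, volume] f) :=
    fun N => (φ N).hasCompactSupport_normed.contDiff_convolution_left _ (φ N).contDiff_normed hl
  have hfk : ∀ k ≤ 4, ContDiff ℝ (k : ℕ) f := fun k hk => hf.of_le (by exact_mod_cast hk)
  have hsk : ∀ j, ∀ k, HasCompactSupport ((pd j)^[k] f) := fun j k => by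
    induction k with
    | zero => exact hs
    | succ k ih => rw [Function.iterate_succ_apply']; exact hasCompactSupport_pd j ih
  have hex : ∀ j : Fin n, ∀ k : ℕ, ∃ C : ℝ, 0 ≤ C ∧ (k ≤ 4 → ∀ x, ‖(pd j)^[k] f x‖ ≤ C) := by
    intro j k
    by_cases hk : k ≤ 4
    · obtain ⟨C, hC⟩ := (hsk j k).exists_bound_of_continuous (cont_pd_iter j hk hf)
      exact ⟨C, (norm_nonneg _).trans (hC 0), fun _ => hC⟩
    · exact ⟨0, le_rfl, fun h => absurd h hk⟩
  choose C hC0 hC using hex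
  set M := ∑ j, ∑ k ∈ Finset.range 5, C j k with hM
  have hCM : ∀ j, ∀ k ≤ 4, C j k ≤ M := fun j k hk =>
    (Finset.single_le_sum (f := fun k => C j k) (fun i _ => hC0 j i)
      (Finset.mem_range.2 (by omega))).trans
    (Finset.single_le_sum (f := fun j => ∑ k ∈ Finset.range 5, C j k)
      (fun i _ => Finset.sum_nonneg fun k _ => hC0 i k) (Finset.mem_univ j))
  obtain ⟨R, hR⟩ := hs.isCompact.isBounded.subset_closedBall (0 : EuclideanSpace ℝ (Fin n))
  have hz : ∀ j k x, R < ‖x‖ → (pd j)^[k] f x = 0 := fun j k x hx => by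
    have : f =ᶠ[𝓝 x] 0 := by
      rw [← notMem_tsupport_iff_eventuallyEq]
      intro h
      have := hR h
      simp at this
      linarith
    have h2 := (pd_congr j this k).eq_of_nhds
    rw [h2]
    clear h2 this
    have : (pd j)^[k] (0 : EuclideanSpace ℝ (Fin n) → ℂ) = 0 := by
      induction k with
      | zero => rfl
      | succ k ih =>
        rw [Function.iterate_succ_apply', ih]
        ext y; simp [pd]
    rw [this]; rfl
  refine CE_limit m c γ (F := fun N => (φ N).normed volume ⋆[ContinuousLinearMap.lsmul ℝ ℝ, volume] f)
    (G := (Metric.closedBall 0 (R + 1)).indicator fun _ => 3 * M) (fun N => ?_) (fun N => ?_) ?_ ?_ ?_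
  · exact (hsm N).of_le (by exact ENat.LEInfty.out)
  · exact carleman0 m c γ hγ ⟨_, hsm N, HasCompactSupport.convolution _ (φ N).hasCompactSupport_normed hs⟩
  · intro j k hk x
    simp only [pd_conv _ j k (hfk k hk) hs]
    exact ContDiffBump.convolution_tendsto_right_of_continuous hφ0 (cont_pd_iter j hk hf) x
  · intro j k hk N x
    simp only [pd_conv _ j k (hfk k hk) hs]
    by_cases hx : x ∈ Metric.closedBall (0 : EuclideanSpace ℝ (Fin n)) (R + 1)
    · rw [Set.indicator_of_mem hx]
      have hb := fun x => (hC j k hk x).trans (hCM j k hk)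
      have := ContDiffBump.dist_normed_convolution_le (φ := φ N) (x₀ := x) (ε := 2 * M) (μ := volume)
        (g := (pd j)^[k] f)
        (cont_pd_iter j hk hf).aestronglyMeasurable (fun y _ => by
          rw [dist_eq_norm]
          refine (norm_sub_le _ _).trans ?_
          linarith [hb x, hb y])
      rw [dist_eq_norm] at this
      have h3 := norm_le_insert' (((φ N).normed volume ⋆[ContinuousLinearMap.lsmul ℝ ℝ, volume] ((pd j)^[k] f)) x) ((pd j)^[k] f x)
      linarith [hb x]
    · rw [Set.indicator_of_notMem hx]
      have hx' : R + 1 < ‖x‖ := by simpa using hx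
      rw [ContDiffBump.normed_convolution_eq_right, hz j k x (by linarith), norm_zero]
      intro y hy
      rw [hz j k x (by linarith), hz j k y]
      have : ‖x - y‖ < 1 := by
        rw [← dist_eq_norm, dist_comm]; exact (Metric.mem_ball.1 hy).trans_le (hφ1 N)
      linarith [norm_le_insert' x y]
  · have : (fun x => (Metric.closedBall 0 (R + 1)).indicator (fun _ => 3 * M) x ^ 2 * wt m c γ x) =
        (Metric.closedBall 0 (R + 1)).indicator (fun x => (3 * M) ^ 2 * wt m c γ x) := by
      ext x
      by_cases hx : x ∈ Metric.closedBall (0 : EuclideanSpace ℝ (Fin n)) (R + 1)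
      · simp only [Set.indicator_of_mem hx]
      · simp only [Set.indicator_of_notMem hx]; simp
    rw [this, integrable_indicator_iff Metric.isClosed_closedBall.measurableSet]
    exact (continuous_const.mul (contDiff_wt m c γ (k := 0)).continuous).continuousOn.integrableOn_compact
      (isCompact_closedBall _ _)

open scoped ContDiff
open Filter Topology

theorem unif_bound {n : ℕ} {P : Fin n → ℕ → ℝ → Prop}
    (hmono : ∀ j k C C', C ≤ C' → P j k C → P j k C')
    (h : ∀ j, ∀ k, k ≤ 4 → ∃ C : ℝ, P j k C) : ∃ C : ℝ, 0 ≤ C ∧ ∀ j, ∀ k, k ≤ 4 → P j k C := by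
  have hex : ∀ j : Fin n, ∀ k : ℕ, ∃ C : ℝ, 0 ≤ C ∧ (k ≤ 4 → P j k C) := by
    intro j k
    by_cases hk : k ≤ 4
    · obtain ⟨C, hC⟩ := h j k hk
      exact ⟨max C 0, le_max_right _ _, fun _ => hmono _ _ _ _ (le_max_left _ _) hC⟩
    · exact ⟨0, le_rfl, fun h => absurd h hk⟩
  choose C hC0 hC using hex
  refine ⟨∑ j, ∑ k ∈ Finset.range 5, C j k,
    Finset.sum_nonneg fun j _ => Finset.sum_nonneg fun k _ => hC0 j k, fun j k hk => ?_⟩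
  refine hmono _ _ _ _ ?_ (hC j k hk)
  exact (Finset.single_le_sum (f := fun k => C j k) (fun i _ => hC0 j i)
      (Finset.mem_range.2 (by omega))).trans
    (Finset.single_le_sum (f := fun j => ∑ k ∈ Finset.range 5, C j k)
      (fun i _ => Finset.sum_nonneg fun k _ => hC0 i k) (Finset.mem_univ j))

theorem leib_bound4 {n : ℕ} (j : Fin n) {k : ℕ} (hk : k ≤ 4) {U : Set (EuclideanSpace ℝ (Fin n))}
    (hU : IsOpen U) {C : ℝ} (hC : 0 ≤ C) {f g : EuclideanSpace ℝ (Fin n) → ℂ}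
    (hf : ContDiffOn ℝ 4 f U) (hg : ContDiffOn ℝ 4 g U)
    (hb : ∀ i ≤ 4, ∀ x ∈ U, ‖(pd j)^[i] f x‖ ≤ C) (x : EuclideanSpace ℝ (Fin n)) (hx : x ∈ U) :
    ‖(pd j)^[k] (fun x => f x * g x) x‖ ≤
      16 * C * ∑ i ∈ Finset.range 5, ‖(pd j)^[i] g x‖ := by
  have hk' : (k : WithTop ℕ∞) ≤ 4 := by exact_mod_cast hk
  refine (leib_bound j k hU hC (hf.of_le hk') (hg.of_le hk')
    (fun i hi => hb i (hi.trans hk)) x hx).trans ?_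
  have h1 : (2 : ℝ) ^ k ≤ 16 := by
    calc (2 : ℝ) ^ k ≤ 2 ^ 4 := pow_le_pow_right₀ (by norm_num) hk
      _ = 16 := by norm_num
  have h2 : ∑ i ∈ Finset.range (k + 1), ‖(pd j)^[i] g x‖ ≤
      ∑ i ∈ Finset.range 5, ‖(pd j)^[i] g x‖ :=
    Finset.sum_le_sum_of_subset_of_nonneg (Finset.range_mono (by omega))
      fun _ _ _ => norm_nonneg _
  have h3 : 0 ≤ ∑ i ∈ Finset.range (k + 1), ‖(pd j)^[i] g x‖ :=
    Finset.sum_nonneg fun _ _ => norm_nonneg _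
  gcongr

theorem pd_iter_scale {n : ℕ} (j : Fin n) (s : ℝ) (k : ℕ) (f : EuclideanSpace ℝ (Fin n) → ℂ)
    (hf : ContDiff ℝ ∞ f) :
    (pd j)^[k] (fun x => f (s • x)) = fun x => s ^ k • (pd j)^[k] f (s • x) := by
  induction k with
  | zero => ext x; simp
  | succ k ih =>
    rw [Function.iterate_succ_apply', ih, Function.iterate_succ_apply']
    have hd : Differentiable ℝ ((pd j)^[k] f) :=
      (contDiff_pd_iter j k 1 (hf.of_le (by exact_mod_cast le_top))).differentiable (by simp)
    ext x
    have hd2 : DifferentiableAt ℝ (fun x => (pd j)^[k] f (s • x)) x :=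
      (hd _).comp x (differentiableAt_id.const_smul s)
    have e := fderiv_comp_smul (𝕜 := ℝ) (f := (pd j)^[k] f) (x := x) s
    show fderiv ℝ (fun x => s ^ k • (pd j)^[k] f (s • x)) x (EuclideanSpace.single j 1) =
      s ^ (k + 1) • fderiv ℝ ((pd j)^[k] f) (s • x) (EuclideanSpace.single j 1)
    rw [fderiv_fun_const_smul hd2, e]
    simp [smul_smul, pow_succ, mul_assoc]

theorem sq_sum_int {n : ℕ} (m : Fin n) (c γ : ℝ) {ι : Type*} (s : Finset ι)
    (F : ι → EuclideanSpace ℝ (Fin n) → ℂ) (hF : ∀ i ∈ s, Continuous (F i))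
    (hi : ∀ i ∈ s, Integrable (fun x => ‖F i x‖ ^ 2 * wt m c γ x)) :
    Integrable (fun x => (∑ i ∈ s, ‖F i x‖) ^ 2 * wt m c γ x) := by
  refine Integrable.mono' ((integrable_finsetSum s hi).const_mul (s.card : ℝ)) ?_ ?_
  · exact (((continuous_finsetSum s fun i his => (hF i his).norm).pow 2).mul
      (contDiff_wt m c γ (k := 0)).continuous).aestronglyMeasurable
  · refine .of_forall fun x => ?_
    have hw := (wt_pos m c γ x).le
    rw [Real.norm_of_nonneg (mul_nonneg (sq_nonneg _) hw), ← Finset.sum_mul, ← mul_assoc]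
    exact mul_le_mul_of_nonneg_right sq_sum_le_card_mul_sum_sq hw

theorem carleman2 {n : ℕ} (m : Fin n) (c γ : ℝ) (hγ : 1 ≤ γ) {f : EuclideanSpace ℝ (Fin n) → ℂ}
    (hf : ContDiff ℝ 4 f)
    (hi : ∀ j, ∀ k ≤ 4, Integrable (fun x => ‖(pd j)^[k] f x‖ ^ 2 * wt m c γ x)) :
    CE m c γ f := by
  let κ : ContDiffBump (0 : EuclideanSpace ℝ (Fin n)) :=
    { rIn := 1, rOut := 2, rIn_pos := one_pos, rIn_lt_rOut := by norm_num }
  let κc : EuclideanSpace ℝ (Fin n) → ℂ := fun x => ((κ x : ℝ) : ℂ)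
  have hκ : ContDiff ℝ ∞ κc := Complex.ofRealCLM.contDiff.comp κ.contDiff
  have hκs : HasCompactSupport κc := by
    refine κ.hasCompactSupport.mono fun x hx h => hx ?_
    have h' : κ x = 0 := h
    simp [κc, h']
  have hκ4 : ContDiff ℝ 4 κc := hκ.of_le (by exact ENat.LEInfty.out)
  have hsk : ∀ j, ∀ k, HasCompactSupport ((pd j)^[k] κc) := fun j k => by
    induction k with
    | zero => exact hκs
    | succ k ih => rw [Function.iterate_succ_apply']; exact hasCompactSupport_pd j ih
  obtain ⟨C, hC0, hC⟩ := unif_bound (P := fun j k C => ∀ x, ‖(pd j)^[k] κc x‖ ≤ C)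
    (fun j k C C' h h1 x => (h1 x).trans h)
    (fun j k hk => (hsk j k).exists_bound_of_continuous (cont_pd_iter j hk hκ4))
  let s : ℕ → ℝ := fun N => 1 / ((N : ℝ) + 1)
  have hs0 : ∀ N, 0 < s N := fun N => by positivity
  have hs1 : ∀ N, s N ≤ 1 := fun N => by
    show 1 / ((N : ℝ) + 1) ≤ 1
    rw [div_le_one (by positivity)]
    linarith [(Nat.cast_nonneg N : (0 : ℝ) ≤ N)]
  have hst : Tendsto s atTop (𝓝 0) := tendsto_one_div_add_atTop_nhds_zero_nat
  have hks : ∀ N, ContDiff ℝ 4 (fun x => κc (s N • x)) := fun N =>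
    hκ4.comp (contDiff_const_smul (s N))
  refine CE_limit m c γ (F := fun N x => κc (s N • x) * f x)
    (G := fun x => 16 * C * ∑ p ∈ (Finset.univ : Finset (Fin n)) ×ˢ Finset.range 5,
      ‖(pd p.1)^[p.2] f x‖) (fun N => (hks N).mul hf) (fun N => ?_) ?_ ?_ ?_
  · refine carleman1 m c γ hγ ((hks N).mul hf) ?_
    refine HasCompactSupport.mul_right ?_
    exact hκs.comp_homeomorph (Homeomorph.smulOfNeZero (s N) (hs0 N).ne')
  · intro j k hk x
    refine tendsto_const_nhds.congr' ?_
    have h1 : Tendsto (fun N => ‖s N • x‖) atTop (𝓝 0) := by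
      simpa using (hst.smul_const x).norm
    filter_upwards [h1.eventually (gt_mem_nhds one_pos)] with N hN
    refine ((pd_congr j ?_ k).eq_of_nhds).symm
    have hc : Continuous (fun y : EuclideanSpace ℝ (Fin n) => ‖s N • y‖) := by fun_prop
    filter_upwards [hc.continuousAt.eventually (gt_mem_nhds hN)] with y hy
    have : κ (s N • y) = 1 := κ.one_of_mem_closedBall (by simpa using (le_of_lt hy))
    simp [κc, this]
  · intro j k hk N x
    refine (leib_bound4 j hk isOpen_univ hC0 (hks N).contDiffOn hf.contDiffOn ?_ x trivial).trans ?_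
    · intro i hi4 y _
      rw [pd_iter_scale j (s N) i κc hκ]
      simp only [norm_smul, norm_pow, Real.norm_of_nonneg (hs0 N).le]
      have := hC j i hi4 (s N • y)
      calc _ ≤ 1 * ‖(pd j)^[i] κc (s N • y)‖ :=
            mul_le_mul_of_nonneg_right (pow_le_one₀ (hs0 N).le (hs1 N)) (norm_nonneg _)
        _ ≤ C := by rw [one_mul]; exact this
    · refine mul_le_mul_of_nonneg_left ?_ (by positivity)
      rw [Finset.sum_product]
      exact Finset.single_le_sum (f := fun j => ∑ i ∈ Finset.range 5, ‖(pd j)^[i] f x‖)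
        (fun i _ => Finset.sum_nonneg fun k _ => norm_nonneg _) (Finset.mem_univ j)
  · have := sq_sum_int m c γ ((Finset.univ : Finset (Fin n)) ×ˢ Finset.range 5)
      (fun p => (pd p.1)^[p.2] f)
      (fun p hp => cont_pd_iter p.1 (by simp at hp; omega) hf)
      (fun p hp => hi p.1 p.2 (by simp at hp; omega))
    refine (this.const_mul ((16 * C) ^ 2)).congr (.of_forall fun x => ?_)
    simp only
    ring

theorem pd_iter_coord {n : ℕ} (j m : Fin n) (k : ℕ) : ∀ (g : ℝ → ℂ), ContDiff ℝ ∞ g →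
    HasCompactSupport g → ∃ g' : ℝ → ℂ, Continuous g' ∧ HasCompactSupport g' ∧
      (pd j)^[k] (fun x => g (x m)) = fun x => g' (x m) := by
  induction k with
  | zero => intro g hg hs; exact ⟨g, hg.continuous, hs, rfl⟩
  | succ k ih =>
    intro g hg hs
    have hd : ContDiff ℝ ∞ (deriv g) := (contDiff_infty_iff_deriv.1 hg).2
    obtain ⟨g', h1, h2, h3⟩ := ih (fun t => (if j = m then (1 : ℝ) else 0) • deriv g t)
      (hd.const_smul (if j = m then (1 : ℝ) else 0)) (hs.deriv.mono fun t ht h => ht (by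
        have h' : deriv g t = 0 := h
        simp [h']))
    refine ⟨g', h1, h2, ?_⟩
    rw [← h3, Function.iterate_succ_apply]
    congr 1
    ext x
    have hgd : HasDerivAt g (deriv g (x m)) (x m) :=
      (hg.differentiable (by simp) _).hasDerivAt
    have := hgd.hasFDerivAt.comp x (hasFDerivAt_coord m x)
    have e : pd j (fun x => g (x m)) x = _ :=
      congrArg (fun T => T (EuclideanSpace.single j 1)) this.fderiv
    rw [e]
    by_cases h : j = m
    · subst h; simp
    · have h' : m ≠ j := fun q => h q.symm
      simp [h, h']

open scoped ContDiff
open Filter Topology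

theorem exists_cutoff {t0 t1 s0 s1 : ℝ} (h01 : t0 < t1) (hs : s0 < s1) :
    ∃ g : ℝ → ℂ, ContDiff ℝ ∞ g ∧ HasCompactSupport g ∧ (∀ t ≤ t0, g t = 0) ∧
      (∀ t, s1 ≤ t → g t = 0) ∧ ∀ t, t1 ≤ t → t ≤ s0 → g t = 1 := by
  let χ : ℝ → ℝ := fun t => Real.smoothTransition ((t - t0) / (t1 - t0)) *
    Real.smoothTransition ((s1 - t) / (s1 - s0))
  have hχ : ContDiff ℝ ∞ χ := by
    refine (Real.smoothTransition.contDiff.comp ?_).mul (Real.smoothTransition.contDiff.comp ?_)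
    · exact (contDiff_id.sub contDiff_const).div_const _
    · exact (contDiff_const.sub contDiff_id).div_const _
  have a1 : ∀ t ≤ t0, χ t = 0 := fun t ht => by
    have : Real.smoothTransition ((t - t0) / (t1 - t0)) = 0 :=
      Real.smoothTransition.zero_of_nonpos
        (div_nonpos_of_nonpos_of_nonneg (by linarith) (by linarith))
    simp [χ, this]
  have a2 : ∀ t, s1 ≤ t → χ t = 0 := fun t ht => by
    have : Real.smoothTransition ((s1 - t) / (s1 - s0)) = 0 :=
      Real.smoothTransition.zero_of_nonpos
        (div_nonpos_of_nonpos_of_nonneg (by linarith) (by linarith))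
    simp [χ, this]
  have a3 : ∀ t, t1 ≤ t → t ≤ s0 → χ t = 1 := fun t h1 h2 => by
    have e1 : Real.smoothTransition ((t - t0) / (t1 - t0)) = 1 :=
      Real.smoothTransition.one_of_one_le ((one_le_div (by linarith)).2 (by linarith))
    have e2 : Real.smoothTransition ((s1 - t) / (s1 - s0)) = 1 :=
      Real.smoothTransition.one_of_one_le ((one_le_div (by linarith)).2 (by linarith))
    simp [χ, e1, e2]
  refine ⟨fun t => ((χ t : ℝ) : ℂ), Complex.ofRealCLM.contDiff.comp hχ, ?_,
    fun t ht => by simp [a1 t ht], fun t ht => by simp [a2 t ht],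
    fun t h1 h2 => by simp [a3 t h1 h2]⟩
  refine HasCompactSupport.intro (K := Set.Icc t0 s1) isCompact_Icc fun t ht => ?_
  have : t ≤ t0 ∨ s1 ≤ t := by
    by_contra h
    push Not at h
    exact ht ⟨h.1.le, h.2.le⟩
  rcases this with h | h
  · simp [a1 t h]
  · simp [a2 t h]

theorem core_vanish {n : ℕ} (m : Fin n) {a t1 t2 C0 : ℝ} (ht1 : a ≤ t1) (ht2 : t1 < t2)
    (hC0 : 0 ≤ C0)
    {w : EuclideanSpace ℝ (Fin n) → ℂ} (hw : ContDiff ℝ 4 w)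
    (hi : ∀ γ : ℝ, 0 ≤ γ → ∀ j, ∀ k ≤ 4,
      Integrable (fun x => ‖(pd j)^[k] w x‖ ^ 2 * wt m a γ x))
    (hpt : ∀ᵐ x, ‖PP w x‖ ^ 2 ≤ C0 * (‖w x‖ ^ 2 + ∑ j, ‖pd j w x‖ ^ 2) ∨ |x m - a| ≤ t1 - a) :
    ∀ x, t2 < x m → w x = 0 := by
  have hwc : Continuous w := hw.continuous
  have hPc : Continuous (PP w) := continuous_finsetSum _ fun j _ => cont_pd_iter j le_rfl hw
  have hPi : ∀ γ : ℝ, 0 ≤ γ → Integrable (fun x => ‖PP w x‖ ^ 2 * wt m a γ x) := by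
    intro γ hγ
    refine (sq_sum_int m a γ Finset.univ (fun j => (pd j)^[4] w)
      (fun j _ => cont_pd_iter j le_rfl hw) (fun j _ => hi γ hγ j 4 le_rfl)).mono' ?_ ?_
    · exact ((hPc.norm.pow 2).mul (contDiff_wt m a γ (k := 0)).continuous).aestronglyMeasurable
    · refine .of_forall fun x => ?_
      have hp := (wt_pos m a γ x).le
      rw [Real.norm_of_nonneg (mul_nonneg (sq_nonneg _) hp)]
      refine mul_le_mul_of_nonneg_right ?_ hp
      exact pow_le_pow_left₀ (norm_nonneg _) (norm_sum_le _ _) 2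
  have hwi : ∀ γ : ℝ, 0 ≤ γ → Integrable (fun x => ‖w x‖ ^ 2 * wt m a γ x) := fun γ hγ =>
    hi γ hγ m 0 (by norm_num)
  have hdi : ∀ γ : ℝ, 0 ≤ γ → ∀ j, Integrable (fun x => ‖pd j w x‖ ^ 2 * wt m a γ x) :=
    fun γ hγ j => hi γ hγ j 1 (by norm_num)
  have hG0 : Integrable (fun x => ‖PP w x‖ ^ 2) := by
    refine (hPi 0 le_rfl).congr (.of_forall fun x => ?_)
    simp [wt]
  have hw0 : Integrable (fun x => ‖w x‖ ^ 2) := by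
    refine (hwi 0 le_rfl).congr (.of_forall fun x => ?_)
    simp [wt]
  set G : ℝ := ∫ x, ‖PP w x‖ ^ 2 with hG
  have hGn : 0 ≤ G := integral_nonneg fun x => sq_nonneg _
  have hQn : ∀ γ f, 0 ≤ QW m a γ f := fun γ f =>
    integral_nonneg fun x => mul_nonneg (sq_nonneg _) (wt_pos m a γ x).le
  -- main inequality
  have hK : ∀ γ : ℝ, 0 ≤ γ → QW m a γ (PP w) ≤
      C0 * (QW m a γ w + ∑ j, QW m a γ (pd j w)) + Real.exp (γ * (t1 - a) ^ 2 / 2) * G := by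
    intro γ hγ
    have hS : Integrable (fun x => ∑ j, ‖pd j w x‖ ^ 2 * wt m a γ x) :=
      integrable_finsetSum _ fun j _ => hdi γ hγ j
    have hWS : Integrable (fun x => ‖w x‖ ^ 2 * wt m a γ x +
        ∑ j, ‖pd j w x‖ ^ 2 * wt m a γ x) := (hwi γ hγ).add hS
    have e : C0 * (QW m a γ w + ∑ j, QW m a γ (pd j w)) + Real.exp (γ * (t1 - a) ^ 2 / 2) * G =
        ∫ x, (C0 * (‖w x‖ ^ 2 * wt m a γ x + ∑ j, ‖pd j w x‖ ^ 2 * wt m a γ x) +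
          Real.exp (γ * (t1 - a) ^ 2 / 2) * ‖PP w x‖ ^ 2) := by
      rw [integral_add (hWS.const_mul _) (hG0.const_mul _),
        integral_const_mul, integral_const_mul, integral_add (hwi γ hγ) hS,
        integral_finsetSum _ fun j _ => hdi γ hγ j]
      rfl
    rw [e]
    refine integral_mono_ae (hPi γ hγ) ((hWS.const_mul _).add
      (hG0.const_mul _)) ?_
    filter_upwards [hpt] with x hx
    have hp := (wt_pos m a γ x).le
    have hn1 : 0 ≤ Real.exp (γ * (t1 - a) ^ 2 / 2) * ‖PP w x‖ ^ 2 := by positivity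
    have hn2 : 0 ≤ C0 * (‖w x‖ ^ 2 * wt m a γ x + ∑ j, ‖pd j w x‖ ^ 2 * wt m a γ x) :=
      mul_nonneg hC0 (add_nonneg (by positivity) (Finset.sum_nonneg fun j _ => by positivity))
    rcases hx with hx | hx
    · have := mul_le_mul_of_nonneg_right hx hp
      have e2 : C0 * (‖w x‖ ^ 2 + ∑ j, ‖pd j w x‖ ^ 2) * wt m a γ x =
        C0 * (‖w x‖ ^ 2 * wt m a γ x + ∑ j, ‖pd j w x‖ ^ 2 * wt m a γ x) := by
        rw [← Finset.sum_mul]; ring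
      rw [e2] at this
      linarith
    · have h1 : wt m a γ x ≤ Real.exp (γ * (t1 - a) ^ 2 / 2) := by
        unfold wt
        refine Real.exp_le_exp.2 ?_
        have : (x m - a) ^ 2 ≤ (t1 - a) ^ 2 := sq_le_sq' (by linarith [(abs_le.1 hx).1]) (abs_le.1 hx).2
        have := mul_le_mul_of_nonneg_left this hγ
        linarith
      have := mul_le_mul_of_nonneg_right h1 (sq_nonneg ‖PP w x‖)
      nlinarith
  have hbig : ∀ γ : ℝ, 1 ≤ γ → 4 * C0 * (n + 1) ≤ γ → QW m a γ w ≤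
      4 * (Real.exp (γ * (t1 - a) ^ 2 / 2) * G) := by
    intro γ h1 h2
    obtain ⟨c1, c2⟩ := carleman2 m a γ h1 hw (hi γ (by linarith))
    have hk := hK γ (by linarith)
    set K := QW m a γ (PP w)
    have hg3 : γ ≤ γ ^ 3 := by
      calc γ = γ * 1 := by ring
        _ ≤ γ * γ ^ 2 := by gcongr; nlinarith
        _ = γ ^ 3 := by ring
    have hq : ∀ f, γ ^ 3 * QW m a γ f ≤ 2 * K → γ * QW m a γ f ≤ 2 * K := fun f hf =>
      (mul_le_mul_of_nonneg_right hg3 (hQn γ f)).trans hf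
    have hsum : γ * (QW m a γ w + ∑ j, QW m a γ (pd j w)) ≤ (n + 1) * (2 * K) := by
      rw [mul_add, Finset.mul_sum]
      have : ∑ j : Fin n, γ * QW m a γ (pd j w) ≤ ∑ j : Fin n, 2 * K :=
        Finset.sum_le_sum fun j _ => hq _ (c2 j)
      simp at this
      have := hq _ c1
      linarith
    set S := QW m a γ w + ∑ j, QW m a γ (pd j w)
    have hS0 : 0 ≤ S := add_nonneg (hQn _ _) (Finset.sum_nonneg fun j _ => hQn _ _)
    have hCS : C0 * S ≤ K / 2 := by
      have hγ0 : 0 < γ := by linarith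
      have h3 : γ * (C0 * S) ≤ γ * (K / 2) := by
        have i1 := mul_le_mul_of_nonneg_left hsum hC0
        have i2 := mul_le_mul_of_nonneg_right h2 (hQn γ (PP w))
        change 4 * C0 * (n + 1) * K ≤ γ * K at i2
        nlinarith
      exact le_of_mul_le_mul_left h3 hγ0
    have : QW m a γ w ≤ 2 * K := by
      have := hq _ c1
      nlinarith [hQn γ w]
    linarith
  -- integral over the upper region
  have hUo : IsOpen {x : EuclideanSpace ℝ (Fin n) | t2 < x m} :=
    isOpen_lt continuous_const (contDiff_coord m (k := 0)).continuous
  set U := {x : EuclideanSpace ℝ (Fin n) | t2 < x m} with hU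
  have hup : ∀ γ : ℝ, 0 ≤ γ → Real.exp (γ * (t2 - a) ^ 2 / 2) * ∫ x in U, ‖w x‖ ^ 2 ≤
      QW m a γ w := by
    intro γ hγ
    rw [← integral_const_mul]
    refine le_trans (setIntegral_mono_on (hw0.integrableOn.const_mul _) (hwi γ hγ).integrableOn
      hUo.measurableSet ?_) (setIntegral_le_integral (hwi γ hγ) (.of_forall fun x =>
        mul_nonneg (sq_nonneg _) (wt_pos m a γ x).le))
    intro x hx
    have hx' : t2 < x m := hx
    rw [mul_comm]
    refine mul_le_mul_of_nonneg_left ?_ (sq_nonneg _)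
    unfold wt
    refine Real.exp_le_exp.2 ?_
    have : (t2 - a) ^ 2 ≤ (x m - a) ^ 2 := pow_le_pow_left₀ (by linarith) (by linarith) 2
    have := mul_le_mul_of_nonneg_left this hγ
    linarith
  have hI0 : 0 ≤ ∫ x in U, ‖w x‖ ^ 2 := integral_nonneg fun x => sq_nonneg _
  have hle : ∀ γ : ℝ, 1 ≤ γ → 4 * C0 * (n + 1) ≤ γ →
      ∫ x in U, ‖w x‖ ^ 2 ≤ 4 * G * Real.exp (-(γ * (((t2 - a) ^ 2 - (t1 - a) ^ 2) / 2))) := by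
    intro γ h1 h2
    have h3 := (hup γ (by linarith)).trans (hbig γ h1 h2)
    have e : Real.exp (-(γ * (((t2 - a) ^ 2 - (t1 - a) ^ 2) / 2))) =
        Real.exp (γ * (t1 - a) ^ 2 / 2) / Real.exp (γ * (t2 - a) ^ 2 / 2) := by
      rw [← Real.exp_sub]; congr 1; ring
    rw [e, ← mul_div_assoc, le_div_iff₀ (Real.exp_pos _)]
    linarith
  have hδ : 0 < ((t2 - a) ^ 2 - (t1 - a) ^ 2) / 2 := by nlinarith
  have hlim : Tendsto (fun γ : ℝ => 4 * G * Real.exp (-(γ * (((t2 - a) ^ 2 - (t1 - a) ^ 2) / 2))))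
      atTop (𝓝 0) := by
    have := (Real.tendsto_exp_neg_atTop_nhds_zero.comp
      (tendsto_id.atTop_mul_const hδ)).const_mul (4 * G)
    simpa using this
  have hI : ∫ x in U, ‖w x‖ ^ 2 ≤ 0 := by
    refine ge_of_tendsto hlim ?_
    filter_upwards [eventually_ge_atTop (1 : ℝ), eventually_ge_atTop (4 * C0 * (n + 1))] with γ h1 h2
    exact hle γ h1 h2
  have hI' : ∫ x in U, ‖w x‖ ^ 2 = 0 := le_antisymm hI hI0
  rw [integral_eq_zero_iff_of_nonneg (fun x => sq_nonneg _) hw0.integrableOn] at hI'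
  have hae : w =ᵐ[volume.restrict U] (fun _ => (0 : ℂ)) := by
    filter_upwards [hI'] with x hx
    have : ‖w x‖ ^ 2 = 0 := hx
    simpa using this
  intro x hx
  exact Measure.eqOn_open_of_ae_eq hae hUo hwc.continuousOn continuousOn_const hx

open scoped ContDiff
open Filter Topology

theorem foldr_pd {n : ℕ} (j : Fin n) (i : ℕ) (u : EuclideanSpace ℝ (Fin n) → ℂ) :
    (List.replicate i j).foldr pd u = (pd j)^[i] u := by
  induction i with
  | zero => rfl
  | succ i ih => rw [List.replicate_succ, List.foldr_cons, ih, Function.iterate_succ_apply']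

theorem pd_iter_zero {n : ℕ} (j : Fin n) (k : ℕ) :
    (pd j)^[k] (fun _ : EuclideanSpace ℝ (Fin n) => (0 : ℂ)) = fun _ => 0 := by
  induction k with
  | zero => rfl
  | succ k ih =>
    rw [Function.iterate_succ_apply', ih]
    ext x
    simp [pd]

theorem ucp_aux {n : ℕ} (m : Fin n) (a b : ℝ)
    (Ω : Set (EuclideanSpace ℝ (Fin n)))
    (hΩ : Ω = {x : EuclideanSpace ℝ (Fin n) | a < x m ∧ x m < b})
    (A : EuclideanSpace ℝ (Fin n) → Fin n → ℂ) (q : EuclideanSpace ℝ (Fin n) → ℂ)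
    (hA : BddLipOn Ω A) (hq : BddMeasOn Ω q)
    (u : EuclideanSpace ℝ (Fin n) → ℂ)
    (hu : ContDiffOn ℝ 4 u Ω) (huL2 : derivsL2 Ω u)
    (heq : ∀ᵐ x ∂(volume : Measure (EuclideanSpace ℝ (Fin n))), x ∈ Ω → opL A q u x = 0)
    (ε : ℝ) (hε : 0 < ε)
    (hvan : ∀ x ∈ Ω, b - ε < x m → u x = 0) :
    ∀ x ∈ Ω, u x = 0 := by
  intro x₀ hx₀
  have hmem : ∀ x, x ∈ Ω ↔ a < x m ∧ x m < b := fun x => by rw [hΩ]; rfl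
  have hcm : Continuous (fun x : EuclideanSpace ℝ (Fin n) => x m) :=
    (contDiff_coord m (k := 0)).continuous
  have hΩo : IsOpen Ω := by
    rw [hΩ]
    exact (isOpen_lt continuous_const hcm).inter (isOpen_lt hcm continuous_const)
  obtain ⟨hp1, hp2⟩ := (hmem x₀).1 hx₀
  set p := x₀ m with hp
  obtain ⟨t0, ht0⟩ : ∃ t0, t0 = a + (p - a) / 4 := ⟨_, rfl⟩
  obtain ⟨t1, ht1⟩ : ∃ t1, t1 = a + (p - a) / 2 := ⟨_, rfl⟩
  obtain ⟨t2, ht2⟩ : ∃ t2, t2 = a + 3 * (p - a) / 4 := ⟨_, rfl⟩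
  obtain ⟨β, hβ⟩ : ∃ β, β = max (b - ε) p := ⟨_, rfl⟩
  have hβ1 : b - ε ≤ β := hβ ▸ le_max_left _ _
  have hβ2 : p ≤ β := hβ ▸ le_max_right _ _
  have hβ3 : β < b := hβ ▸ max_lt (by linarith) hp2
  obtain ⟨s0, hs0⟩ : ∃ s0, s0 = β + (b - β) / 3 := ⟨_, rfl⟩
  obtain ⟨s1, hs1⟩ : ∃ s1, s1 = β + 2 * (b - β) / 3 := ⟨_, rfl⟩
  obtain ⟨g, hg, hgs, hgl, hgr, hgo⟩ := exists_cutoff (t0 := t0) (t1 := t1) (s0 := s0) (s1 := s1)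
    (by linarith) (by linarith)
  have hX : ContDiff ℝ 4 (fun x : EuclideanSpace ℝ (Fin n) => g (x m)) :=
    (hg.of_le (by exact ENat.LEInfty.out)).comp (contDiff_coord m)
  obtain ⟨C, hC0, hC⟩ := unif_bound (n := n)
    (P := fun j k C => ∀ x : EuclideanSpace ℝ (Fin n), ‖(pd j)^[k] (fun x => g (x m)) x‖ ≤ C)
    (fun j k C C' h h1 x => (h1 x).trans h)
    (fun j k hk => by
      obtain ⟨g', h1, h2, h3⟩ := pd_iter_coord j m k g hg hgs
      obtain ⟨C, hC⟩ := h2.exists_bound_of_continuous h1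
      exact ⟨C, fun x => by rw [h3]; exact hC _⟩)
  set w : EuclideanSpace ℝ (Fin n) → ℂ := fun x => g (x m) * u x with hwdef
  have hlow : ∀ x : EuclideanSpace ℝ (Fin n), x m ≤ a → w =ᶠ[𝓝 x] fun _ => 0 := by
    intro x hx
    filter_upwards [hcm.continuousAt.eventually (gt_mem_nhds (show x m < t0 by linarith))] with y hy
    simp [hwdef, hgl _ hy.le]
  have hhigh : ∀ x : EuclideanSpace ℝ (Fin n), s0 ≤ x m → w =ᶠ[𝓝 x] fun _ => 0 := by
    intro x hx
    filter_upwards [hcm.continuousAt.eventually (lt_mem_nhds (show β < x m by linarith))] with y hy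
    by_cases hb : y m < b
    · simp [hwdef, hvan y ((hmem y).2 ⟨by linarith, hb⟩) (by linarith)]
    · simp [hwdef, hgr (y m) (by linarith)]
  have hoff : ∀ x, x ∉ Ω → w =ᶠ[𝓝 x] fun _ => 0 := by
    intro x hx
    by_cases h : a < x m
    · refine hhigh x ?_
      by_contra h'
      exact hx ((hmem x).2 ⟨h, by linarith⟩)
    · exact hlow x (not_lt.1 h)
  have hmid : ∀ x : EuclideanSpace ℝ (Fin n), t1 < x m → x m < s0 → w =ᶠ[𝓝 x] u := by
    intro x h1 h2
    filter_upwards [hcm.continuousAt.eventually (lt_mem_nhds h1),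
      hcm.continuousAt.eventually (gt_mem_nhds h2)] with y hy1 hy2
    simp [hwdef, hgo _ hy1.le hy2.le]
  have hz : ∀ x, w =ᶠ[𝓝 x] (fun _ => 0) → ∀ j k, (pd j)^[k] w x = 0 := by
    intro x h j k
    have := (pd_congr j h k).eq_of_nhds
    rw [this, pd_iter_zero]
  have hw : ContDiff ℝ 4 w := by
    rw [contDiff_iff_contDiffAt]
    intro x
    by_cases hx : x ∈ Ω
    · exact hX.contDiffAt.mul (hu.contDiffAt (hΩo.mem_nhds hx))
    · exact contDiffAt_const.congr_of_eventuallyEq (hoff x hx)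
  have hi : ∀ γ : ℝ, 0 ≤ γ → ∀ j, ∀ k ≤ 4,
      Integrable (fun x => ‖(pd j)^[k] w x‖ ^ 2 * wt m a γ x) := by
    intro γ hγ j k hk
    have hdom : IntegrableOn (fun x => ((16 * C) ^ 2 * Real.exp (γ * (b - a) ^ 2 / 2)) *
        (5 * ∑ i ∈ Finset.range 5, ‖(pd j)^[i] u x‖ ^ 2)) Ω := by
      refine Integrable.const_mul (Integrable.const_mul (integrable_finsetSum _ fun i hi => ?_) _) _
      have h5 : i < 5 := Finset.mem_range.1 hi
      have := huL2 (List.replicate i j) (by simp; omega)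
      rw [foldr_pd] at this
      exact this
    rw [← integrable_indicator_iff hΩo.measurableSet] at hdom
    refine hdom.mono' ?_ (.of_forall fun x => ?_)
    · exact (((cont_pd_iter j hk hw).norm.pow 2).mul
        (contDiff_wt m a γ (k := 0)).continuous).aestronglyMeasurable
    · by_cases hx : x ∈ Ω
      · rw [Set.indicator_of_mem hx, Real.norm_of_nonneg
          (mul_nonneg (sq_nonneg _) (wt_pos m a γ x).le)]
        have h1 := leib_bound4 j hk hΩo hC0 hX.contDiffOn hu (fun i hi x _ => hC j i hi x) x hx
        have h2 : wt m a γ x ≤ Real.exp (γ * (b - a) ^ 2 / 2) := by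
          unfold wt
          refine Real.exp_le_exp.2 ?_
          obtain ⟨q1, q2⟩ := (hmem x).1 hx
          have : (x m - a) ^ 2 ≤ (b - a) ^ 2 := pow_le_pow_left₀ (by linarith) (by linarith) 2
          have := mul_le_mul_of_nonneg_left this hγ
          linarith
        have h3 : (∑ i ∈ Finset.range 5, ‖(pd j)^[i] u x‖) ^ 2 ≤
            5 * ∑ i ∈ Finset.range 5, ‖(pd j)^[i] u x‖ ^ 2 := by
          have := sq_sum_le_card_mul_sum_sq (s := Finset.range 5) (f := fun i => ‖(pd j)^[i] u x‖)
          simpa using this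
        calc ‖(pd j)^[k] w x‖ ^ 2 * wt m a γ x
            ≤ (16 * C * ∑ i ∈ Finset.range 5, ‖(pd j)^[i] u x‖) ^ 2 *
              Real.exp (γ * (b - a) ^ 2 / 2) := by
              gcongr
              exact (wt_pos m a γ x).le
          _ = ((16 * C) ^ 2 * Real.exp (γ * (b - a) ^ 2 / 2)) *
              (∑ i ∈ Finset.range 5, ‖(pd j)^[i] u x‖) ^ 2 := by ring
          _ ≤ _ := mul_le_mul_of_nonneg_left h3 (by positivity)
      · rw [Set.indicator_of_notMem hx, hz x (hoff x hx)]
        simp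
  obtain ⟨⟨Ma, hMa⟩, -⟩ := hA
  obtain ⟨-, ⟨Mq, hMq⟩⟩ := hq
  have hpt : ∀ᵐ x, ‖PP w x‖ ^ 2 ≤ (2 * (Ma ^ 2 * n + Mq ^ 2)) *
      (‖w x‖ ^ 2 + ∑ j, ‖pd j w x‖ ^ 2) ∨ |x m - a| ≤ t1 - a := by
    filter_upwards [heq] with x hx
    have hpz : w =ᶠ[𝓝 x] (fun _ => 0) → ‖PP w x‖ ^ 2 ≤ (2 * (Ma ^ 2 * n + Mq ^ 2)) *
      (‖w x‖ ^ 2 + ∑ j, ‖pd j w x‖ ^ 2) := by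
      intro h
      have : PP w x = 0 := Finset.sum_eq_zero fun j _ => hz x h j 4
      rw [this]
      have : 0 ≤ ∑ j, ‖pd j w x‖ ^ 2 := Finset.sum_nonneg fun j _ => sq_nonneg _
      rw [norm_zero, zero_pow two_ne_zero]
      positivity
    by_cases h1 : x m ≤ a
    · exact .inl (hpz (hlow x h1))
    by_cases h2 : s0 ≤ x m
    · exact .inl (hpz (hhigh x h2))
    by_cases h3 : x m ≤ t1
    · right; rw [abs_le]; constructor <;> linarith
    left
    push Not at h1 h2 h3
    have hxΩ : x ∈ Ω := (hmem x).2 ⟨h1, by linarith⟩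
    have hwu := hmid x h3 h2
    have e0 : w x = u x := hwu.eq_of_nhds
    have e1 : ∀ j, pd j w x = pd j u x := fun j => (pd_congr j hwu 1).eq_of_nhds
    have e4 : PP w x = ∑ j, (pd j)^[4] u x :=
      Finset.sum_congr rfl fun j _ => (pd_congr j hwu 4).eq_of_nhds
    have hL : (∑ j : Fin n, (pd j)^[4] u x)
      - Complex.I * (∑ j : Fin n, A x j * pd j u x) + q x * u x = 0 := hx hxΩ
    have e5 : PP w x = Complex.I * (∑ j : Fin n, A x j * pd j u x) - q x * u x := by
      rw [e4]; linear_combination hL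
    simp only [e0, e1]
    have hMa0 : 0 ≤ Ma := (norm_nonneg _).trans (hMa x hxΩ)
    have hMq0 : 0 ≤ Mq := (norm_nonneg _).trans (hMq x hxΩ)
    have n1 : ‖PP w x‖ ≤ Ma * ∑ j, ‖pd j u x‖ + Mq * ‖u x‖ := by
      rw [e5]
      refine (norm_sub_le _ _).trans (add_le_add ?_ ?_)
      · rw [norm_mul, Complex.norm_I, one_mul, Finset.mul_sum]
        refine (norm_sum_le _ _).trans (Finset.sum_le_sum fun j _ => ?_)
        rw [norm_mul]
        exact mul_le_mul_of_nonneg_right ((norm_le_pi_norm (A x) j).trans (hMa x hxΩ))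
          (norm_nonneg _)
      · rw [norm_mul]
        exact mul_le_mul_of_nonneg_right (hMq x hxΩ) (norm_nonneg _)
    have n2 : (∑ j, ‖pd j u x‖) ^ 2 ≤ n * ∑ j, ‖pd j u x‖ ^ 2 := by
      have := sq_sum_le_card_mul_sum_sq (s := (Finset.univ : Finset (Fin n)))
        (f := fun j => ‖pd j u x‖)
      simpa using this
    have hs : 0 ≤ ∑ j, ‖pd j u x‖ ^ 2 := Finset.sum_nonneg fun j _ => sq_nonneg _
    set S := ∑ j, ‖pd j u x‖ ^ 2
    set T := ∑ j, ‖pd j u x‖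
    have n3 : ‖PP w x‖ ^ 2 ≤ (Ma * T + Mq * ‖u x‖) ^ 2 := pow_le_pow_left₀ (norm_nonneg _) n1 2
    have n4 : (Ma * T + Mq * ‖u x‖) ^ 2 ≤ 2 * (Ma ^ 2 * T ^ 2 + Mq ^ 2 * ‖u x‖ ^ 2) := by
      nlinarith [sq_nonneg (Ma * T - Mq * ‖u x‖)]
    have n5 : Ma ^ 2 * T ^ 2 ≤ Ma ^ 2 * (n * S) := mul_le_mul_of_nonneg_left n2 (sq_nonneg _)
    have n6 : 0 ≤ Ma ^ 2 * n * ‖u x‖ ^ 2 := by positivity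
    have n7 : 0 ≤ Mq ^ 2 * S := by positivity
    nlinarith
  have hfin := core_vanish m (t2 := t2) (by linarith) (by linarith) (by positivity) hw hi hpt x₀
    (by linarith)
  have : g (x₀ m) = 1 := hgo _ (by linarith) (by linarith)
  simpa [hwdef, this] using hfin


end helpers

/-- Proposition 2.2: UCP across a hyperplane. -/
theorem ucp_across_hyperplane
    (n : ℕ) (hn : 2 ≤ n) (a b : ℝ) (hab : a < b)
    (Ω : Set (EuclideanSpace ℝ (Fin n)))
    (hΩ : Ω = {x : EuclideanSpace ℝ (Fin n) | a < x ⟨n - 1, by omega⟩ ∧ x ⟨n - 1, by omega⟩ < b})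
    (A : EuclideanSpace ℝ (Fin n) → Fin n → ℂ) (q : EuclideanSpace ℝ (Fin n) → ℂ)
    (hA : BddLipOn Ω A) (hq : BddMeasOn Ω q)
    (u : EuclideanSpace ℝ (Fin n) → ℂ)
    (hu : ContDiffOn ℝ 4 u Ω) (huL2 : derivsL2 Ω u)
    (heq : ∀ᵐ x ∂(volume : Measure (EuclideanSpace ℝ (Fin n))), x ∈ Ω → opL A q u x = 0)
    (ε : ℝ) (hε : 0 < ε)
    (hvan : ∀ x ∈ Ω, b - ε < x ⟨n - 1, by omega⟩ → u x = 0) :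
    ∀ x ∈ Ω, u x = 0 := by
  exact ucp_aux _ a b Ω hΩ A q hA hq u hu huL2 heq ε hε hvan
end
end

section
/- Carleman inequality with quadratic weight (Lemma 2.5). Let n ≥ 2, let Ω ⊂ ℝⁿ be a bounded open set, let σ ∈ {+1,−1} and c ∈ ℝ, and let φ(x) = σ·x_n + |x'|² − σ·c², where x = (x',x_n). Let A : Ω → ℂⁿ be bounded and Lipschitz and q : Ω → ℂ be bounded measurable. Then there exist C > 0 and h₀ ∈ (0,1) such that for all h ∈ (0,h₀) and all w ∈ C_c^∞(Ω): h·‖w‖_{L²(Ω)} ≤ C·‖e^{φ/h} h⁴ L_{A,q}(e^{−φ/h} w)‖_{L²(Ω)}. -/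
open MeasureTheory Real Set

noncomputable section

namespace Carl

/-- Ladder operator identities. -/
theorem ladder_up {R : Type*} [Ring R] [Algebra ℂ R] (b d : R) (k : ℂ)
    (h : b * d = d * b + k • (1:R)) :
    b ^ 4 * d ^ 4 - d ^ 4 * b ^ 4 = (16 * k) • ((d * b) * ((d * b) * (d * b)))
      + (24 * k ^ 2) • ((d * b) * (d * b)) + (56 * k ^ 3) • (d * b) + (24 * k ^ 4) • (1:R) ∧
    b ^ 2 * d ^ 2 = (d * b) * (d * b) + (3 * k) • (d * b) + (2 * k ^ 2) • (1:R) ∧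
    d ^ 2 * b ^ 2 = (d * b) * (d * b) - k • (d * b) := by
  obtain ⟨N, hN⟩ : ∃ N, N = d * b := ⟨_, rfl⟩
  rw [← hN] at h ⊢
  have hbN : ∀ c : ℂ, b * (N + c • (1:R)) = (N + (c + k) • (1:R)) * b := by
    intro c
    have : b * N = (N + k • (1:R)) * b := by rw [← h, hN, mul_assoc]
    rw [mul_add, this]
    simp only [add_mul, smul_mul_assoc, mul_smul_comm, one_mul, mul_one]
    module
  have hdN : ∀ c : ℂ, d * (N + c • (1:R)) = (N + (c - k) • (1:R)) * d := by
    intro c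
    have : N * d = d * (N + k • (1:R)) := by rw [← h, hN, mul_assoc]
    have h2 : d * N = N * d - k • d := by
      rw [this]; simp only [mul_add, mul_smul_comm, mul_one]; module
    rw [mul_add, h2]
    simp only [add_mul, smul_mul_assoc, mul_smul_comm, one_mul, mul_one]
    module
  have u1 : ∀ (c : ℂ) (x : R), b * ((N + c • (1:R)) * x) = (N + (c + k) • (1:R)) * (b * x) := by
    intro c x; rw [← mul_assoc, hbN, mul_assoc]
  have v1 : ∀ (c : ℂ) (x : R), d * ((N + c • (1:R)) * x) = (N + (c - k) • (1:R)) * (d * x) := by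
    intro c x; rw [← mul_assoc, hdN, mul_assoc]
  have u0 : ∀ x : R, b * (d * x) = (N + k • (1:R)) * x := by
    intro x; rw [← mul_assoc, h]
  have v0 : ∀ x : R, d * (b * x) = (N + (0:ℂ) • (1:R)) * x := by
    intro x; rw [← mul_assoc, ← hN]; simp
  have hN' : d * b = N + (0:ℂ) • (1:R) := by rw [← hN]; simp
  refine ⟨?_, ?_, ?_⟩
  · have e1 : b ^ 4 * d ^ 4 = (N + (k+k+k+k) • (1:R)) * ((N + (k+k+k) • (1:R)) * ((N + (k+k) • (1:R)) * (N + k • (1:R)))) := by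
      have : b ^ 4 * d ^ 4 = b * (b * (b * (b * (d * (d * (d * d)))))) := by
        simp only [pow_succ, pow_zero, one_mul, mul_assoc]
      rw [this]
      simp only [u0, u1, h]
    have e2 : d ^ 4 * b ^ 4 = (N + (0-k-k-k) • (1:R)) * ((N + (0-k-k) • (1:R)) * ((N + (0-k) • (1:R)) * (N + (0:ℂ) • (1:R)))) := by
      have : d ^ 4 * b ^ 4 = d * (d * (d * (d * (b * (b * (b * b)))))) := by
        simp only [pow_succ, pow_zero, one_mul, mul_assoc]
      rw [this]
      simp only [v0, v1, hN']
    rw [e1, e2]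
    simp only [mul_add, add_mul, smul_mul_assoc, mul_smul_comm, one_mul, mul_one, smul_add, smul_smul]
    module
  · have : b ^ 2 * d ^ 2 = b * (b * (d * d)) := by
      simp only [pow_succ, pow_zero, one_mul, mul_assoc]
    rw [this]
    simp only [u0, u1, h]
    simp only [mul_add, add_mul, smul_mul_assoc, mul_smul_comm, one_mul, mul_one, smul_add, smul_smul]
    module
  · have : d ^ 2 * b ^ 2 = d * (d * (b * b)) := by
      simp only [pow_succ, pow_zero, one_mul, mul_assoc]
    rw [this]
    simp only [v0, v1, hN']
    simp only [mul_add, add_mul, smul_mul_assoc, mul_smul_comm, one_mul, mul_one, smul_add, smul_smul]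
    module

section abs
variable {V H : Type*} [AddCommGroup V] [Module ℂ V] [NormedAddCommGroup H] [InnerProductSpace ℂ H]

theorem adj_pow (T : V →ₗ[ℂ] H) (b d : Module.End ℂ V)
    (hadj : ∀ f g, inner ℂ (T (d f)) (T g) = inner ℂ (T f) (T (b g))) (k : ℕ) :
    ∀ f g, inner ℂ (T ((d ^ k) f)) (T g) = inner ℂ (T f) (T ((b ^ k) g)) := by
  induction k with
  | zero => intro f g; simp
  | succ k ih =>
    intro f g
    rw [pow_succ', pow_succ, Module.End.mul_apply, Module.End.mul_apply, hadj, ih]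

theorem adj_symm (T : V →ₗ[ℂ] H) (b d : Module.End ℂ V)
    (hadj : ∀ f g, inner ℂ (T (d f)) (T g) = inner ℂ (T f) (T (b g))) :
    ∀ f g, inner ℂ (T (b f)) (T g) = inner ℂ (T f) (T (d g)) := by
  intro f g
  rw [← inner_conj_symm, ← hadj, inner_conj_symm]

/-- one-variable facts -/
theorem one_var (T : V →ₗ[ℂ] H) (b d : Module.End ℂ V) (k : ℝ) (hk : 0 ≤ k)
    (hadj : ∀ f g, inner ℂ (T (d f)) (T g) = inner ℂ (T f) (T (b g)))
    (h : b * d = d * b + (k:ℂ) • (1 : Module.End ℂ V)) (w : V) :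
    ∃ N1 N2 N3 : ℝ, 0 ≤ N1 ∧ 0 ≤ N2 ∧ 0 ≤ N3 ∧ N1 ^ 2 ≤ N2 * ‖T w‖ ^ 2 ∧ N2 ^ 2 ≤ N3 * N1 ∧
      16 * k * N3 ≤ ‖T ((d ^ 4) w)‖ ^ 2 - ‖T ((b ^ 4) w)‖ ^ 2 ∧
      ‖T ((d ^ 2) w)‖ ^ 2 = N2 + 3 * k * N1 + 2 * k ^ 2 * ‖T w‖ ^ 2 ∧
      ‖T ((b ^ 2) w)‖ ^ 2 ≤ ‖T ((d ^ 2) w)‖ ^ 2 ∧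
      ‖T (d w)‖ ^ 2 = N1 + k * ‖T w‖ ^ 2 := by
  have hadj' := adj_symm T b d hadj
  obtain ⟨h4, h2, h2'⟩ := ladder_up b d k h
  have sq : ∀ x : H, (inner ℂ x x : ℂ) = ((‖x‖ ^ 2 : ℝ) : ℂ) := by
    intro x; rw [inner_self_eq_norm_sq_to_K]; simp
  have q1 : (inner ℂ (T w) (T ((d * b) w)) : ℂ) = ((‖T (b w)‖ ^ 2 : ℝ) : ℂ) := by
    rw [Module.End.mul_apply, ← hadj', sq]
  have hN : ∀ f g, (inner ℂ (T f) (T ((d * b) g)) : ℂ) = inner ℂ (T ((d * b) f)) (T g) := by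
    intro f g
    rw [Module.End.mul_apply, Module.End.mul_apply, ← hadj', ← hadj]
  have q2 : (inner ℂ (T w) (T (((d * b) * (d * b)) w)) : ℂ) = ((‖T ((d * b) w)‖ ^ 2 : ℝ) : ℂ) := by
    rw [Module.End.mul_apply (d * b), hN, sq]
  have q3 : (inner ℂ (T w) (T (((d * b) * ((d * b) * (d * b))) w)) : ℂ)
      = ((‖T (b ((d * b) w))‖ ^ 2 : ℝ) : ℂ) := by
    rw [Module.End.mul_apply (d * b), hN, Module.End.mul_apply (d * b), Module.End.mul_apply d b ((d*b) w), ← hadj', sq]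
  have e4 : ‖T ((d ^ 4) w)‖ ^ 2 - ‖T ((b ^ 4) w)‖ ^ 2 = 16 * k * ‖T (b ((d * b) w))‖ ^ 2
      + 24 * k ^ 2 * ‖T ((d * b) w)‖ ^ 2 + 56 * k ^ 3 * ‖T (b w)‖ ^ 2 + 24 * k ^ 4 * ‖T w‖ ^ 2 := by
    have : ((‖T ((d ^ 4) w)‖ ^ 2 : ℝ) : ℂ) - ((‖T ((b ^ 4) w)‖ ^ 2 : ℝ) : ℂ)
        = inner ℂ (T w) (T ((b ^ 4 * d ^ 4 - d ^ 4 * b ^ 4) w)) := by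
      rw [LinearMap.sub_apply, map_sub, inner_sub_right, Module.End.mul_apply, Module.End.mul_apply,
        ← adj_pow T b d hadj 4 w, ← adj_pow T d b hadj' 4 w, sq, sq]
    rw [h4] at this
    simp only [LinearMap.add_apply, LinearMap.smul_apply, map_add, map_smul, inner_add_right,
      inner_smul_right, q1, q2, q3, Module.End.one_apply, sq] at this
    exact_mod_cast this
  have e2 : ‖T ((d ^ 2) w)‖ ^ 2 = ‖T ((d * b) w)‖ ^ 2 + 3 * k * ‖T (b w)‖ ^ 2 + 2 * k ^ 2 * ‖T w‖ ^ 2 := by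
    have : ((‖T ((d ^ 2) w)‖ ^ 2 : ℝ) : ℂ) = inner ℂ (T w) (T ((b ^ 2 * d ^ 2) w)) := by
      rw [Module.End.mul_apply, ← adj_pow T b d hadj, sq]
    rw [h2] at this
    simp only [LinearMap.add_apply, LinearMap.smul_apply, map_add, map_smul, inner_add_right,
      inner_smul_right, q1, q2, Module.End.one_apply, sq] at this
    exact_mod_cast this
  have e2' : ‖T ((b ^ 2) w)‖ ^ 2 = ‖T ((d * b) w)‖ ^ 2 - k * ‖T (b w)‖ ^ 2 := by
    have : ((‖T ((b ^ 2) w)‖ ^ 2 : ℝ) : ℂ) = inner ℂ (T w) (T ((d ^ 2 * b ^ 2) w)) := by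
      rw [Module.End.mul_apply, ← adj_pow T d b hadj', sq]
    rw [h2'] at this
    simp only [LinearMap.sub_apply, LinearMap.smul_apply, map_sub, map_smul, inner_sub_right,
      inner_smul_right, q1, q2] at this
    exact_mod_cast this
  have e1 : ‖T (d w)‖ ^ 2 = ‖T (b w)‖ ^ 2 + k * ‖T w‖ ^ 2 := by
    have : ((‖T (d w)‖ ^ 2 : ℝ) : ℂ) = inner ℂ (T w) (T ((b * d) w)) := by
      rw [Module.End.mul_apply, ← hadj, sq]
    rw [h] at this
    simp only [LinearMap.add_apply, LinearMap.smul_apply, map_add, map_smul, inner_add_right,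
      inner_smul_right, q1, Module.End.one_apply, sq] at this
    exact_mod_cast this
  refine ⟨‖T (b w)‖ ^ 2, ‖T ((d * b) w)‖ ^ 2, ‖T (b ((d * b) w))‖ ^ 2, by positivity, by positivity,
    by positivity, ?_, ?_, ?_, e2, ?_, e1⟩
  · have := norm_inner_le_norm (𝕜 := ℂ) (T w) (T ((d * b) w))
    rw [q1, Complex.norm_real, Real.norm_of_nonneg (by positivity)] at this
    calc (‖T (b w)‖ ^ 2) ^ 2 ≤ (‖T w‖ * ‖T ((d * b) w)‖) ^ 2 := by gcongr
      _ = _ := by ring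
  · have := norm_inner_le_norm (𝕜 := ℂ) (T (b w)) (T (b ((d * b) w)))
    rw [hadj', ← Module.End.mul_apply d b, ← Module.End.mul_apply (d * b), q2, Complex.norm_real,
      Real.norm_of_nonneg (by positivity)] at this
    calc (‖T ((d * b) w)‖ ^ 2) ^ 2 ≤ (‖T (b w)‖ * ‖T (b ((d * b) w))‖) ^ 2 := by gcongr
      _ = _ := by ring
  · rw [e4]
    have : 0 ≤ 24 * k ^ 2 * ‖T ((d * b) w)‖ ^ 2 + 56 * k ^ 3 * ‖T (b w)‖ ^ 2 + 24 * k ^ 4 * ‖T w‖ ^ 2 := by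
      positivity
    linarith
  · rw [e2, e2']
    have : 0 ≤ k * ‖T (b w)‖ ^ 2 := by positivity
    have : 0 ≤ 2 * k ^ 2 * ‖T w‖ ^ 2 := by positivity
    linarith

theorem amgm {x y z e : ℝ} (he : 0 < e) (hy : 0 ≤ y) (hz : 0 ≤ z)
    (h : x ^ 2 ≤ y * z) : x ≤ (y / e + e * z) / 2 := by
  have h1 : 0 ≤ y / e := by positivity
  have h2 : 0 ≤ e * z := by positivity
  have h3 : y * z = (y / e) * (e * z) := by field_simp
  refine (le_abs_self x).trans (abs_le_of_sq_le_sq ?_ (by linarith))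
  nlinarith [sq_nonneg (y / e - e * z)]

theorem num_one {m k a N1 N2 N3 : ℝ} (hm : 1 ≤ m) (hk : 0 < k) (hkm : k * (32 * m) ≤ 1)
    (h1 : 0 ≤ N1) (h2 : 0 ≤ N2) (h3 : 0 ≤ N3) (ha : 0 ≤ a)
    (h12 : N1 ^ 2 ≤ N2 * a) (h23 : N2 ^ 2 ≤ N3 * N1) :
    N2 + 3 * k * N1 + 2 * k ^ 2 * a ≤ 10 * m * N3 + a / (4 * m) ∧
    N1 + k * a ≤ 2 * m * N3 + a := by
  have hm0 : 0 < m := by linarith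
  obtain ⟨e, he⟩ : ∃ e, e = 1 / (6 * m) := ⟨_, rfl⟩
  have he0 : 0 < e := by rw [he]; positivity
  have hem : e * m = 1 / 6 := by rw [he]; field_simp
  have A1 := amgm he0 h3 h1 h23
  have A2 := amgm he0 h2 ha h12
  have A3 := amgm one_pos h2 ha h12
  have hN3 : N3 / e = 6 * m * N3 := by rw [he]; field_simp
  rw [hN3] at A1
  have A4 : e * N1 ≤ (N2 + e ^ 2 * a) / 2 := by
    calc e * N1 ≤ e * ((N2 / e + e * a) / 2) := by gcongr
      _ = _ := by field_simp
  have A5 : N2 ≤ 4 * m * N3 + e ^ 2 * a / 3 := by linarith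
  have he1 : e ≤ 1 / 6 := by rw [← hem]; nlinarith
  have B1 : e ^ 2 * a ≤ (a / m) / 36 := by
    have : (a / m) / 36 = e ^ 2 * a * m := by
      rw [he]; field_simp; norm_num
    rw [this]
    have : 0 ≤ e ^ 2 * a := by positivity
    nlinarith
  have B2 : k * a ≤ (a / m) / 32 := by
    rw [div_div, le_div_iff₀ (by positivity)]
    nlinarith
  have hk1 : k ≤ 1 / 32 := by nlinarith
  have B3 : k ^ 2 * a ≤ k * a := by
    have : 0 ≤ k * a := by positivity
    nlinarith
  have B4 : k * N1 ≤ k * N2 / 2 + k * a / 2 := by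
    have := mul_le_mul_of_nonneg_left A3 hk.le
    linarith
  have B5 : k * N2 ≤ N2 := by nlinarith
  have B6 : a / m ≤ a := div_le_self ha hm
  have B7 : a / (4 * m) = a / m / 4 := by rw [div_div, mul_comm]
  have B8 : 0 ≤ a / m := by positivity
  have : 0 ≤ m * N3 := by positivity
  constructor
  · rw [B7]; nlinarith
  · nlinarith

theorem abs_main {ι : Type*} [Fintype ι] [DecidableEq ι] (T : V →ₗ[ℂ] H) (i0 : ι)
    (b d : ι → Module.End ℂ V) (U : Module.End ℂ V) (k : ℝ) (hk : 0 < k)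
    (hkm : k * (32 * (Fintype.card ι : ℝ)) ≤ 1)
    (hadj : ∀ j f g, inner ℂ (T (d j f)) (T g) = inner ℂ (T f) (T (b j g)))
    (h0 : b i0 * d i0 = d i0 * b i0)
    (hl : ∀ j, j ≠ i0 → b j * d j = d j * b j + (k:ℂ) • (1 : Module.End ℂ V))
    (hc : ∀ j l, j ≠ l → Commute (b j) (d l))
    (hUn : ∀ f, ‖T (U f)‖ = ‖T f‖)
    (hUb : U * b i0 = d i0)
    (hUc : ∀ j, Commute U (b j))
    (hlow : ∀ f, ‖T f‖ ≤ ‖T (d i0 f)‖) (w : V) :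
    k * ‖T w‖ ^ 2 ≤ 3 * (Fintype.card ι : ℝ) * ‖T (∑ j, (d j ^ 4) w)‖ ^ 2 ∧
    ∀ j, k * ‖T (d j w)‖ ^ 2 ≤ 3 * (Fintype.card ι : ℝ) * ‖T (∑ j, (d j ^ 4) w)‖ ^ 2 := by
  have hadj' : ∀ j f g, inner ℂ (T (b j f)) (T g) = inner ℂ (T f) (T (d j g)) :=
    fun j => adj_symm T _ _ (hadj j)
  have sq : ∀ x : H, (inner ℂ x x : ℂ) = ((‖x‖ ^ 2 : ℝ) : ℂ) := by
    intro x; rw [inner_self_eq_norm_sq_to_K]; simp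
  obtain ⟨m, hm⟩ : ∃ m : ℝ, m = (Fintype.card ι : ℝ) := ⟨_, rfl⟩
  rw [← hm] at hkm ⊢
  have hm1 : 1 ≤ m := by
    rw [hm]; exact_mod_cast Fintype.card_pos_iff.mpr ⟨i0⟩
  obtain ⟨p, hp⟩ : ∃ p : ℝ, p = ‖T (∑ j, (d j ^ 4) w)‖ := ⟨_, rfl⟩
  obtain ⟨a, ha⟩ : ∃ a : ℝ, a = ‖T w‖ := ⟨_, rfl⟩
  have hp0 : 0 ≤ p := hp ▸ norm_nonneg _
  have ha0 : 0 ≤ a := ha ▸ norm_nonneg _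
  have key : ∀ j, ∃ N3 : ℝ, 0 ≤ N3 ∧ (16 * k * N3 ≤ ‖T ((d j ^ 4) w)‖ ^ 2 - ‖T ((b j ^ 4) w)‖ ^ 2) ∧
      (j ≠ i0 → ‖T ((d j ^ 2) w)‖ ^ 2 ≤ 10 * m * N3 + a ^ 2 / (4 * m) ∧
        ‖T ((b j ^ 2) w)‖ ^ 2 ≤ ‖T ((d j ^ 2) w)‖ ^ 2 ∧
        ‖T (d j w)‖ ^ 2 ≤ 2 * m * N3 + a ^ 2) := by
    intro j
    by_cases hj : j = i0
    · subst hj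
      refine ⟨0, le_rfl, ?_, fun h => absurd rfl h⟩
      obtain ⟨N1, N2, N3, _, _, h3, _, _, h4, _⟩ := one_var T (b j) (d j) 0 le_rfl (hadj j)
        (by rw [h0]; simp) w
      simpa using h4
    · obtain ⟨N1, N2, N3, h1, h2, h3, h12, h23, h4, h5, h6, h7⟩ := one_var T (b j) (d j) k hk.le (hadj j)
        (hl j hj) w
      obtain ⟨c1, c2⟩ := num_one hm1 hk hkm h1 h2 h3 (sq_nonneg _) h12 h23
      rw [ha]
      exact ⟨N3, h3, h4, fun _ => ⟨h5 ▸ c1, h6, h7 ▸ c2⟩⟩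
  choose N3 hN3 hN4 hNj using key
  -- commutator identity
  have hcomm : p ^ 2 - ‖T (∑ j, (b j ^ 4) w)‖ ^ 2
      = ∑ j, (‖T ((d j ^ 4) w)‖ ^ 2 - ‖T ((b j ^ 4) w)‖ ^ 2) := by
    have e : ((p ^ 2 : ℝ) : ℂ) - ((‖T (∑ j, (b j ^ 4) w)‖ ^ 2 : ℝ) : ℂ)
      = ∑ j, (((‖T ((d j ^ 4) w)‖ ^ 2 : ℝ) : ℂ) - ((‖T ((b j ^ 4) w)‖ ^ 2 : ℝ) : ℂ)) := by
      rw [hp, ← sq, ← sq]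
      simp only [map_sum, sum_inner, inner_sum]
      rw [Finset.sum_comm (f := fun x y => (inner ℂ (T ((b y ^ 4) w)) (T ((b x ^ 4) w)) : ℂ)), ← Finset.sum_sub_distrib]
      refine Finset.sum_congr rfl fun j _ => ?_
      rw [← Finset.sum_sub_distrib, Finset.sum_eq_single j]
      · rw [sq, sq]
      · intro l _ hlj
        rw [adj_pow T _ _ (hadj l), adj_pow T _ _ (hadj' j), ← Module.End.mul_apply, ← Module.End.mul_apply,
          ((hc l j hlj).pow_pow 4 4).eq, sub_self]
      · simp
    exact_mod_cast e
  have hsum3 : 16 * k * ∑ j, N3 j ≤ p ^ 2 := by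
    have : 16 * k * ∑ j, N3 j ≤ ∑ j, (‖T ((d j ^ 4) w)‖ ^ 2 - ‖T ((b j ^ 4) w)‖ ^ 2) := by
      rw [Finset.mul_sum]; exact Finset.sum_le_sum fun j _ => hN4 j
    nlinarith [sq_nonneg ‖T (∑ j, (b j ^ 4) w)‖]
  -- elliptic identity
  have hUU : ∀ f, ‖T ((U ^ 2) f)‖ = ‖T f‖ := by
    intro f; rw [pow_two, Module.End.mul_apply, hUn, hUn]
  have hmove : ∀ j, (inner ℂ (T ((U ^ 2) w)) (T ((d j ^ 4) w)) : ℂ)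
      = inner ℂ (T ((U ^ 2) ((b j ^ 2) w))) (T ((d j ^ 2) w)) := by
    intro j
    have : (d j ^ 4) w = (d j ^ 2) ((d j ^ 2) w) := by
      rw [← Module.End.mul_apply, ← pow_add]
    rw [this, ← adj_pow T _ _ (hadj' j), ← Module.End.mul_apply, ← Module.End.mul_apply,
      ((hUc j).pow_pow 2 2).eq]
  have hS : (inner ℂ (T ((U ^ 2) w)) (T ((d i0 ^ 4) w)) : ℂ) = ((‖T ((d i0 ^ 2) w)‖ ^ 2 : ℝ) : ℂ) := by
    rw [hmove, ← sq, ← Module.End.mul_apply (U ^ 2)]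
    have : U ^ 2 * b i0 ^ 2 = d i0 ^ 2 := by
      rw [pow_two, pow_two, pow_two, mul_assoc, ← mul_assoc U (b i0), hUb, ← h0, ← mul_assoc, hUb]
    rw [this]
  obtain ⟨S, hSd⟩ : ∃ S : ℝ, S = ‖T ((d i0 ^ 2) w)‖ ^ 2 := ⟨_, rfl⟩
  have hS0 : ‖T (d i0 w)‖ ^ 2 ≤ S := by
    rw [hSd, pow_two (d i0), Module.End.mul_apply]
    gcongr; exact hlow _
  have hS1 : a ^ 2 ≤ S := by
    refine le_trans ?_ hS0
    rw [ha]; gcongr; exact hlow _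
  have hcj : ∀ j, j ≠ i0 → ‖(inner ℂ (T ((U ^ 2) w)) (T ((d j ^ 4) w)) : ℂ)‖ ≤ 10 * m * N3 j + a ^ 2 / (4 * m) := by
    intro j hj
    obtain ⟨c1, c2, _⟩ := hNj j hj
    rw [hmove]
    refine (norm_inner_le_norm _ _).trans ?_
    rw [hUU]
    have := (le_abs_self _).trans (abs_le_of_sq_le_sq c2 (norm_nonneg _))
    refine le_trans ?_ c1
    rw [pow_two ‖T ((d j ^ 2) w)‖]
    exact mul_le_mul_of_nonneg_right this (norm_nonneg _)
  have hell : S ≤ p * a + ∑ j, (10 * m * N3 j + a ^ 2 / (4 * m)) := by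
    have e1 : (inner ℂ (T ((U ^ 2) w)) (T ((d i0 ^ 4) w)) : ℂ) = inner ℂ (T ((U ^ 2) w)) (T (∑ j, (d j ^ 4) w))
        - ∑ j ∈ Finset.univ.erase i0, inner ℂ (T ((U ^ 2) w)) (T ((d j ^ 4) w)) := by
      rw [map_sum, inner_sum, ← Finset.add_sum_erase _ _ (Finset.mem_univ i0)]; ring
    have e2 : S = ‖(inner ℂ (T ((U ^ 2) w)) (T ((d i0 ^ 4) w)) : ℂ)‖ := by
      rw [hS, Complex.norm_real, Real.norm_of_nonneg (by positivity), hSd]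
    rw [e2, e1]
    refine (norm_sub_le _ _).trans (add_le_add ?_ ?_)
    · refine (norm_inner_le_norm _ _).trans ?_
      rw [hUU, ← hp, ← ha, mul_comm]
    · refine (norm_sum_le _ _).trans ?_
      refine (Finset.sum_le_sum fun j hj => hcj j (Finset.ne_of_mem_erase hj)).trans ?_
      refine Finset.sum_le_sum_of_subset_of_nonneg (Finset.subset_univ _) fun j _ _ => ?_
      have := hN3 j
      positivity
  have hell2 : S ≤ p * a + 10 * m * (∑ j, N3 j) + a ^ 2 / 4 := by
    have : ∑ j, (10 * m * N3 j + a ^ 2 / (4 * m)) = 10 * m * (∑ j, N3 j) + a ^ 2 / 4 := by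
      rw [Finset.sum_add_distrib, Finset.mul_sum, Finset.sum_const, Finset.card_univ, nsmul_eq_mul, ← hm]
      congr 1; field_simp
    linarith
  have hk1 : k ≤ 1 / 32 := by nlinarith
  have hpa : p * a ≤ p ^ 2 + a ^ 2 / 4 := by nlinarith [sq_nonneg (p - a / 2)]
  have f1 : S ≤ 2 * p ^ 2 + 20 * m * (∑ j, N3 j) := by linarith
  have f2 : k * S ≤ 2 * m * p ^ 2 := by
    have g1 : k * S ≤ k * (2 * p ^ 2 + 20 * m * (∑ j, N3 j)) := by gcongr
    have g2 : m * (16 * k * ∑ j, N3 j) ≤ m * p ^ 2 := by gcongr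
    have g3 : k * p ^ 2 ≤ p ^ 2 / 32 := by nlinarith [sq_nonneg p]
    have g4 : p ^ 2 ≤ m * p ^ 2 := by nlinarith [sq_nonneg p]
    nlinarith
  have hmp : 0 ≤ m * p ^ 2 := by positivity
  have f3 : k * a ^ 2 ≤ k * S := by gcongr
  rw [← ha, ← hp]
  refine ⟨by linarith, fun j => ?_⟩
  by_cases hj : j = i0
  · subst hj
    have : k * ‖T (d j w)‖ ^ 2 ≤ k * S := by gcongr
    linarith
  · have c := (hNj j hj).2.2
    have c1 : k * ‖T (d j w)‖ ^ 2 ≤ k * (2 * m * N3 j + a ^ 2) := by gcongr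
    have c2 : N3 j ≤ ∑ j, N3 j := Finset.single_le_sum (fun j _ => hN3 j) (Finset.mem_univ j)
    have c3 : 16 * k * N3 j ≤ p ^ 2 := le_trans (by gcongr) hsum3
    have c4 : m * (16 * k * N3 j) ≤ m * p ^ 2 := by gcongr
    nlinarith

end abs
end Carl
namespace Carl
open SchwartzMap FourierTransform LineDeriv

variable {n : ℕ}

abbrev SS (n : ℕ) := SchwartzMap (EuclideanSpace ℝ (Fin n)) ℂ

/-- L2 embedding -/
def TT (n : ℕ) : SS n →ₗ[ℂ] Lp ℂ 2 (volume : Measure (EuclideanSpace ℝ (Fin n))) :=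
  (toLpCLM ℂ ℂ 2 (volume : Measure (EuclideanSpace ℝ (Fin n)))).toLinearMap

/-- partial derivative -/
def DD (j : Fin n) : Module.End ℂ (SS n) :=
  (lineDerivOpCLM ℂ (SS n) (EuclideanSpace.single j (1:ℝ))).toLinearMap

/-- multiplication -/
def XX (a : EuclideanSpace ℝ (Fin n) → ℂ) : Module.End ℂ (SS n) :=
  (smulLeftCLM ℂ a : SS n →L[ℂ] SS n).toLinearMap

/-- multiplier -/
def MM (g : EuclideanSpace ℝ (Fin n) → ℂ) : Module.End ℂ (SS n) :=
  (fourierMultiplierCLM ℂ g : SS n →L[ℂ] SS n).toLinearMap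

theorem DD_apply (j : Fin n) (f : SS n) (x : EuclideanSpace ℝ (Fin n)) :
    DD j f x = fderiv ℝ f x (EuclideanSpace.single j 1) := by
  simp [DD, lineDerivOp_apply_eq_fderiv]

theorem XX_apply {a : EuclideanSpace ℝ (Fin n) → ℂ} (ha : a.HasTemperateGrowth) (f : SS n) (x : EuclideanSpace ℝ (Fin n)) :
    XX a f x = a x * f x := by
  simp [XX, ha]

theorem TT_inner (f g : SS n) : inner ℂ (TT n f) (TT n g) = ∫ x, inner ℂ (f x) (g x) := by
  simp [TT]

theorem DD_adj (j : Fin n) (f g : SS n) :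
    inner ℂ (TT n (DD j f)) (TT n g) = - inner ℂ (TT n f) (TT n (DD j g)) := by
  rw [TT_inner, TT_inner]
  have := integral_bilinear_lineDerivOp_right_eq_neg_left (μ := volume) f g
    ((ContinuousLinearMap.mul ℝ ℂ).comp (Complex.conjCLE.toContinuousLinearMap)) (EuclideanSpace.single j (1:ℝ))
  have e1 : ∫ x, inner ℂ (f x) (DD j g x) = ∫ x, ((ContinuousLinearMap.mul ℝ ℂ).comp (Complex.conjCLE.toContinuousLinearMap)) (f x) ((∂_{EuclideanSpace.single j (1:ℝ)} g) x) := by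
    congr 1
    ext x
    simp [DD, mul_comm]
  have e2 : ∫ x, inner ℂ (DD j f x) (g x) = ∫ x, ((ContinuousLinearMap.mul ℝ ℂ).comp (Complex.conjCLE.toContinuousLinearMap)) ((∂_{EuclideanSpace.single j (1:ℝ)} f) x) (g x) := by
    congr 1
    ext x
    simp [DD, mul_comm]
  rw [e1, e2, this, neg_neg]

theorem XX_adj {a : EuclideanSpace ℝ (Fin n) → ℂ} (ha : a.HasTemperateGrowth) (hr : ∀ x, (starRingEnd ℂ) (a x) = a x) (f g : SS n) :
    inner ℂ (TT n (XX a f)) (TT n g) = inner ℂ (TT n f) (TT n (XX a g)) := by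
  rw [TT_inner, TT_inner]
  congr 1
  ext x
  rw [XX_apply ha, XX_apply ha]
  simp [hr]
  ring

theorem tg_mul (c s : ℂ) (j : Fin n) : Function.HasTemperateGrowth
    (fun ξ : EuclideanSpace ℝ (Fin n) => c * (2 * π * Complex.I * ((ξ j : ℝ) : ℂ)) + s) := by
  have h1 : Function.HasTemperateGrowth (fun ξ : EuclideanSpace ℝ (Fin n) => ((ξ j : ℝ) : ℂ)) := by
    have := (Complex.ofRealCLM.comp (EuclideanSpace.proj j : EuclideanSpace ℝ (Fin n) →L[ℝ] ℝ)).hasTemperateGrowth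
    exact this
  fun_prop

theorem MM_lin (c s : ℂ) (j : Fin n) (f : SS n) :
    MM (fun ξ : EuclideanSpace ℝ (Fin n) => c * (2 * π * Complex.I * ((ξ j : ℝ) : ℂ)) + s) f = c • DD j f + s • f := by
  have h1 := tg_mul (n := n) c s j
  have : (smulLeftCLM ℂ (fun ξ : EuclideanSpace ℝ (Fin n) => c * (2 * π * Complex.I * ((ξ j : ℝ) : ℂ)) + s) (𝓕 f) : SS n)
      = 𝓕 (c • DD j f + s • f) := by
    have hin : (fun x : EuclideanSpace ℝ (Fin n) => inner ℝ x (EuclideanSpace.single j (1:ℝ))).HasTemperateGrowth := by fun_prop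
    have e : 𝓕 (DD j f) = (2 * π * Complex.I) • smulLeftCLM ℂ (inner ℝ · (EuclideanSpace.single j (1:ℝ))) (𝓕 f) :=
      fourier_lineDerivOp_eq f _
    rw [FourierTransform.fourier_add, FourierTransform.fourier_smul, FourierTransform.fourier_smul, e]
    ext x
    rw [smulLeftCLM_apply_apply h1, _root_.add_apply, _root_.smul_apply, _root_.smul_apply, _root_.smul_apply, smulLeftCLM_apply_apply hin]
    simp [EuclideanSpace.inner_single_right]
    ring
  change fourierMultiplierCLM ℂ _ f = _
  rw [fourierMultiplierCLM_apply, this, FourierTransform.fourierInv_fourier_eq]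

theorem MM_mul {g₁ g₂ : EuclideanSpace ℝ (Fin n) → ℂ} (h1 : g₁.HasTemperateGrowth) (h2 : g₂.HasTemperateGrowth) :
    MM g₁ * MM g₂ = MM (g₁ * g₂) := by
  ext1 f
  exact fourierMultiplierCLM_fourierMultiplierCLM_apply h1 h2 f

theorem MM_comm {g₁ g₂ : EuclideanSpace ℝ (Fin n) → ℂ} (h1 : g₁.HasTemperateGrowth) (h2 : g₂.HasTemperateGrowth) :
    Commute (MM g₁) (MM g₂) := by
  rw [Commute, SemiconjBy, MM_mul h1 h2, MM_mul h2 h1, mul_comm]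

theorem DD_eq (j : Fin n) : DD j = MM (fun ξ : EuclideanSpace ℝ (Fin n) => 1 * (2 * π * Complex.I * ((ξ j : ℝ) : ℂ)) + 0) := by
  ext1 f
  rw [MM_lin]; simp

theorem DD_comm (j l : Fin n) : Commute (DD j) (DD l) := by
  rw [DD_eq, DD_eq]; exact MM_comm (tg_mul _ _ _) (tg_mul _ _ _)

theorem MM_norm {g : EuclideanSpace ℝ (Fin n) → ℂ} (h : g.HasTemperateGrowth) (hg : ∀ x, ‖g x‖ = 1) (f : SS n) :
    ‖TT n (MM g f)‖ = ‖TT n f‖ := by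
  change ‖(fourierMultiplierCLM ℂ g f).toLp 2 volume‖ = ‖f.toLp 2 volume‖
  rw [← norm_fourier_toL2_eq, ← norm_fourier_toL2_eq f, fourierMultiplierCLM_apply, FourierTransform.fourier_fourierInv_eq,
    norm_toLp, norm_toLp]
  congr 1
  apply eLpNorm_congr_norm_ae
  filter_upwards with x
  simp [h, hg]

theorem XX_comm {a b : EuclideanSpace ℝ (Fin n) → ℂ} (ha : a.HasTemperateGrowth) (hb : b.HasTemperateGrowth) :
    Commute (XX a) (XX b) := by
  rw [Commute, SemiconjBy]
  ext f x
  simp only [Module.End.mul_apply, XX_apply ha, XX_apply hb]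
  ring

theorem DX_comm {a a' : EuclideanSpace ℝ (Fin n) → ℂ} (ha : a.HasTemperateGrowth) (ha' : a'.HasTemperateGrowth) (j : Fin n)
    (hd : ∀ x, HasLineDerivAt ℝ a (a' x) x (EuclideanSpace.single j 1)) :
    DD j * XX a = XX a * DD j + XX a' := by
  ext f x
  simp only [Module.End.mul_apply, LinearMap.add_apply, _root_.add_apply, XX_apply ha, XX_apply ha']
  rw [DD_apply, DD_apply]
  have e : ⇑(XX a f) = fun x => a x * f x := funext fun x => XX_apply ha f x
  have h1 : HasLineDerivAt ℝ (XX a f) (fderiv ℝ (XX a f) x (EuclideanSpace.single j 1)) x (EuclideanSpace.single j 1) :=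
    ((XX a f).hasFDerivAt x).hasLineDerivAt _
  have h2 : HasLineDerivAt ℝ f (fderiv ℝ f x (EuclideanSpace.single j 1)) x (EuclideanSpace.single j 1) :=
    (f.hasFDerivAt x).hasLineDerivAt _
  rw [e] at h1
  have h3 := HasDerivAt.mul (hd x) h2
  have := HasDerivAt.unique h1 h3
  rw [e, this]
  simp
  ring

theorem MM_X_comm {g : EuclideanSpace ℝ (Fin n) → ℂ} (hg : g.HasTemperateGrowth) (l : Fin n)
    (hc : ∀ (x : EuclideanSpace ℝ (Fin n)) (t : ℝ), g (x + t • EuclideanSpace.single l 1) = g x)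
    {a : EuclideanSpace ℝ (Fin n) → ℂ} (ha : a = fun x => ((2 * x l : ℝ) : ℂ)) (hat : a.HasTemperateGrowth) :
    Commute (MM g) (XX a) := by
  have hin : (fun x : EuclideanSpace ℝ (Fin n) => inner ℝ x (EuclideanSpace.single l (1:ℝ))).HasTemperateGrowth := by fun_prop
  have hX : ∀ f : SS n, XX a f = (2:ℂ) • smulLeftCLM ℂ (inner ℝ · (EuclideanSpace.single l (1:ℝ))) f := by
    intro f
    ext x
    rw [XX_apply hat, ha]
    rw [_root_.smul_apply, smulLeftCLM_apply_apply hin]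
    simp [EuclideanSpace.inner_single_right]
    ring
  have hpi : (2 * π * Complex.I : ℂ) ≠ 0 := Complex.two_pi_I_ne_zero
  obtain ⟨c, hcdef⟩ : ∃ c : ℂ, c = - 2 / (2 * π * Complex.I) := ⟨_, rfl⟩
  have h1 : ∀ f : SS n, 𝓕 (XX a f) = c • DD l (𝓕 f) := by
    intro f
    have := lineDerivOp_fourier_eq f (EuclideanSpace.single l (1:ℝ))
    have e : DD l (𝓕 f) = ∂_{EuclideanSpace.single l (1:ℝ)} (𝓕 f) := rfl
    rw [e, this, hX, ← FourierTransform.fourier_smul, smul_smul]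
    congr 2
    rw [hcdef]; field_simp
  have h2 : ∀ f : SS n, XX a (𝓕⁻ f) = 𝓕⁻ (c • DD l f) := by
    intro f
    have := fourierInv_lineDerivOp_eq f (EuclideanSpace.single l (1:ℝ))
    have e : DD l f = ∂_{EuclideanSpace.single l (1:ℝ)} f := rfl
    rw [e, FourierTransform.fourierInv_smul, this, hX, smul_smul]
    congr 1
    rw [hcdef]; field_simp
  have h3 := DX_comm hg (a' := fun _ => 0) (by fun_prop) l (by
    intro x
    have : (fun t : ℝ => g (x + t • EuclideanSpace.single l 1)) = fun _ => g x := funext fun t => hc x t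
    rw [HasLineDerivAt, this]
    exact hasDerivAt_const _ _)
  rw [Commute, SemiconjBy]
  ext1 f
  rw [Module.End.mul_apply, Module.End.mul_apply]
  change 𝓕⁻ (XX g (𝓕 (XX a f))) = XX a (𝓕⁻ (XX g (𝓕 f)))
  rw [h1, h2]
  congr 1
  rw [map_smul, ← Module.End.mul_apply, ← Module.End.mul_apply, h3]
  have : XX (fun _ : EuclideanSpace ℝ (Fin n) => (0:ℂ)) = 0 := by
    ext f x; rw [XX_apply (by fun_prop)]; simp
  rw [this, add_zero]

end Carl
namespace Carl
open SchwartzMap FourierTransform LineDeriv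

variable {n : ℕ}

/-- gradient components of the weight -/
def aa (σ : ℝ) (i0 j : Fin n) : EuclideanSpace ℝ (Fin n) → ℂ :=
  fun x => if j = i0 then (σ : ℂ) else ((2 * x j : ℝ) : ℂ)

theorem aa_tg (σ : ℝ) (i0 j : Fin n) : (aa σ i0 j).HasTemperateGrowth := by
  unfold aa
  by_cases h : j = i0
  · simp only [h, if_true]; fun_prop
  · simp only [h, if_false]
    have h1 : Function.HasTemperateGrowth (fun ξ : EuclideanSpace ℝ (Fin n) => ((ξ j : ℝ) : ℂ)) := by
      have := (Complex.ofRealCLM.comp (EuclideanSpace.proj j : EuclideanSpace ℝ (Fin n) →L[ℝ] ℝ)).hasTemperateGrowth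
      exact this
    push_cast
    fun_prop

theorem aa_real (σ : ℝ) (i0 j : Fin n) (x : EuclideanSpace ℝ (Fin n)) :
    (starRingEnd ℂ) (aa σ i0 j x) = aa σ i0 j x := by
  unfold aa; split_ifs <;> exact Complex.conj_ofReal _

theorem XX_const (s : ℂ) : XX (fun _ : EuclideanSpace ℝ (Fin n) => s) = s • (1 : Module.End ℂ (SS n)) := by
  ext f x; rw [XX_apply (by fun_prop)]; simp

theorem aa_comm (σ : ℝ) (i0 j l : Fin n) :
    DD j * XX (aa σ i0 l) = XX (aa σ i0 l) * DD j + (if j = l ∧ l ≠ i0 then (2:ℂ) else 0) • (1 : Module.End ℂ (SS n)) := by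
  rw [← XX_const]
  apply DX_comm (aa_tg _ _ _) (by fun_prop)
  intro x
  unfold aa
  by_cases h : l = i0
  · simp only [h, if_true, ne_eq, not_true, and_false, if_false]
    exact hasDerivAt_const _ _
  · simp only [h, if_false, ne_eq, not_false_iff, and_true]
    have h2 : HasDerivAt (fun t : ℝ => ((2 * (x l + t * (if l = j then 1 else 0)) : ℝ) : ℂ)) ((2 * (0 + 1 * (if l = j then 1 else 0)) : ℝ) : ℂ) 0 := by
      apply HasDerivAt.ofReal_comp
      exact (((hasDerivAt_const _ _).add ((hasDerivAt_id (0:ℝ)).mul_const _))).const_mul 2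
    rw [HasLineDerivAt]
    have e1 : (fun t : ℝ => ((2 * (x + t • EuclideanSpace.single j (1:ℝ)) l : ℝ) : ℂ)) = fun t : ℝ => ((2 * (x l + t * (if l = j then 1 else 0)) : ℝ) : ℂ) := by
      ext t; simp
    have e2 : (if j = l then (2:ℂ) else 0) = ((2 * (0 + 1 * (if l = j then 1 else 0)) : ℝ) : ℂ) := by
      by_cases hh : j = l
      · simp [hh]
      · simp [hh, Ne.symm hh]
    rw [e1, e2]
    exact h2

/-- conjugated derivative -/
def dd (σ h : ℝ) (i0 j : Fin n) : Module.End ℂ (SS n) := (h : ℂ) • DD j - XX (aa σ i0 j)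

/-- its adjoint -/
def bb (σ h : ℝ) (i0 j : Fin n) : Module.End ℂ (SS n) := -((h : ℂ) • DD j) - XX (aa σ i0 j)

theorem dd_adj (σ h : ℝ) (i0 j : Fin n) (f g : SS n) :
    inner ℂ (TT n (dd σ h i0 j f)) (TT n g) = inner ℂ (TT n f) (TT n (bb σ h i0 j g)) := by
  simp only [dd, bb, LinearMap.sub_apply, LinearMap.neg_apply, LinearMap.smul_apply, map_sub, map_neg, map_smul,
    inner_sub_left, inner_sub_right, inner_neg_right, inner_smul_left, inner_smul_right,
    DD_adj, XX_adj (aa_tg σ i0 j) (aa_real σ i0 j), Complex.conj_ofReal, mul_neg]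

theorem bd_comm (σ h : ℝ) (i0 j l : Fin n) :
    bb σ h i0 j * dd σ h i0 l = dd σ h i0 l * bb σ h i0 j +
      (if j = l ∧ l ≠ i0 then (((4 * h : ℝ)) : ℂ) else 0) • (1 : Module.End ℂ (SS n)) := by
  have e1 := aa_comm σ i0 j l
  have e2 := aa_comm σ i0 l j
  have e3 : DD j * DD l = DD l * DD j := DD_comm j l
  have e4 : XX (aa σ i0 j) * XX (aa σ i0 l) = XX (aa σ i0 l) * XX (aa σ i0 j) := XX_comm (aa_tg _ _ _) (aa_tg _ _ _)
  simp only [bb, dd, sub_mul, mul_sub, neg_mul, mul_neg, smul_mul_assoc, mul_smul_comm, e1, e2, e3, e4, smul_add, smul_sub, smul_neg]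
  have : (if j = l ∧ l ≠ i0 then (((4 * h : ℝ)) : ℂ) else 0) = (h:ℂ) * (if j = l ∧ l ≠ i0 then (2:ℂ) else 0) + (h:ℂ) * (if l = j ∧ j ≠ i0 then (2:ℂ) else 0) := by
    by_cases hh : j = l
    · subst hh
      by_cases h2 : j = i0
      · simp [h2]
      · simp [h2]; ring
    · simp [hh, Ne.symm hh]
  rw [this, add_smul, mul_smul, mul_smul]
  abel

theorem dd_low (σ h : ℝ) (hσ : σ = 1 ∨ σ = -1) (i0 : Fin n) (f : SS n) :
    ‖TT n f‖ ≤ ‖TT n (dd σ h i0 i0 f)‖ := by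
  have e : XX (aa σ i0 i0) = (σ : ℂ) • (1 : Module.End ℂ (SS n)) := by
    rw [← XX_const]; congr 1; ext x; simp [aa]
  have e1 : TT n (dd σ h i0 i0 f) = (h:ℂ) • TT n (DD i0 f) - (σ:ℂ) • TT n f := by
    simp only [dd, e, LinearMap.sub_apply, LinearMap.smul_apply, Module.End.one_apply, map_sub, map_smul]
  have hσ2 : σ ^ 2 = 1 := by rcases hσ with rfl | rfl <;> norm_num
  have e2 : RCLike.re (inner ℂ (TT n (DD i0 f)) (TT n f)) = 0 := by
    have h1 := DD_adj i0 f f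
    have h2 : RCLike.re (inner ℂ (TT n (DD i0 f)) (TT n f)) = RCLike.re (inner ℂ (TT n f) (TT n (DD i0 f))) := inner_re_symm _ _
    rw [h1] at h2 ⊢
    simp only [map_neg] at h2 ⊢
    linarith
  have e3 := @norm_sub_sq ℂ _ _ _ _ ((h:ℂ) • TT n (DD i0 f)) ((σ:ℂ) • TT n f)
  rw [← e1, inner_smul_left, inner_smul_right, norm_smul, norm_smul, Complex.conj_ofReal, ← mul_assoc, ← Complex.ofReal_mul] at e3
  have e4 : RCLike.re (((h * σ : ℝ) : ℂ) * inner ℂ (TT n (DD i0 f)) (TT n f)) = 0 := by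
    have := Complex.re_ofReal_mul (h * σ) (inner ℂ (TT n (DD i0 f)) (TT n f))
    exact this.trans (by rw [show (inner ℂ (TT n (DD i0 f)) (TT n f)).re = 0 from e2, mul_zero])
  rw [e4] at e3
  have e5 : ‖(σ:ℂ)‖ = 1 := by rcases hσ with rfl | rfl <;> simp
  rw [e5] at e3
  apply le_of_sq_le_sq _ (norm_nonneg _)
  nlinarith [sq_nonneg (‖(h:ℂ)‖ * ‖TT n (DD i0 f)‖)]

/-- phase symbol -/
def gg (σ h : ℝ) (i0 : Fin n) : EuclideanSpace ℝ (Fin n) → ℂ := fun ξ =>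
  ((h : ℂ) * (2 * π * Complex.I * ((ξ i0 : ℝ) : ℂ)) + (-σ : ℂ)) ^ 2 *
    (((1 + ‖(2 * π * h) * ξ i0‖ ^ 2) ^ (-1 : ℝ) : ℝ) : ℂ)

theorem gg_tg (σ h : ℝ) (i0 : Fin n) : (gg σ h i0).HasTemperateGrowth := by
  have h1 := tg_mul (n := n) (h:ℂ) (-σ) i0
  have h2 := Function.hasTemperateGrowth_one_add_norm_sq_rpow ℝ (-1)
  have h3 : (fun ξ : EuclideanSpace ℝ (Fin n) => (2 * π * h) * ξ i0).HasTemperateGrowth := by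
    have := ((2 * π * h) • (EuclideanSpace.proj i0 : EuclideanSpace ℝ (Fin n) →L[ℝ] ℝ)).hasTemperateGrowth
    exact this
  have h4 := h2.comp h3
  have h5 := (Complex.ofRealCLM.hasTemperateGrowth).comp h4
  have h6 := (h1.mul h1).mul h5
  have e : gg σ h i0 = fun ξ => (((h : ℂ) * (2 * π * Complex.I * ((ξ i0 : ℝ) : ℂ)) + (-σ : ℂ)) *
    ((h : ℂ) * (2 * π * Complex.I * ((ξ i0 : ℝ) : ℂ)) + (-σ : ℂ))) *
    (((1 + ‖(2 * π * h) * ξ i0‖ ^ 2) ^ (-1 : ℝ) : ℝ) : ℂ) := by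
    ext ξ
    unfold gg
    rw [pow_two (_ + _)]
  rw [e]
  exact h6

theorem gg_aux (σ t : ℝ) (hσ : σ = 1 ∨ σ = -1) :
    ((t:ℂ) * Complex.I - σ) * (-((t:ℂ) * Complex.I) - σ) = ((1 + ‖t‖^2 : ℝ) : ℂ) := by
  have hσ2 : (σ:ℂ) ^ 2 = 1 := by rcases hσ with rfl | rfl <;> norm_num
  have := Complex.I_sq
  simp only [Real.norm_eq_abs, sq_abs]
  push_cast
  linear_combination -(t:ℂ)^2 * this + hσ2

theorem gg_b (σ h : ℝ) (hσ : σ = 1 ∨ σ = -1) (i0 : Fin n) (ξ : EuclideanSpace ℝ (Fin n)) :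
    gg σ h i0 ξ * ((-h : ℂ) * (2 * π * Complex.I * ((ξ i0 : ℝ) : ℂ)) + (-σ : ℂ)) =
      ((h : ℂ) * (2 * π * Complex.I * ((ξ i0 : ℝ) : ℂ)) + (-σ : ℂ)) := by
  have h1 := gg_aux σ ((2 * π * h) * ξ i0) hσ
  have hp : (0:ℝ) < 1 + ‖(2 * π * h) * ξ i0‖ ^ 2 := by positivity
  unfold gg
  rw [Real.rpow_neg_one, Complex.ofReal_inv, ← h1]
  have hne := Complex.ofReal_ne_zero.2 hp.ne'
  rw [← h1] at hne
  have e1 : (h : ℂ) * (2 * π * Complex.I * ((ξ i0 : ℝ) : ℂ)) + (-σ : ℂ) = ((2 * π * h * ξ i0 : ℝ) : ℂ) * Complex.I - σ := by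
    push_cast; ring
  have e2 : (-h : ℂ) * (2 * π * Complex.I * ((ξ i0 : ℝ) : ℂ)) + (-σ : ℂ) = -(((2 * π * h * ξ i0 : ℝ) : ℂ) * Complex.I) - σ := by
    push_cast; ring
  rw [e1, e2]
  have n1 := left_ne_zero_of_mul hne
  have n2 := right_ne_zero_of_mul hne
  field_simp

theorem gg_norm (σ h : ℝ) (hσ : σ = 1 ∨ σ = -1) (i0 : Fin n) (ξ : EuclideanSpace ℝ (Fin n)) :
    ‖gg σ h i0 ξ‖ = 1 := by
  have h1 := gg_aux σ ((2 * π * h) * ξ i0) hσ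
  have hp : (0:ℝ) < 1 + ‖(2 * π * h) * ξ i0‖ ^ 2 := by positivity
  have hne := Complex.ofReal_ne_zero.2 hp.ne'
  rw [← h1] at hne
  have h0 := gg_b σ h hσ i0 ξ
  have e1 : (h : ℂ) * (2 * π * Complex.I * ((ξ i0 : ℝ) : ℂ)) + (-σ : ℂ) = ((2 * π * h * ξ i0 : ℝ) : ℂ) * Complex.I - σ := by
    push_cast; ring
  have e2 : (-h : ℂ) * (2 * π * Complex.I * ((ξ i0 : ℝ) : ℂ)) + (-σ : ℂ) = -(((2 * π * h * ξ i0 : ℝ) : ℂ) * Complex.I) - σ := by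
    push_cast; ring
  rw [e1, e2] at h0
  have n1 := left_ne_zero_of_mul hne
  have e3 : ‖-(((2 * π * h * ξ i0 : ℝ) : ℂ) * Complex.I) - σ‖ = ‖((2 * π * h * ξ i0 : ℝ) : ℂ) * Complex.I - σ‖ := by
    rw [← Complex.norm_conj]
    congr 1
    simp only [map_sub, map_neg, map_mul, Complex.conj_ofReal, Complex.conj_I]
    ring
  have h2 := congrArg norm h0
  rw [norm_mul, e3] at h2
  have := norm_ne_zero_iff.2 n1
  exact mul_right_cancel₀ this (by rw [h2, one_mul])

theorem dd_i0 (σ h : ℝ) (i0 : Fin n) : dd σ h i0 i0 = MM (fun ξ : EuclideanSpace ℝ (Fin n) => (h : ℂ) * (2 * π * Complex.I * ((ξ i0 : ℝ) : ℂ)) + (-σ : ℂ)) := by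
  have e : XX (aa σ i0 i0) = (σ : ℂ) • (1 : Module.End ℂ (SS n)) := by
    rw [← XX_const]; congr 1; ext x; simp [aa]
  ext1 f
  rw [MM_lin, dd, e]
  simp only [sub_eq_add_neg, LinearMap.add_apply, LinearMap.neg_apply, LinearMap.smul_apply, Module.End.one_apply, neg_smul]

theorem bb_i0 (σ h : ℝ) (i0 : Fin n) : bb σ h i0 i0 = MM (fun ξ : EuclideanSpace ℝ (Fin n) => (-h : ℂ) * (2 * π * Complex.I * ((ξ i0 : ℝ) : ℂ)) + (-σ : ℂ)) := by
  have e : XX (aa σ i0 i0) = (σ : ℂ) • (1 : Module.End ℂ (SS n)) := by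
    rw [← XX_const]; congr 1; ext x; simp [aa]
  ext1 f
  rw [MM_lin, bb, e]
  simp only [sub_eq_add_neg, LinearMap.add_apply, LinearMap.neg_apply, LinearMap.smul_apply, Module.End.one_apply, neg_smul]

theorem gU_b (σ h : ℝ) (hσ : σ = 1 ∨ σ = -1) (i0 : Fin n) :
    MM (gg σ h i0) * bb σ h i0 i0 = dd σ h i0 i0 := by
  rw [dd_i0, bb_i0, MM_mul (gg_tg _ _ _) (tg_mul _ _ _)]
  congr 1
  ext ξ
  exact gg_b σ h hσ i0 ξ

theorem gU_c (σ h : ℝ) (i0 j : Fin n) : Commute (MM (gg σ h i0)) (bb σ h i0 j) := by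
  by_cases hj : j = i0
  · rw [hj, bb_i0]
    exact MM_comm (gg_tg _ _ _) (tg_mul _ _ _)
  · unfold bb
    refine Commute.sub_right (Commute.neg_right (Commute.smul_right ?_ _)) ?_
    · rw [DD_eq]; exact MM_comm (gg_tg _ _ _) (tg_mul _ _ _)
    · refine MM_X_comm (gg_tg _ _ _) j ?_ ?_ (aa_tg _ _ _)
      · intro x t
        simp [gg, Ne.symm hj]
      · ext x; simp [aa, hj]

theorem dd_main (σ h : ℝ) (hσ : σ = 1 ∨ σ = -1) (hh : 0 < h) (i0 : Fin n) (hs : 4 * h * (32 * n) ≤ 1) (w : SS n) :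
    4 * h * ‖TT n w‖ ^ 2 ≤ 3 * n * ‖TT n (∑ j, (dd σ h i0 j ^ 4) w)‖ ^ 2 ∧
    ∀ j, 4 * h * ‖TT n (dd σ h i0 j w)‖ ^ 2 ≤ 3 * n * ‖TT n (∑ j, (dd σ h i0 j ^ 4) w)‖ ^ 2 := by
  have := abs_main (TT n) i0 (b := bb σ h i0) (d := dd σ h i0) (U := MM (gg σ h i0)) (k := 4 * h) (by positivity) (by simpa using hs)
    (dd_adj σ h i0) (by simpa using bd_comm σ h i0 i0 i0) (fun j hj => by simpa [hj] using bd_comm σ h i0 j j)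
    (fun j l hjl => by
      have := bd_comm σ h i0 j l
      simp only [hjl, false_and, if_false, zero_smul, add_zero] at this
      exact this)
    (MM_norm (gg_tg _ _ _) (gg_norm σ h hσ i0)) (gU_b σ h hσ i0) (gU_c σ h i0) (dd_low σ h hσ i0) w
  simpa using this

end Carl
namespace Carl
open SchwartzMap FourierTransform LineDeriv

variable {n : ℕ}

theorem TT_sq (f : SS n) : ‖TT n f‖ ^ 2 = ∫ x, ‖f x‖ ^ 2 := by
  have h := TT_inner f f
  rw [inner_self_eq_norm_sq_to_K] at h
  have h2 : ∀ x, inner ℂ (f x) (f x) = ((‖f x‖ ^ 2 : ℝ) : ℂ) := by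
    intro x; rw [inner_self_eq_norm_sq_to_K]; simp
  simp only [h2] at h
  rw [integral_complex_ofReal] at h
  exact Complex.ofReal_injective (by rw [← h]; simp)

theorem SS_int (f : SS n) : Integrable (fun x => ‖f x‖ ^ 2) := by
  have := (f.memLp 2 volume).integrable_norm_pow (by norm_num)
  simpa using this

theorem phi_line (σ c : ℝ) (i0 : Fin n) (x : EuclideanSpace ℝ (Fin n)) (j : Fin n) :
    ∃ r : ℝ, (r : ℂ) = aa σ i0 j x ∧ HasLineDerivAt ℝ (fun x : EuclideanSpace ℝ (Fin n) => σ * x i0 +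
      (∑ j ∈ Finset.univ.erase i0, (x j) ^ 2) - σ * c ^ 2) r x (EuclideanSpace.single j 1) := by
  have hx : ∀ l : Fin n, HasDerivAt (fun t : ℝ => x l + t * (if l = j then 1 else 0)) (0 + 1 * (if l = j then 1 else 0)) 0 :=
    fun l => (hasDerivAt_const _ _).add ((hasDerivAt_id (0:ℝ)).mul_const _)
  have hs : HasDerivAt (fun t : ℝ => ∑ l ∈ Finset.univ.erase i0, (x l + t * (if l = j then 1 else 0)) ^ 2)
      (∑ l ∈ Finset.univ.erase i0, ((2:ℕ) * (x l + 0 * (if l = j then 1 else 0)) ^ (2 - 1) * (0 + 1 * (if l = j then 1 else 0)))) 0 :=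
    HasDerivAt.fun_sum fun l _ => (hx l).pow 2
  have ht := (((hx i0).const_mul σ).add hs).sub_const (σ * c ^ 2)
  refine ⟨(σ * (0 + 1 * if i0 = j then 1 else 0) +
      ∑ l ∈ Finset.univ.erase i0,
        ((2:ℕ):ℝ) * (x l + 0 * if l = j then 1 else 0) ^ (2 - 1) * (0 + 1 * if l = j then 1 else 0)), ?_, ?_⟩
  rotate_left
  · rw [HasLineDerivAt]
    have e : (fun t : ℝ => σ * (x + t • EuclideanSpace.single j (1:ℝ)) i0 +
      (∑ l ∈ Finset.univ.erase i0, ((x + t • EuclideanSpace.single j (1:ℝ)) l) ^ 2) - σ * c ^ 2) =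
      (fun t : ℝ => σ * (x i0 + t * (if i0 = j then 1 else 0)) + (∑ l ∈ Finset.univ.erase i0, (x l + t * (if l = j then 1 else 0)) ^ 2) - σ * c ^ 2) := by
      ext t; simp
    rw [e]
    exact ht
  · unfold aa
    by_cases h : j = i0
    · subst h
      have : ∑ l ∈ Finset.univ.erase j, (((2:ℕ):ℝ) * (x l + 0 * (if l = j then 1 else 0)) ^ (2 - 1) * (0 + 1 * (if l = j then 1 else 0))) = 0 := by
        apply Finset.sum_eq_zero
        intro l hl
        simp [Finset.ne_of_mem_erase hl]
      rw [this]; simp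
    · simp [h, Ne.symm h]

theorem pd_conj (σ h : ℝ) (hh : 0 < h) (i0 : Fin n) (φ : EuclideanSpace ℝ (Fin n) → ℝ) (hd : Differentiable ℝ φ)
    (hl : ∀ x j, ∃ r : ℝ, (r : ℂ) = aa σ i0 j x ∧ HasLineDerivAt ℝ φ r x (EuclideanSpace.single j 1))
    (j : Fin n) (f : SS n) :
    pd j (fun y => (Real.exp (-(φ y) / h) : ℂ) * f y) =
      fun y => (Real.exp (-(φ y) / h) : ℂ) * (((h:ℂ)⁻¹ • dd σ h i0 j f : SS n) y) := by
  ext x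
  obtain ⟨r, hr, hL⟩ := hl x j
  have hf : HasLineDerivAt ℝ f (DD j f x) x (EuclideanSpace.single j 1) := by
    rw [DD_apply]; exact (f.hasFDerivAt x).hasLineDerivAt _
  have hdiff : DifferentiableAt ℝ (fun y => (Real.exp (-(φ y) / h) : ℂ) * f y) x := by
    have h1 : Differentiable ℝ (fun y => Real.exp (-(φ y) / h)) := by fun_prop
    have h2 : Differentiable ℝ (fun y => ((Real.exp (-(φ y) / h) : ℝ) : ℂ)) := Complex.ofRealCLM.differentiable.comp h1
    exact (h2 x).mul f.differentiableAt
  have h1 : HasLineDerivAt ℝ (fun y => (Real.exp (-(φ y) / h) : ℂ) * f y) _ x (EuclideanSpace.single j 1) :=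
    hdiff.hasFDerivAt.hasLineDerivAt _
  have hE : HasDerivAt (fun t : ℝ => ((Real.exp (-(φ (x + t • EuclideanSpace.single j 1)) / h) : ℝ) : ℂ)) _ 0 :=
    (((HasDerivAt.neg hL).div_const h).exp).ofReal_comp
  have h2 := hE.mul hf
  have h3 := HasDerivAt.unique h1 h2
  unfold pd
  rw [h3]
  have hh' : (h:ℂ) ≠ 0 := by exact_mod_cast hh.ne'
  have hdv : dd σ h i0 j f x = (h:ℂ) * DD j f x - aa σ i0 j x * f x := by
    rw [← XX_apply (aa_tg σ i0 j)]; rfl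
  rw [_root_.smul_apply, hdv, ← hr]
  simp
  field_simp
  ring

theorem pd_iter (σ h : ℝ) (hh : 0 < h) (i0 : Fin n) (φ : EuclideanSpace ℝ (Fin n) → ℝ) (hd : Differentiable ℝ φ)
    (hl : ∀ x j, ∃ r : ℝ, (r : ℂ) = aa σ i0 j x ∧ HasLineDerivAt ℝ φ r x (EuclideanSpace.single j 1))
    (j : Fin n) (f : SS n) (k : ℕ) :
    (pd j)^[k] (fun y => (Real.exp (-(φ y) / h) : ℂ) * f y) =
      fun y => (Real.exp (-(φ y) / h) : ℂ) * (((h:ℂ)⁻¹ ^ k • (dd σ h i0 j ^ k) f : SS n) y) := by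
  induction k with
  | zero => simp
  | succ k ih =>
    rw [Function.iterate_succ_apply', ih, pd_conj σ h hh i0 φ hd hl]
    ext y
    rw [map_smul, smul_smul, ← pow_succ', ← Module.End.mul_apply, ← pow_succ']

theorem full_eq (σ h : ℝ) (hh : 0 < h) (i0 : Fin n) (φ : EuclideanSpace ℝ (Fin n) → ℝ) (hd : Differentiable ℝ φ)
    (hl : ∀ x j, ∃ r : ℝ, (r : ℂ) = aa σ i0 j x ∧ HasLineDerivAt ℝ φ r x (EuclideanSpace.single j 1))
    (A : EuclideanSpace ℝ (Fin n) → Fin n → ℂ) (q : EuclideanSpace ℝ (Fin n) → ℂ) (f : SS n) (x : EuclideanSpace ℝ (Fin n)) :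
    (Real.exp (φ x / h) : ℂ) * (h : ℂ) ^ 4 * opL A q (fun y => (Real.exp (-(φ y) / h) : ℂ) * f y) x =
      (∑ j, (dd σ h i0 j ^ 4) f) x - Complex.I * (h:ℂ) ^ 3 * (∑ j, A x j * dd σ h i0 j f x) + (h:ℂ) ^ 4 * q x * f x := by
  have hh' : (h:ℂ) ≠ 0 := by exact_mod_cast hh.ne'
  unfold opL
  simp only [pd_iter σ h hh i0 φ hd hl, pd_conj σ h hh i0 φ hd hl]
  have hE : (Real.exp (φ x / h) : ℂ) * (Real.exp (-(φ x) / h) : ℂ) = 1 := by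
    rw [← Complex.ofReal_mul, ← Real.exp_add]; simp [neg_div]
  have hsum : (∑ j, (dd σ h i0 j ^ 4) f) x = ∑ j, ((dd σ h i0 j ^ 4) f) x := by
    rw [_root_.sum_apply]
  rw [hsum]
  have e1 : ∑ j, (Real.exp (-(φ x) / h) : ℂ) * (((h:ℂ)⁻¹ ^ 4 • (dd σ h i0 j ^ 4) f : SS n) x) =
      (Real.exp (-(φ x) / h) : ℂ) * ((h:ℂ)⁻¹ ^ 4 * ∑ j, ((dd σ h i0 j ^ 4) f) x) := by
    simp only [_root_.smul_apply, smul_eq_mul, Finset.mul_sum]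
  have e2 : ∑ j, A x j * ((Real.exp (-(φ x) / h) : ℂ) * (((h:ℂ)⁻¹ • (dd σ h i0 j) f : SS n) x)) =
      (Real.exp (-(φ x) / h) : ℂ) * ((h:ℂ)⁻¹ * ∑ j, A x j * (dd σ h i0 j f) x) := by
    simp only [_root_.smul_apply, smul_eq_mul, Finset.mul_sum]
    exact Finset.sum_congr rfl fun j _ => by ring
  rw [e1, e2]
  have i4 : (h:ℂ) ^ 4 * (h:ℂ)⁻¹ ^ 4 = 1 := by rw [← mul_pow, mul_inv_cancel₀ hh', one_pow]
  have i1 : (h:ℂ) ^ 4 * (h:ℂ)⁻¹ = (h:ℂ)^3 := by field_simp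
  linear_combination ((h:ℂ)^4 * (h:ℂ)⁻¹ ^ 4 * (∑ j, ((dd σ h i0 j ^ 4) f) x) - (h:ℂ)^4 * (h:ℂ)⁻¹ * Complex.I * (∑ j, A x j * (dd σ h i0 j f) x) + (h:ℂ)^4 * q x * f x) * hE
    + (∑ j, ((dd σ h i0 j ^ 4) f) x) * i4 - Complex.I * (∑ j, A x j * (dd σ h i0 j f) x) * i1

theorem dd_supp (σ h : ℝ) (i0 j : Fin n) (K : Set (EuclideanSpace ℝ (Fin n))) (hK : IsClosed K) (f : SS n)
    (hf : ∀ x, x ∉ K → f x = 0) : ∀ x, x ∉ K → dd σ h i0 j f x = 0 := by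
  intro x hx
  have hdv : dd σ h i0 j f x = (h:ℂ) * DD j f x - aa σ i0 j x * f x := by
    rw [← XX_apply (aa_tg σ i0 j)]; rfl
  have : (f : EuclideanSpace ℝ (Fin n) → ℂ) =ᶠ[nhds x] fun _ => 0 := by
    filter_upwards [hK.isOpen_compl.mem_nhds hx] with y hy
    exact hf y hy
  rw [hdv, hf x hx, DD_apply, this.fderiv_eq]
  simp

theorem dd_supp_pow (σ h : ℝ) (i0 j : Fin n) (K : Set (EuclideanSpace ℝ (Fin n))) (hK : IsClosed K) (f : SS n)
    (hf : ∀ x, x ∉ K → f x = 0) (k : ℕ) : ∀ x, x ∉ K → (dd σ h i0 j ^ k) f x = 0 := by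
  induction k with
  | zero => simpa using hf
  | succ k ih =>
    rw [pow_succ', Module.End.mul_apply]
    exact dd_supp σ h i0 j K hK _ ih

theorem pt_ineq (p s r g : ℂ) (h M N : ℝ) (hh : 0 < h) (u : Fin n → ℂ) (a : Fin n → ℂ) (v w : ℂ)
    (hg : g = p - Complex.I * (h:ℂ) ^ 3 * (∑ j, a j * u j) + (h:ℂ) ^ 4 * v * w)
    (hM : ∀ j, ‖a j‖ ≤ M) (hN : ‖v‖ ≤ N) :
    ‖p‖ ^ 2 ≤ 3 * ‖g‖ ^ 2 + (3 * h ^ 6 * M ^ 2 * n * ∑ j, ‖u j‖ ^ 2 + 3 * h ^ 8 * N ^ 2 * ‖w‖ ^ 2) ∧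
    ‖g‖ ^ 2 ≤ 3 * ‖p‖ ^ 2 + (3 * h ^ 6 * M ^ 2 * n * ∑ j, ‖u j‖ ^ 2 + 3 * h ^ 8 * N ^ 2 * ‖w‖ ^ 2) := by
  have hb : ‖Complex.I * (h:ℂ) ^ 3 * (∑ j, a j * u j)‖ ^ 2 ≤ h ^ 6 * M ^ 2 * n * ∑ j, ‖u j‖ ^ 2 := by
    have h1 : ‖∑ j, a j * u j‖ ≤ ∑ j, M * ‖u j‖ := by
      refine (norm_sum_le _ _).trans (Finset.sum_le_sum fun j _ => ?_)
      rw [norm_mul]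
      exact mul_le_mul_of_nonneg_right (hM j) (norm_nonneg _)
    have h2 : (∑ j, M * ‖u j‖) ^ 2 ≤ n * ∑ j, (M * ‖u j‖) ^ 2 := by
      simpa using sq_sum_le_card_mul_sum_sq (s := Finset.univ) (f := fun j : Fin n => M * ‖u j‖)
    have h3 : ‖∑ j, a j * u j‖ ^ 2 ≤ (∑ j, M * ‖u j‖) ^ 2 := pow_le_pow_left₀ (norm_nonneg _) h1 2
    have h4 : ∑ j, (M * ‖u j‖) ^ 2 = M ^ 2 * ∑ j, ‖u j‖ ^ 2 := by simp only [mul_pow, ← Finset.mul_sum]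
    rw [h4] at h2
    rw [norm_mul, norm_mul, norm_pow, Complex.norm_I, Complex.norm_of_nonneg hh.le]
    calc (1 * h ^ 3 * ‖∑ j, a j * u j‖) ^ 2 = h ^ 6 * ‖∑ j, a j * u j‖ ^ 2 := by ring
      _ ≤ h ^ 6 * (n * (M ^ 2 * ∑ j, ‖u j‖ ^ 2)) := by
        exact mul_le_mul_of_nonneg_left (h3.trans h2) (by positivity)
      _ = _ := by ring
  have hc : ‖(h:ℂ) ^ 4 * v * w‖ ^ 2 ≤ h ^ 8 * N ^ 2 * ‖w‖ ^ 2 := by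
    rw [norm_mul, norm_mul, norm_pow, Complex.norm_of_nonneg hh.le]
    have : ‖v‖ ^ 2 ≤ N ^ 2 := pow_le_pow_left₀ (norm_nonneg _) hN 2
    calc (h ^ 4 * ‖v‖ * ‖w‖) ^ 2 = h ^ 8 * ‖v‖ ^ 2 * ‖w‖ ^ 2 := by ring
      _ ≤ _ := by gcongr
  have tri : ∀ x y z t : ℂ, t = x + y + z → ‖t‖ ^ 2 ≤ 3 * ‖x‖ ^ 2 + 3 * ‖y‖ ^ 2 + 3 * ‖z‖ ^ 2 := by
    rintro x y z t rfl
    have h1 : ‖x + y + z‖ ≤ ‖x‖ + ‖y‖ + ‖z‖ := norm_add₃_le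
    have h2 := pow_le_pow_left₀ (norm_nonneg _) h1 2
    nlinarith [sq_nonneg (‖x‖ - ‖y‖), sq_nonneg (‖x‖ - ‖z‖), sq_nonneg (‖y‖ - ‖z‖)]
  constructor
  · have := tri g (Complex.I * (h:ℂ) ^ 3 * (∑ j, a j * u j)) (-((h:ℂ) ^ 4 * v * w)) p (by rw [hg]; ring)
    rw [norm_neg] at this
    linarith
  · have := tri p (-(Complex.I * (h:ℂ) ^ 3 * (∑ j, a j * u j))) ((h:ℂ) ^ 4 * v * w) g (by rw [hg]; ring)
    rw [norm_neg] at this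
    linarith

theorem int_ineq (Ω : Set (EuclideanSpace ℝ (Fin n))) (hΩ : IsOpen Ω) (A : EuclideanSpace ℝ (Fin n) → Fin n → ℂ)
    (q : EuclideanSpace ℝ (Fin n) → ℂ) (M N : ℝ) (hM : ∀ x ∈ Ω, ‖A x‖ ≤ M) (hN : ∀ x ∈ Ω, ‖q x‖ ≤ N)
    (hA : ContinuousOn A Ω) (hq : Measurable q) (h : ℝ) (hh : 0 < h) (p w : SS n) (u : Fin n → SS n)
    (hp : ∀ x, x ∉ Ω → p x = 0)
    (g : EuclideanSpace ℝ (Fin n) → ℂ)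
    (hg : ∀ x, g x = p x - Complex.I * (h:ℂ) ^ 3 * (∑ j, A x j * u j x) + (h:ℂ) ^ 4 * q x * w x) :
    ‖TT n p‖ ^ 2 ≤ 3 * l2sq Ω g + (3 * h ^ 6 * M ^ 2 * n * ∑ j, ‖TT n (u j)‖ ^ 2 + 3 * h ^ 8 * N ^ 2 * ‖TT n w‖ ^ 2) := by
  have hpt : ∀ x ∈ Ω, _ := fun x hx => pt_ineq (p x) 0 0 (g x) h M N hh (fun j => u j x) (A x) (q x) (w x) (hg x)
    (fun j => (norm_le_pi_norm _ j).trans (hM x hx)) (hN x hx)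
  have hiu : Integrable (fun x => ∑ j, ‖u j x‖ ^ 2) := integrable_finsetSum _ fun j _ => SS_int (u j)
  have hr : Integrable (fun x => 3 * h ^ 6 * M ^ 2 * n * ∑ j, ‖u j x‖ ^ 2 + 3 * h ^ 8 * N ^ 2 * ‖w x‖ ^ 2) :=
    (hiu.const_mul _).add ((SS_int w).const_mul _)
  have hgm : AEStronglyMeasurable g (volume.restrict Ω) := by
    have e : g = fun x => p x - Complex.I * (h:ℂ) ^ 3 * (∑ j, A x j * u j x) + (h:ℂ) ^ 4 * q x * w x := funext hg
    have hAj : ∀ j, AEStronglyMeasurable (fun x => A x j) (volume.restrict Ω) := fun j =>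
      (ContinuousOn.aestronglyMeasurable ((continuous_apply j).comp_continuousOn hA) hΩ.measurableSet)
    rw [e]
    refine ((p.continuous.aestronglyMeasurable).sub (AEStronglyMeasurable.const_mul ?_ _)).add ?_
    · exact Finset.aestronglyMeasurable_fun_sum _ fun j _ => (hAj j).mul (u j).continuous.aestronglyMeasurable
    · exact (hq.aestronglyMeasurable.const_mul _).mul w.continuous.aestronglyMeasurable
  have hgi : Integrable (fun x => ‖g x‖ ^ 2) (volume.restrict Ω) := by
    refine Integrable.mono' ((((SS_int p).const_mul 3).add hr).restrict (s := Ω)) (hgm.norm.pow 2) ?_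
    filter_upwards [ae_restrict_mem hΩ.measurableSet] with x hx
    have := (hpt x hx).2
    rw [Real.norm_of_nonneg (by positivity)]
    exact this
  have h1 : ‖TT n p‖ ^ 2 = ∫ x in Ω, ‖p x‖ ^ 2 := by
    rw [TT_sq, setIntegral_eq_integral_of_forall_compl_eq_zero]
    intro x hx; rw [hp x hx]; simp
  have h2 : ∫ x in Ω, (3 * h ^ 6 * M ^ 2 * n * ∑ j, ‖u j x‖ ^ 2 + 3 * h ^ 8 * N ^ 2 * ‖w x‖ ^ 2) ≤
      3 * h ^ 6 * M ^ 2 * n * ∑ j, ‖TT n (u j)‖ ^ 2 + 3 * h ^ 8 * N ^ 2 * ‖TT n w‖ ^ 2 := by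
    refine (setIntegral_le_integral hr (Filter.Eventually.of_forall fun x => ?_)).trans (le_of_eq ?_)
    · show (0:ℝ) ≤ _
      positivity
    · rw [integral_add (hiu.const_mul _) ((SS_int w).const_mul _), integral_const_mul, integral_const_mul,
        integral_finsetSum _ fun j _ => SS_int (u j)]
      simp only [TT_sq]
  rw [h1]
  have h3 : ∫ x in Ω, ‖p x‖ ^ 2 ≤ ∫ x in Ω, (3 * ‖g x‖ ^ 2 + (3 * h ^ 6 * M ^ 2 * n * ∑ j, ‖u j x‖ ^ 2 + 3 * h ^ 8 * N ^ 2 * ‖w x‖ ^ 2)) := by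
    refine setIntegral_mono_on (SS_int p).integrableOn ((hgi.const_mul 3).add hr.restrict) hΩ.measurableSet fun x hx => (hpt x hx).1
  rw [integral_add (hgi.const_mul 3) hr.restrict, integral_const_mul] at h3
  unfold l2sq
  linarith

theorem final_num (n h M N p G w S : ℝ) (hn : 1 ≤ n) (hh : 0 < h) (h1 : h < 1)
    (hS : 4 * h * S ≤ 3 * n * p * n) (hw : 4 * h * w ≤ 3 * n * p) (hp : 0 ≤ p) (hw0 : 0 ≤ w) (hS0 : 0 ≤ S)
    (hK : h * (6 * (M ^ 2 * n ^ 3 + N ^ 2 * n) + 1) ≤ 1)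
    (hm : p ≤ 3 * G + (3 * h ^ 6 * M ^ 2 * n * S + 3 * h ^ 8 * N ^ 2 * w)) : h ^ 2 * w ≤ (5 * n) ^ 2 * G := by
  have a1 : 3 * h ^ 6 * M ^ 2 * n * S ≤ h * (9 / 4 * M ^ 2 * n ^ 3 * p) := by
    have e : 3 * h ^ 6 * M ^ 2 * n * S = (3 / 4 * h ^ 5 * M ^ 2 * n) * (4 * h * S) := by ring
    have h5 : h ^ 5 ≤ h := by
      calc h ^ 5 ≤ h ^ 1 := pow_le_pow_of_le_one hh.le h1.le (by norm_num)
        _ = h := pow_one h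
    calc 3 * h ^ 6 * M ^ 2 * n * S = (3 / 4 * h ^ 5 * M ^ 2 * n) * (4 * h * S) := by ring
      _ ≤ (3 / 4 * h ^ 5 * M ^ 2 * n) * (3 * n * p * n) := by gcongr
      _ ≤ (3 / 4 * h * M ^ 2 * n) * (3 * n * p * n) := by gcongr
      _ = _ := by ring
  have a2 : 3 * h ^ 8 * N ^ 2 * w ≤ h * (9 / 4 * N ^ 2 * n * p) := by
    have h7 : h ^ 7 ≤ h := by
      calc h ^ 7 ≤ h ^ 1 := pow_le_pow_of_le_one hh.le h1.le (by norm_num)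
        _ = h := pow_one h
    calc 3 * h ^ 8 * N ^ 2 * w = (3 / 4 * h ^ 7 * N ^ 2) * (4 * h * w) := by ring
      _ ≤ (3 / 4 * h ^ 7 * N ^ 2) * (3 * n * p) := by gcongr
      _ ≤ (3 / 4 * h * N ^ 2) * (3 * n * p) := by gcongr
      _ = _ := by ring
  have a3 : h * (9 / 4 * (M ^ 2 * n ^ 3 + N ^ 2 * n)) ≤ 1 / 2 := by nlinarith
  have a4 : h * (9 / 4 * (M ^ 2 * n ^ 3 + N ^ 2 * n)) * p ≤ 1 / 2 * p := mul_le_mul_of_nonneg_right a3 hp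
  have a5 : p ≤ 6 * G := by linarith
  have a6 : h ^ 2 * w ≤ h * w := by nlinarith [mul_nonneg hh.le hw0]
  have a7 : 3 * n * p ≤ 3 * n * (6 * G) := by gcongr
  have hG : 0 ≤ G := by linarith
  have a8 : n * G ≤ n ^ 2 * G := by nlinarith [mul_nonneg (by linarith : (0:ℝ) ≤ n) hG]
  have : 0 ≤ n * G := mul_nonneg (by linarith) hG
  nlinarith

end Carl
/-- Lemma 2.5: Carleman inequality with quadratic weight. -/
theorem carleman_quadratic_weight
    (n : ℕ) (hn : 2 ≤ n)
    (Ω : Set (EuclideanSpace ℝ (Fin n))) (hΩopen : IsOpen Ω) (hΩbdd : Bornology.IsBounded Ω)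
    (σ c : ℝ) (hσ : σ = 1 ∨ σ = -1)
    (φ : EuclideanSpace ℝ (Fin n) → ℝ)
    (hφ : φ = fun x => σ * x ⟨n - 1, by omega⟩ +
      (∑ j ∈ Finset.univ.erase (⟨n - 1, by omega⟩ : Fin n), (x j) ^ 2) - σ * c ^ 2)
    (A : EuclideanSpace ℝ (Fin n) → Fin n → ℂ) (q : EuclideanSpace ℝ (Fin n) → ℂ)
    (hA : BddLipOn Ω A) (hq : BddMeasOn Ω q) :
    ∃ C > (0 : ℝ), ∃ h₀ : ℝ, 0 < h₀ ∧ h₀ < 1 ∧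
      ∀ h : ℝ, 0 < h → h < h₀ →
        ∀ w : EuclideanSpace ℝ (Fin n) → ℂ, IsCcInfty Ω w →
          h * l2norm Ω w ≤
            C * l2norm Ω (fun x =>
              (Real.exp (φ x / h) : ℂ) * (h : ℂ) ^ 4 *
                opL A q (fun y => (Real.exp (-(φ y) / h) : ℂ) * w y) x) := by
  obtain ⟨⟨M, hM⟩, K, hK⟩ := hA
  obtain ⟨hqm, N, hN⟩ := hq
  have hn1 : (1:ℝ) ≤ n := by exact_mod_cast (by omega : 1 ≤ n)
  obtain ⟨Q, hQ⟩ : ∃ Q : ℝ, Q = 6 * (M ^ 2 * (n:ℝ) ^ 3 + N ^ 2 * n) + 1 + 128 * n := ⟨_, rfl⟩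
  have hnn : 0 ≤ M ^ 2 * (n:ℝ) ^ 3 + N ^ 2 * n := by positivity
  have hQ1 : 1 < Q := by linarith
  refine ⟨5 * n, by positivity, Q⁻¹, by positivity, inv_lt_one_of_one_lt₀ hQ1, ?_⟩
  intro h hh hhQ w ⟨hw1, hw2, hw3⟩
  have hQ0 : 0 < Q := by linarith
  have hhQ' : h * Q < 1 := by
    rwa [← one_div, lt_div_iff₀ hQ0] at hhQ
  have hlt1 : h < 1 := by nlinarith
  obtain ⟨f, hf⟩ : ∃ f : Carl.SS n, (f : EuclideanSpace ℝ (Fin n) → ℂ) = w :=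
    ⟨hw2.toSchwartzMap hw1, by ext x; rfl⟩
  obtain ⟨i0, hi0⟩ : ∃ i0 : Fin n, i0 = ⟨n - 1, by omega⟩ := ⟨_, rfl⟩
  rw [← hi0] at hφ
  have hd : Differentiable ℝ φ := by rw [hφ]; fun_prop
  have hl : ∀ x j, ∃ r : ℝ, (r : ℂ) = Carl.aa σ i0 j x ∧ HasLineDerivAt ℝ φ r x (EuclideanSpace.single j 1) := by
    rw [hφ]; exact Carl.phi_line σ c i0
  obtain ⟨m1, m2⟩ := Carl.dd_main σ h hσ hh i0 (by nlinarith) f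
  have hfull := Carl.full_eq σ h hh i0 φ hd hl A q f
  have hsupp : ∀ x, x ∉ Ω → (∑ j, (Carl.dd σ h i0 j ^ 4) f) x = 0 := by
    intro x hx
    rw [_root_.sum_apply]
    refine Finset.sum_eq_zero fun j _ => ?_
    refine Carl.dd_supp_pow σ h i0 j (tsupport w) (isClosed_tsupport w) f ?_ 4 x (fun hx' => hx (hw3 hx'))
    intro y hy
    rw [hf]
    exact image_eq_zero_of_notMem_tsupport hy
  have hint := Carl.int_ineq Ω hΩopen A q M N hM hN hK.continuousOn hqm h hh _ f (fun j => Carl.dd σ h i0 j f) hsupp _ hfull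
  rw [hf] at hint
  have hS : 4 * h * ∑ j, ‖Carl.TT n (Carl.dd σ h i0 j f)‖ ^ 2 ≤ 3 * n * ‖Carl.TT n (∑ j, (Carl.dd σ h i0 j ^ 4) f)‖ ^ 2 * n := by
    rw [Finset.mul_sum]
    refine (Finset.sum_le_sum fun j _ => m2 j).trans (le_of_eq ?_)
    simp [mul_comm]
  have hfin := Carl.final_num n h M N _ _ _ _ hn1 hh hlt1 hS m1 (by positivity) (by positivity)
    (Finset.sum_nonneg fun j _ => by positivity) (by nlinarith) hint
  have hwle : l2sq Ω w ≤ ‖Carl.TT n f‖ ^ 2 := by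
    rw [Carl.TT_sq, ← hf]
    exact setIntegral_le_integral (Carl.SS_int f) (Filter.Eventually.of_forall fun x => by
      show (0:ℝ) ≤ _
      positivity)
  unfold l2norm
  rw [← Real.sqrt_sq hh.le, ← Real.sqrt_mul (sq_nonneg _), Real.sqrt_sq hh.le]
  have h5 : (0:ℝ) ≤ 5 * n := by positivity
  rw [← Real.sqrt_sq h5, ← Real.sqrt_mul (sq_nonneg _)]
  apply Real.sqrt_le_sqrt
  exact (mul_le_mul_of_nonneg_left hwle (sq_nonneg _)).trans hfin
end
end
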